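/- Let M be a surface and let b ≥ 2 and k > 2b be integers. There exist constants c₁ > 0 and c₂ ≥ 0, depending only on k, b and M, such that for every finite family 𝒜 = {A_1, …, A_n} of subsets of M satisfying (i) f_{k+1}(𝒜) = 0 and (ii) for every σ ⊆ {1, …, n} with |σ| ∈ {k, k+1} the set A_σ is open (possibly empty) and has at most b path-connected components, one has f_k(𝒜) ≤ c₁ · f^{ind}_{k-1}(𝒜) + c₂. -/

import Mathlib

/-- `fNum A k` is `f_k(𝒜)`: the number of subsets `σ` of the index set with
`|σ| = k+1` such that `⋂ i ∈ σ, A i` is nonempty. -/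
noncomputable def fNum {α : Type*} {n : ℕ} (A : Fin n → Set α) (k : ℕ) : ℕ :=
  Nat.card {σ : Finset (Fin n) // σ.card = k + 1 ∧ (⋂ i ∈ σ, A i).Nonempty}

/-- `fInd A k` is `f_k^{ind}(𝒜)`: the number of subsets `τ` with `|τ| = k+1` and
`⋂ i ∈ τ, A i ≠ ∅` for which there is `σ ⊃ τ` with `|σ| = k+2` and `⋂ i ∈ σ, A i ≠ ∅`. -/
noncomputable def fInd {α : Type*} {n : ℕ} (A : Fin n → Set α) (k : ℕ) : ℕ :=
  Nat.card {τ : Finset (Fin n) // τ.card = k + 1 ∧ (⋂ i ∈ τ, A i).Nonempty ∧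
    ∃ σ : Finset (Fin n), τ ⊂ σ ∧ σ.card = k + 2 ∧ (⋂ i ∈ σ, A i).Nonempty}

/-- A set `S` has at most `b` path-connected components: there are `b` points such that
every point of `S` can be joined inside `S` to one of them. -/
def AtMostComponents {X : Type*} [TopologicalSpace X] (b : ℕ) (S : Set X) : Prop :=
  ∃ g : Fin b → X, ∀ x ∈ S, ∃ j : Fin b, JoinedIn S x (g j)

/-!
The components of the `k`-fold and of the `(k + 1)`-fold intersections are large and small pieces of
`M`; after shrinking, the small ones have disjoint closures. A maximal graph in `M` whose points are
labelled by small pieces becomes, after contracting the edges between equal labels, a simple graph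
on the small pieces, and by maximality the pieces inside any given large piece are connected by
edges of that simple graph.

Euler's inequality bounds the number of these edges by three times the number of small pieces plus a
constant of `M`. It is obtained over `ℤ/2`: a cycle is a boundary if the complement of the graph
has a 2-coloring that changes across exactly the edges of the cycle. Near each point such a coloring
exists, because prescribed sign changes around a vertex are realized by the branches of a square
root, so gluing over a finite cover shows that cycles modulo boundaries have bounded dimension.

Every `(k + 1)`-set has `k + 1` subsets of size `k`, while the edges connect all but at most `b` of
the pieces over a given `k`-set; double counting gives the bound.
-/

namespace SurfaceArrangement
open Set Filter Topology

/-! ### Square roots near an isolated point -/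

lemma exists_chart_eq_zero {M : Type*} [TopologicalSpace M] [ChartedSpace ℂ M] (v : M) :
    ∃ χ : OpenPartialHomeomorph M ℂ, v ∈ χ.source ∧ χ v = 0 :=
  ⟨(chartAt ℂ v).transHomeomorph (Homeomorph.subRight (chartAt ℂ v v)), mem_chart_source ℂ v,
    sub_self _⟩

section SquareRoots

/-- `f` has a continuous square root on a punctured neighbourhood of `v`. -/
def HasSqrtNear {X : Type*} [TopologicalSpace X] (f : X → ℂ) (v : X) : Prop :=
  ∃ s : X → ℂ, ∀ᶠ y in 𝓝[≠] v, ContinuousAt s y ∧ s y ^ 2 = f y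

lemma eventually_punctured_zero_iff_exp {p : ℂ → Prop} :
    (∀ᶠ w in 𝓝[≠] (0 : ℂ), p w) ↔ ∃ a : ℝ, ∀ u : ℂ, u.re < a → p (Complex.exp u) := by
  rw [← Complex.map_exp_comap_re_atBot, eventually_map,
    ((atBot_basis_Iio).comap Complex.re).eventually_iff]
  simp only [true_and, mem_preimage, mem_Iio]

lemma exp_add_two_pi_I_div_two (u : ℂ) :
    Complex.exp ((u + 2 * Real.pi * Complex.I) / 2) = -Complex.exp (u / 2) := by
  rw [show (u + 2 * Real.pi * Complex.I) / 2 = u / 2 + Real.pi * Complex.I by ring,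
    Complex.exp_add, Complex.exp_pi_mul_I, mul_neg_one]

lemma exp_div_two_sq (u : ℂ) : Complex.exp (u / 2) ^ 2 = Complex.exp u := by
  rw [← Complex.exp_nat_mul]
  congr 1
  push_cast
  ring

lemma not_hasSqrtNear_id : ¬ HasSqrtNear id (0 : ℂ) := by
  rintro ⟨s, hs⟩
  obtain ⟨a, ha⟩ := eventually_punctured_zero_iff_exp.1 hs
  have hcont : ContinuousOn (fun u => s (Complex.exp u)) {u : ℂ | u.re < a} := fun u hu =>
    ((ha u hu).1.comp Complex.continuous_exp.continuousAt).continuousWithinAt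
  have hdich := (convex_halfSpace_re_lt a).isPreconnected.eq_or_eq_neg_of_sq_eq hcont
    (g := fun u => Complex.exp (u / 2)) (by fun_prop)
    (fun u hu => by simp only [Pi.pow_apply, (ha u hu).2, exp_div_two_sq, id])
    (fun _ => Complex.exp_ne_zero _)
  set u : ℂ := ((a - 1 : ℝ) : ℂ)
  have hu : u.re < a := by simp [u]
  have hu' : (u + 2 * Real.pi * Complex.I).re < a := by simp [u]
  have hper : Complex.exp (u + 2 * Real.pi * Complex.I) = Complex.exp u := Complex.exp_periodic u
  have key : Complex.exp (u / 2) = -Complex.exp (u / 2) := by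
    rcases hdich with h | h
    · simpa only [hper, exp_add_two_pi_I_div_two] using (h hu).symm.trans
        ((congrArg s hper).symm.trans (h hu'))
    · simpa only [Pi.neg_apply, exp_add_two_pi_I_div_two, neg_neg] using
        ((h hu).symm.trans ((congrArg s hper).symm.trans (h hu'))).symm
  exact Complex.exp_ne_zero _ (self_eq_neg.1 key)

lemma exists_continuousAt_exp_of_periodic {a : ℝ} {T : ℂ → ℂ}
    (hT : ContinuousOn T {u | u.re < a})
    (hper : ∀ u : ℂ, u.re < a → T (u + 2 * Real.pi * Complex.I) = T u) :
    ∃ s : ℂ → ℂ, ∀ u : ℂ, u.re < a →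
      ContinuousAt s (Complex.exp u) ∧ s (Complex.exp u) = T u := by
  have hopen : IsOpen {u : ℂ | u.re < a} := isOpen_lt Complex.continuous_re continuous_const
  have hper' : (indicator {u : ℂ | u.re < a} T).Periodic (2 * Real.pi * Complex.I) := fun u => by
    have hre : (u + 2 * Real.pi * Complex.I).re = u.re := by simp
    by_cases hu : u.re < a
    · simp only [indicator, mem_ofPred_eq, hre, if_pos hu, hper u hu]
    · simp only [indicator, mem_ofPred_eq, hre, if_neg hu]
  have hlog : ∀ u : ℂ, u.re < a → T (Complex.log (Complex.exp u)) = T u := fun u hu => by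
    obtain ⟨n, hn⟩ := Complex.exp_eq_exp_iff_exists_int.1 (Complex.exp_log (Complex.exp_ne_zero u))
    have hre : (Complex.log (Complex.exp u)).re = u.re := by
      rw [Complex.log_re, Complex.norm_exp, Real.log_exp]
    have h := hper'.int_mul n u
    rwa [← hn, indicator_of_mem (show _ ∈ {u : ℂ | u.re < a} from hre.trans_lt hu),
      indicator_of_mem (show u ∈ {u : ℂ | u.re < a} from hu)] at h
  refine ⟨fun w => T (Complex.log w), fun u hu => ⟨?_, hlog u hu⟩⟩
  rw [ContinuousAt, hlog u hu,
    ← (Complex.hasStrictDerivAt_exp u).map_nhds_eq (Complex.exp_ne_zero u), tendsto_map'_iff]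
  refine (hT.continuousAt (hopen.mem_nhds hu)).congr' ?_
  filter_upwards [hopen.mem_nhds hu] with x hx using (hlog x hx).symm

lemma hasSqrtNear_zero_or_hasSqrtNear_zero_mul_id {f : ℂ → ℂ}
    (hf : ∀ᶠ w in 𝓝[≠] (0 : ℂ), ContinuousAt f w ∧ f w ≠ 0) :
    HasSqrtNear f 0 ∨ HasSqrtNear (fun w => f w * w) 0 := by
  obtain ⟨a, ha⟩ := eventually_punctured_zero_iff_exp.1 hf
  set H : Set ℂ := {u | u.re < a}
  have hconv : Convex ℝ H := convex_halfSpace_re_lt a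
  have hsimply : IsSimplyConnected H := by
    have := hconv.contractibleSpace ⟨((a - 1 : ℝ) : ℂ), show (_ : ℝ) < a by simp⟩
    exact inferInstanceAs (SimplyConnectedSpace H)
  obtain ⟨T, hTcont, hTsq⟩ := Complex.exists_continuousOn_pow_eq hsimply
    (isOpen_lt Complex.continuous_re continuous_const)
    (g := fun u => f (Complex.exp u))
    (fun u hu => ((ha u hu).1.comp Complex.continuous_exp.continuousAt).continuousWithinAt)
    (by rintro ⟨u, hu, h⟩; exact (ha u hu).2 h) two_ne_zero
  have hTne : ∀ u ∈ H, T u ≠ 0 := fun u hu h =>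
    (ha u hu).2 (by rw [← hTsq, h, zero_pow two_ne_zero])
  have hshift : MapsTo (fun u : ℂ => u + 2 * Real.pi * Complex.I) H H := fun u hu => by
    simpa [H] using hu
  rcases hconv.isPreconnected.eq_or_eq_neg_of_sq_eq
    (hTcont.comp (by fun_prop) hshift) hTcont (fun u _ => by
      simp only [Pi.pow_apply, Function.comp_apply, hTsq]
      rw [show Complex.exp (u + 2 * Real.pi * Complex.I) = _ from Complex.exp_periodic u])
    (fun {u} => hTne u) with hsame | hflip
  · obtain ⟨s, hs⟩ := exists_continuousAt_exp_of_periodic hTcont fun u hu => hsame hu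
    exact .inl ⟨s, eventually_punctured_zero_iff_exp.2
      ⟨a, fun u hu => ⟨(hs u hu).1, by rw [(hs u hu).2, hTsq]⟩⟩⟩
  · obtain ⟨s, hs⟩ := exists_continuousAt_exp_of_periodic (a := a)
      (T := fun u => T u * Complex.exp (u / 2)) (hTcont.mul (by fun_prop)) fun u hu => by
        rw [exp_add_two_pi_I_div_two, show T (u + _) = -T u from hflip hu, neg_mul_neg]
    exact .inr ⟨s, eventually_punctured_zero_iff_exp.2
      ⟨a, fun u hu => ⟨(hs u hu).1, by rw [(hs u hu).2, mul_pow, hTsq, exp_div_two_sq]⟩⟩⟩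

variable {X Y : Type*} [TopologicalSpace X] [TopologicalSpace Y]

lemma HasSqrtNear.congr {f g : X → ℂ} {v : X} (hf : HasSqrtNear f v) (hfg : f =ᶠ[𝓝[≠] v] g) :
    HasSqrtNear g v := by
  obtain ⟨s, hs⟩ := hf
  refine ⟨s, ?_⟩
  filter_upwards [hs, hfg] with y hy hy' using ⟨hy.1, hy.2.trans hy'⟩

lemma tendsto_punctured (φ : OpenPartialHomeomorph X Y) {v : X} (hv : v ∈ φ.source) :
    Tendsto φ (𝓝[≠] v) (𝓝[≠] (φ v)) := by
  refine tendsto_nhdsWithin_iff.2 ⟨(φ.continuousAt hv).mono_left nhdsWithin_le_nhds, ?_⟩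
  filter_upwards [nhdsWithin_le_nhds (φ.open_source.mem_nhds hv), self_mem_nhdsWithin] with y hy hne
  exact fun h => hne (φ.injOn hy hv h)

lemma HasSqrtNear.comp (φ : OpenPartialHomeomorph X Y) {f : Y → ℂ} {v : X} (hv : v ∈ φ.source)
    (hf : HasSqrtNear f (φ v)) : HasSqrtNear (f ∘ φ) v := by
  obtain ⟨s, hs⟩ := hf
  refine ⟨s ∘ φ, ?_⟩
  filter_upwards [(tendsto_punctured φ hv).eventually hs,
    nhdsWithin_le_nhds (φ.open_source.mem_nhds hv)] with y hy hsource
  exact ⟨hy.1.comp (φ.continuousAt hsource), hy.2⟩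

lemma not_hasSqrtNear_chart (χ : OpenPartialHomeomorph X ℂ) {v : X} (hv : v ∈ χ.source)
    (hχv : χ v = 0) : ¬ HasSqrtNear χ v := fun h => by
  have hsymm : χ.symm 0 = v := hχv ▸ χ.left_inv hv
  have hzero : (0 : ℂ) ∈ χ.target := hχv ▸ χ.map_source hv
  refine not_hasSqrtNear_id ((HasSqrtNear.comp χ.symm hzero (hsymm.symm ▸ h)).congr ?_)
  exact eventually_nhdsWithin_of_eventually_nhds (χ.eventually_right_inverse hzero)

lemma hasSqrtNear_mul_chart (ζ χ : OpenPartialHomeomorph X ℂ) {v : X} (hζ : v ∈ ζ.source)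
    (hζv : ζ v = 0) (hχ : v ∈ χ.source) (hχv : χ v = 0) : HasSqrtNear (fun y => ζ y * χ y) v := by
  have hsymm : χ.symm (χ v) = v := χ.left_inv hχ
  have hleft : ∀ᶠ y in 𝓝[≠] v, χ.symm (χ y) = y :=
    eventually_nhdsWithin_of_eventually_nhds (χ.eventually_left_inverse hχ)
  have hreg : ∀ᶠ w in 𝓝[≠] (0 : ℂ), ContinuousAt (ζ ∘ χ.symm) w ∧ (ζ ∘ χ.symm) w ≠ 0 := by
    have hlim := tendsto_punctured χ.symm (χ.map_source hχ)
    rw [hsymm, hχv] at hlim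
    filter_upwards [hlim.eventually (tendsto_punctured ζ hζ self_mem_nhdsWithin),
      hlim.eventually (nhdsWithin_le_nhds (ζ.open_source.mem_nhds hζ)),
      nhdsWithin_le_nhds (χ.open_target.mem_nhds (hχv ▸ χ.map_source hχ))]
      with w hne hsource htarget
    exact ⟨(ζ.continuousAt hsource).comp (χ.continuousAt_symm htarget),
      fun h => hne (h.trans hζv.symm)⟩
  rcases hasSqrtNear_zero_or_hasSqrtNear_zero_mul_id hreg with h | h
  · refine absurd (((hχv ▸ h).comp χ hχ).congr ?_) (not_hasSqrtNear_chart ζ hζ hζv)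
    exact hleft.mono fun y hy => congrArg ζ hy
  · refine ((hχv ▸ h).comp χ hχ).congr ?_
    exact hleft.mono fun y hy => congrArg (fun x => ζ x * χ y) hy

end SquareRoots

/-! ### Graphs with flat edges -/

/-- An arc that is straight in some chart: the chart maps it onto the segment `[0, 1] ⊆ ℂ`. -/
structure FlatArc (M : Type*) [TopologicalSpace M] where
  chart : OpenPartialHomeomorph M ℂ
  mem_target : ∀ t : ℝ, t ∈ Icc (0 : ℝ) 1 → (t : ℂ) ∈ chart.target

namespace FlatArc
variable {M : Type*} [TopologicalSpace M] (e : FlatArc M)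

/-- The parametrization of a flat arc by `[0, 1]`. -/
noncomputable def pt (t : ℝ) : M := e.chart.symm (t : ℂ)

/-- The initial point of a flat arc. -/
noncomputable def src : M := e.pt 0

/-- The final point of a flat arc. -/
noncomputable def tgt : M := e.pt 1

/-- A flat arc without its end points. -/
def openArc : Set M := e.pt '' Ioo (0 : ℝ) 1

/-- A flat arc together with its end points. -/
def closedArc : Set M := e.pt '' Icc 0 1

lemma chart_pt {t : ℝ} (ht : t ∈ Icc (0 : ℝ) 1) : e.chart (e.pt t) = t :=
  e.chart.right_inv (e.mem_target t ht)

lemma pt_mem_source {t : ℝ} (ht : t ∈ Icc (0 : ℝ) 1) : e.pt t ∈ e.chart.source :=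
  e.chart.map_target (e.mem_target t ht)

lemma chart_src : e.chart e.src = 0 :=
  (e.chart_pt unitInterval.zero_mem).trans Complex.ofReal_zero

lemma chart_tgt : e.chart e.tgt = 1 :=
  (e.chart_pt unitInterval.one_mem).trans Complex.ofReal_one

lemma src_mem_source : e.src ∈ e.chart.source := e.pt_mem_source unitInterval.zero_mem

lemma injOn_pt : InjOn e.pt (Icc 0 1) := fun t ht u hu h =>
  Complex.ofReal_injective (by rw [← e.chart_pt ht, ← e.chart_pt hu, h])

lemma src_ne_tgt : e.src ≠ e.tgt := fun h =>
  zero_ne_one (e.injOn_pt unitInterval.zero_mem unitInterval.one_mem h)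

lemma continuousOn_pt : ContinuousOn e.pt (Icc 0 1) :=
  e.chart.continuousOn_symm.comp Complex.continuous_ofReal.continuousOn e.mem_target

lemma isCompact_closedArc : IsCompact e.closedArc :=
  isCompact_Icc.image_of_continuousOn e.continuousOn_pt

lemma isPreconnected_openArc : IsPreconnected e.openArc :=
  isPreconnected_Ioo.image _ (e.continuousOn_pt.mono Ioo_subset_Icc_self)

lemma mem_openArc_iff {x : M} :
    x ∈ e.openArc ↔ x ∈ e.chart.source ∧ (e.chart x).re ∈ Ioo (0 : ℝ) 1 ∧ (e.chart x).im = 0 := by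
  constructor
  · rintro ⟨t, ht, rfl⟩
    simpa [e.pt_mem_source (Ioo_subset_Icc_self ht), e.chart_pt (Ioo_subset_Icc_self ht)] using ht
  · rintro ⟨hx, hre, him⟩
    refine ⟨_, hre, ?_⟩
    rw [pt, show ((e.chart x).re : ℂ) = e.chart x from Complex.ext rfl him.symm,
      e.chart.left_inv hx]

lemma openArc_subset_source : e.openArc ⊆ e.chart.source := fun _ hx => (e.mem_openArc_iff.1 hx).1

lemma closedArc_eq : e.closedArc = insert e.src (insert e.tgt e.openArc) := by
  rw [closedArc, ← Ico_insert_right zero_le_one, ← Ioo_insert_left zero_lt_one, insert_comm,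
    image_insert_eq, image_insert_eq]
  rfl

lemma openArc_subset_closedArc : e.openArc ⊆ e.closedArc := image_mono Ioo_subset_Icc_self

lemma src_mem_closedArc : e.src ∈ e.closedArc := mem_image_of_mem _ unitInterval.zero_mem

lemma tgt_mem_closedArc : e.tgt ∈ e.closedArc := mem_image_of_mem _ unitInterval.one_mem

lemma tgt_notMem_openArc : e.tgt ∉ e.openArc := fun h => by
  simpa [e.chart_tgt] using (e.mem_openArc_iff.1 h).2.1.2

lemma eventually_mem_openArc_iff {x : M} (hx : x ∈ e.openArc) :
    ∀ᶠ y in 𝓝 x, y ∈ e.chart.source ∧ (y ∈ e.openArc ↔ (e.chart y).im = 0) := by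
  obtain ⟨hsource, hre, -⟩ := e.mem_openArc_iff.1 hx
  have hre' : ∀ᶠ y in 𝓝 x, (e.chart y).re ∈ Ioo (0 : ℝ) 1 :=
    (Complex.continuous_re.continuousAt.comp (e.chart.continuousAt hsource)).eventually_mem
      (isOpen_Ioo.mem_nhds hre)
  filter_upwards [e.chart.open_source.mem_nhds hsource, hre'] with y hy hyre
  exact ⟨hy, by simp only [mem_openArc_iff, hy, hyre, true_and]⟩

lemma map_im_chart_nhds {x : M} (hx : x ∈ e.openArc) :
    map (fun y => (e.chart y).im) (𝓝 x) = 𝓝 0 := by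
  obtain ⟨hsource, -, him⟩ := e.mem_openArc_iff.1 hx
  rw [← him, ← Complex.isOpenMap_im.map_nhds_eq Complex.continuous_im.continuousAt,
    ← e.chart.map_nhds_eq hsource, map_map]
  rfl

/-- The same arc run in the opposite direction. -/
noncomputable def reverse : FlatArc M where
  chart := e.chart.transHomeomorph (Homeomorph.subLeft 1)
  mem_target t ht := by
    have h := e.mem_target (1 - t) ⟨by linarith [ht.2], by linarith [ht.1]⟩
    simpa [sub_eq_neg_add] using h

lemma reverse_pt (t : ℝ) : e.reverse.pt t = e.pt (1 - t) := by
  simp [pt, reverse, sub_eq_neg_add]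

lemma reverse_src : e.reverse.src = e.tgt := by simp only [src, tgt, reverse_pt, sub_zero]

lemma reverse_openArc : e.reverse.openArc = e.openArc := by
  simp only [openArc, funext e.reverse_pt]
  rw [← image_image e.pt (fun t => 1 - t)]
  simp

lemma reverse_chart_apply (y : M) : e.reverse.chart y = 1 - e.chart y := rfl

end FlatArc

/-- A finite graph in `M` with flat edges that meet only at the vertices. -/
structure ArcGraph (M : Type*) [TopologicalSpace M] (ι : Type) where
  arc : ι → FlatArc M
  verts : Finset M
  src_mem : ∀ i, (arc i).src ∈ verts
  tgt_mem : ∀ i, (arc i).tgt ∈ verts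
  notMem_verts : ∀ i, ∀ x ∈ (arc i).openArc, x ∉ verts
  eq_of_mem : ∀ i j, ∀ x, x ∈ (arc i).openArc → x ∈ (arc j).openArc → i = j

namespace ArcGraph
variable {M : Type*} [TopologicalSpace M] {ι : Type} (G : ArcGraph M ι)

/-- The set of points covered by a graph. -/
def carrier : Set M := {x | x ∈ G.verts ∨ ∃ i, x ∈ (G.arc i).openArc}

lemma verts_subset_carrier : (G.verts : Set M) ⊆ G.carrier := fun _ => Or.inl

lemma openArc_subset_carrier (i : ι) : (G.arc i).openArc ⊆ G.carrier := fun _ h => Or.inr ⟨i, h⟩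

lemma carrier_eq_union_closedArc : G.carrier = (G.verts : Set M) ∪ ⋃ i, (G.arc i).closedArc := by
  ext x
  simp only [carrier, mem_ofPred_eq, mem_union, mem_iUnion, FlatArc.closedArc_eq, mem_insert_iff]
  constructor
  · exact Or.imp id fun ⟨i, h⟩ => ⟨i, .inr (.inr h)⟩
  · rintro (h | ⟨i, rfl | rfl | h⟩)
    exacts [.inl h, .inl (G.src_mem i), .inl (G.tgt_mem i), .inr ⟨i, h⟩]

lemma notMem_closedArc {i j : ι} (hij : i ≠ j) {x : M} (hx : x ∈ (G.arc i).openArc) :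
    x ∉ (G.arc j).closedArc := by
  rw [FlatArc.closedArc_eq]
  rintro (rfl | rfl | h)
  exacts [G.notMem_verts i _ hx (G.src_mem j), G.notMem_verts i _ hx (G.tgt_mem j),
    hij (G.eq_of_mem i j x hx h)]

/-- `v` is an end point of the edge `i`. -/
def IsEndpoint (v : M) (i : ι) : Prop := (G.arc i).src = v ∨ (G.arc i).tgt = v

variable [T2Space M]

lemma isOpen_compl_verts : IsOpen ((G.verts : Set M)ᶜ) := G.verts.finite_toSet.isClosed.isOpen_compl

lemma eventually_notMem_verts {x : M} (hx : x ∉ G.verts) : ∀ᶠ y in 𝓝 x, y ∉ G.verts :=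
  G.isOpen_compl_verts.mem_nhds hx

lemma eventually_notMem_verts_punctured (v : M) : ∀ᶠ x in 𝓝[≠] v, x ∉ G.verts := by
  have h : ((G.verts : Set M) \ {v})ᶜ ∈ 𝓝 v :=
    (G.verts.finite_toSet.subset sdiff_subset).isClosed.isOpen_compl.mem_nhds fun h => h.2 rfl
  filter_upwards [nhdsWithin_le_nhds h, self_mem_nhdsWithin] with x hx hne hmem using hx ⟨hmem, hne⟩

lemma eventually_notMem_openArc {x : M} {i : ι} (hx : x ∉ (G.arc i).closedArc) :
    ∀ᶠ y in 𝓝 x, y ∉ (G.arc i).openArc :=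
  mem_of_superset ((G.arc i).isCompact_closedArc.isClosed.isOpen_compl.mem_nhds hx) fun _ hy h =>
    hy ((G.arc i).openArc_subset_closedArc h)

variable [Finite ι]

lemma eventually_isEndpoint_of_mem_openArc {v : M} (hv : v ∈ G.verts) :
    ∀ᶠ x in 𝓝 v, ∀ i, x ∈ (G.arc i).openArc → G.IsEndpoint v i := by
  refine eventually_all.2 fun i => ?_
  by_cases hi : v ∈ (G.arc i).closedArc
  · rw [FlatArc.closedArc_eq] at hi
    rcases hi with h | h | h
    exacts [.of_forall fun _ _ => .inl h.symm, .of_forall fun _ _ => .inr h.symm,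
      absurd hv (G.notMem_verts i v h)]
  · exact (G.eventually_notMem_openArc hi).mono fun x hx h => absurd h hx

lemma isClosed_carrier : IsClosed G.carrier := by
  rw [carrier_eq_union_closedArc]
  exact (G.verts.finite_toSet.isCompact.union
    (isCompact_iUnion fun i => (G.arc i).isCompact_closedArc)).isClosed

lemma eventually_carrier_iff {i : ι} {x : M} (hx : x ∈ (G.arc i).openArc) :
    ∀ᶠ y in 𝓝 x, (y ∈ (G.arc i).openArc ↔ ((G.arc i).chart y).im = 0) ∧
      (y ∈ G.carrier ↔ ((G.arc i).chart y).im = 0) := by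
  have hother : ∀ᶠ y in 𝓝 x, ∀ j, j ≠ i → y ∉ (G.arc j).openArc := by
    simp only [eventually_all]
    exact fun j hj => G.eventually_notMem_openArc (G.notMem_closedArc hj.symm hx)
  filter_upwards [G.eventually_notMem_verts (G.notMem_verts i x hx), hother,
    (G.arc i).eventually_mem_openArc_iff hx] with y hverts hy hiff
  refine ⟨hiff.2, ⟨?_, fun h => G.openArc_subset_carrier i (hiff.2.2 h)⟩⟩
  rintro (h | ⟨j, hj⟩)
  · exact absurd h hverts
  · obtain rfl := of_not_not fun hji => hy j hji hj
    exact hiff.2.1 hj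

lemma nhdsWithin_compl_carrier_neBot {x : M} (hx : x ∉ G.verts) : (𝓝[G.carrierᶜ] x).NeBot := by
  by_cases hcarrier : x ∈ G.carrier
  · obtain ⟨i, hi⟩ := hcarrier.resolve_left hx
    rw [← mem_closure_iff_nhdsWithin_neBot, mem_closure_iff_frequently]
    have hfreq : ∃ᶠ y in 𝓝 x, ((G.arc i).chart y).im ≠ 0 := by
      rw [← frequently_map (P := (· ≠ 0)), (G.arc i).map_im_chart_nhds hi]
      exact mem_closure_iff_frequently.1 (dense_compl_singleton (0 : ℝ) 0)
    exact (hfreq.and_eventually (G.eventually_carrier_iff hi)).mono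
      fun y hy h => hy.1 (hy.2.2.1 h)
  · rw [G.isClosed_carrier.isOpen_compl.nhdsWithin_eq hcarrier]
    infer_instance

end ArcGraph

/-! ### Cycles, boundaries and 2-colorings of the complement -/

/-- The sign of a square root of `1`; the value is meaningless at other numbers. -/
noncomputable def signOf (w : ℂ) : ℤˣ := open Classical in if w = 1 then 1 else -1

lemma signOf_smul_one {w : ℂ} (hw : w ^ 2 = 1) : signOf w • (1 : ℂ) = w := by
  rcases sq_eq_one_iff.1 hw with rfl | rfl
  · simp [signOf]
  · rw [signOf, if_neg (by norm_num), Units.neg_smul, one_smul]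

lemma eq_of_dist_smul_one_lt_one {u v : ℤˣ} (h : dist (u • (1 : ℂ)) (v • 1) < 1) : u = v := by
  rcases Int.units_eq_one_or u with rfl | rfl <;> rcases Int.units_eq_one_or v with rfl | rfl <;>
    first | rfl | (norm_num [dist_eq_norm, Units.smul_def] at h)

namespace ArcGraph
variable {M : Type*} [TopologicalSpace M] {ι : Type} [Fintype ι] (G : ArcGraph M ι)

open Classical in
/-- The sign by which a function on the complement of `G` changes when, starting on the left of
the edge through `x`, it is evaluated at a nearby point `y`; crossing the edge `i` costs `z i`. -/
noncomputable def jump (z : ι → ℤˣ) (x y : M) : ℤˣ :=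
  ∏ i, if x ∈ (G.arc i).openArc ∧ ((G.arc i).chart y).im < 0 then z i else 1

/-- Near `x`, up to the jumps `z` across edges, `s` is a continuous square root of `f`. -/
def IsBranchAt (z : ι → ℤˣ) (f s : M → ℂ) (x : M) : Prop :=
  ∃ c : ℂ, c ^ 2 = f x ∧ Tendsto (fun y => G.jump z x y • s y) (𝓝[G.carrierᶜ] x) (𝓝 c)

/-- Near `x`, the sign `s` is constant up to the jumps `z` across edges. -/
def IsColoringAt (z : ι → ℤˣ) (s : M → ℤˣ) (x : M) : Prop :=
  ∃ c : ℤˣ, ∀ᶠ y in 𝓝[G.carrierᶜ] x, G.jump z x y * s y = c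

lemma jump_mul (z z' : ι → ℤˣ) (x y : M) :
    G.jump (z * z') x y = G.jump z x y * G.jump z' x y := by
  simp only [jump, ← Finset.prod_mul_distrib, ite_mul_ite, Pi.mul_apply, mul_one]

lemma jump_one (x y : M) : G.jump 1 x y = 1 := by
  simp only [jump, Pi.one_apply, ite_self, Finset.prod_const_one]

lemma jump_of_mem_openArc (z : ι → ℤˣ) {i : ι} {x : M} (hx : x ∈ (G.arc i).openArc) (y : M) :
    G.jump z x y = if ((G.arc i).chart y).im < 0 then z i else 1 := by
  classical
  rw [jump, Finset.prod_eq_single_of_mem i (Finset.mem_univ i)]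
  · simp only [hx, true_and]
  · exact fun j _ hj => if_neg fun h => hj (G.eq_of_mem j i x h.1 hx)

lemma jump_of_notMem_carrier (z : ι → ℤˣ) {x : M} (hx : x ∉ G.carrier) (y : M) :
    G.jump z x y = 1 :=
  Finset.prod_eq_one fun i _ => if_neg fun h => hx (G.openArc_subset_carrier i h.1)

lemma jump_congr {z z' : ι → ℤˣ} {x : M} (h : ∀ i, x ∈ (G.arc i).openArc → z i = z' i) (y : M) :
    G.jump z x y = G.jump z' x y := by
  classical
  refine Finset.prod_congr rfl fun i _ => ?_
  split_ifs with hi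
  exacts [h i hi.1, rfl]

variable {G}

lemma IsBranchAt.mul {z z' : ι → ℤˣ} {f f' s s' : M → ℂ} {x : M}
    (h : G.IsBranchAt z f s x) (h' : G.IsBranchAt z' f' s' x) :
    G.IsBranchAt (z * z') (f * f') (s * s') x := by
  obtain ⟨c, hc, h⟩ := h
  obtain ⟨c', hc', h'⟩ := h'
  refine ⟨c * c', by rw [mul_pow, hc, hc', Pi.mul_apply], (h.mul h').congr fun y => ?_⟩
  rw [jump_mul, smul_mul_smul_comm, Pi.mul_apply]

lemma IsBranchAt.of_continuousAt {f s : M → ℂ} {x : M} (hs : ContinuousAt s x)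
    (h : s x ^ 2 = f x) : G.IsBranchAt 1 f s x := by
  refine ⟨s x, h, (hs.mono_left nhdsWithin_le_nhds).congr fun y => ?_⟩
  rw [jump_one, one_smul]

lemma IsBranchAt.prod {α : Type*} (S : Finset α) {z : α → ι → ℤˣ} {f s : α → M → ℂ} {x : M}
    (h : ∀ a ∈ S, G.IsBranchAt (z a) (f a) (s a) x) :
    G.IsBranchAt (∏ a ∈ S, z a) (∏ a ∈ S, f a) (∏ a ∈ S, s a) x := by
  classical
  induction S using Finset.induction_on with
  | empty => exact .of_continuousAt continuousAt_const (one_pow 2)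
  | insert a S ha ih =>
    simp only [Finset.prod_insert ha]
    exact (h a (S.mem_insert_self a)).mul (ih fun b hb => h b (Finset.mem_insert_of_mem hb))

lemma IsBranchAt.congr {z z' : ι → ℤˣ} {f f' s : M → ℂ} {x : M} (h : G.IsBranchAt z f s x)
    (hz : ∀ i, x ∈ (G.arc i).openArc → z i = z' i) (hf : f x = f' x) :
    G.IsBranchAt z' f' s x := by
  obtain ⟨c, hc, h⟩ := h
  exact ⟨c, hc.trans hf, h.congr fun y => by rw [G.jump_congr hz]⟩

lemma IsColoringAt.mul {z z' : ι → ℤˣ} {s s' : M → ℤˣ} {x : M}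
    (h : G.IsColoringAt z s x) (h' : G.IsColoringAt z' s' x) :
    G.IsColoringAt (z * z') (s * s') x := by
  obtain ⟨c, h⟩ := h
  obtain ⟨c', h'⟩ := h'
  refine ⟨c * c', ?_⟩
  filter_upwards [h, h'] with y h h'
  rw [jump_mul, ← h, ← h', Pi.mul_apply, mul_mul_mul_comm]

lemma IsColoringAt.congr {z : ι → ℤˣ} {s s' : M → ℤˣ} {x : M} (h : G.IsColoringAt z s x)
    (hs : ∀ᶠ y in 𝓝[G.carrierᶜ] x, s y = s' y) : G.IsColoringAt z s' x := by
  obtain ⟨c, h⟩ := h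
  refine ⟨c, ?_⟩
  filter_upwards [h, hs] with y h h'
  rw [← h', h]

lemma isColoringAt_const (ε : ℤˣ) (x : M) : G.IsColoringAt 1 (fun _ => ε) x :=
  ⟨ε, .of_forall fun y => by rw [jump_one, one_mul]⟩

lemma IsColoringAt.isBranchAt {z : ι → ℤˣ} {s : M → ℤˣ} {x : M} (h : G.IsColoringAt z s x) :
    G.IsBranchAt z 1 (fun y => s y • 1) x := by
  obtain ⟨c, h⟩ := h
  refine ⟨c • 1, by rw [smul_pow, Int.units_sq, one_smul, one_pow, Pi.one_apply],
    tendsto_const_nhds.congr' ?_⟩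
  filter_upwards [h] with y hy
  rw [smul_smul, hy]

variable [T2Space M]

lemma IsBranchAt.sq {z : ι → ℤˣ} {f s : M → ℂ} {x : M} (h : G.IsBranchAt z f s x)
    (hx : x ∉ G.carrier) : s x ^ 2 = f x := by
  obtain ⟨c, hc, h⟩ := h
  rw [G.isClosed_carrier.isOpen_compl.nhdsWithin_eq hx] at h
  have hlim := tendsto_nhds_unique (h.mono_left (pure_le_nhds x)) (tendsto_pure_nhds _ _)
  rw [← hc, hlim, G.jump_of_notMem_carrier z hx, one_smul]

lemma IsBranchAt.isColoringAt {z : ι → ℤˣ} {s : M → ℂ} {x : M}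
    (h : ∀ᶠ y in 𝓝 x, y ∉ G.verts → G.IsBranchAt z 1 s y) (hx : x ∉ G.verts) :
    G.IsColoringAt z (fun y => signOf (s y)) x := by
  obtain ⟨c, hc, hlim⟩ := h.self_of_nhds hx
  refine ⟨signOf c, ?_⟩
  filter_upwards [hlim (Metric.ball_mem_nhds c one_pos), self_mem_nhdsWithin,
    eventually_nhdsWithin_of_eventually_nhds h] with y hdist hy hbranch
  have hsq : s y ^ 2 = 1 := (hbranch fun hv => hy (G.verts_subset_carrier hv)).sq hy
  apply eq_of_dist_smul_one_lt_one
  rwa [mul_smul, signOf_smul_one hsq, signOf_smul_one hc]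

end ArcGraph

/-- The square root of `w` that is continuous off the half-line `[0, ∞)` and changes sign across
it. -/
noncomputable def slitRoot (w : ℂ) : ℂ := Complex.I * Complex.exp (Complex.log (-w) / 2)

lemma slitRoot_sq {w : ℂ} (hw : w ≠ 0) : slitRoot w ^ 2 = w := by
  rw [slitRoot, mul_pow, exp_div_two_sq, Complex.exp_log (neg_ne_zero.2 hw), Complex.I_sq]
  ring

lemma slitRoot_ne_zero (w : ℂ) : slitRoot w ≠ 0 :=
  mul_ne_zero Complex.I_ne_zero (Complex.exp_ne_zero _)

lemma continuousAt_slitRoot {w : ℂ} (hw : -w ∈ Complex.slitPlane) : ContinuousAt slitRoot w := by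
  have h : ContinuousAt (fun w => Complex.log (-w)) w := continuousAt_neg.clog hw
  unfold slitRoot
  fun_prop

lemma slitRoot_of_im_pos {w : ℂ} (hw : 0 < w.im) :
    slitRoot w = Complex.exp (Complex.log w / 2) := by
  have hlog : Complex.log (-w) = Complex.log w - Real.pi * Complex.I := by
    apply Complex.ext <;>
      simp [Complex.log_re, Complex.log_im, Complex.arg_neg_eq_arg_sub_pi_of_im_pos hw]
  rw [slitRoot, hlog, show ∀ a : ℂ, (a - Real.pi * Complex.I) / 2 = a / 2 - Real.pi / 2 * Complex.I
    from fun a => by ring, Complex.exp_sub, Complex.exp_pi_div_two_mul_I,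
    mul_div_cancel₀ _ Complex.I_ne_zero]

lemma slitRoot_of_im_neg {w : ℂ} (hw : w.im < 0) :
    slitRoot w = -Complex.exp (Complex.log w / 2) := by
  have hlog : Complex.log (-w) = Complex.log w + Real.pi * Complex.I := by
    apply Complex.ext <;>
      simp [Complex.log_re, Complex.log_im, Complex.arg_neg_eq_arg_add_pi_of_im_neg hw]
  rw [slitRoot, hlog, show ∀ a : ℂ, (a + Real.pi * Complex.I) / 2 = a / 2 + Real.pi / 2 * Complex.I
    from fun a => by ring, Complex.exp_add, Complex.exp_pi_div_two_mul_I, mul_comm, mul_assoc,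
    Complex.I_mul_I, mul_neg_one]

lemma slitRoot_eq {w : ℂ} (hw : w.im ≠ 0) :
    slitRoot w = (if w.im < 0 then -1 else 1 : ℤˣ) • Complex.exp (Complex.log w / 2) := by
  rcases hw.lt_or_gt with h | h
  · rw [slitRoot_of_im_neg h, if_pos h, Units.neg_smul, one_smul]
  · rw [slitRoot_of_im_pos h, if_neg h.not_gt, one_smul]

lemma div_units_smul (u : ℤˣ) (a b : ℂ) : a / (u • b) = u • (a / b) := by
  rcases Int.units_eq_one_or u with rfl | rfl
  · simp only [one_smul]
  · simp only [Units.neg_smul, one_smul, div_neg]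

namespace ArcGraph
variable {M : Type*} [TopologicalSpace M] {ι : Type} [Fintype ι] (G : ArcGraph M ι)

section Branch
variable [DecidableEq ι] {G} {i : ι} {e : FlatArc M}

lemma exists_slitRoot_eq_jump_mulSingle_smul (he : e = G.arc i ∨ e = (G.arc i).reverse) :
    ∃ ε : ℤˣ, ∀ x ∈ (G.arc i).openArc, ∀ y, (e.chart y).im ≠ 0 →
      slitRoot (e.chart y) =
        (G.jump (Pi.mulSingle i (-1)) x y * ε) • Complex.exp (Complex.log (e.chart y) / 2) := by
  rcases he with rfl | rfl
  · refine ⟨1, fun x hx y hy => ?_⟩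
    rw [slitRoot_eq hy, G.jump_of_mem_openArc _ hx, Pi.mulSingle_eq_same, mul_one]
  · refine ⟨-1, fun x hx y hy => ?_⟩
    have him : ((G.arc i).reverse.chart y).im = -((G.arc i).chart y).im := by
      simp [FlatArc.reverse_chart_apply]
    rw [slitRoot_eq hy, G.jump_of_mem_openArc _ hx, Pi.mulSingle_eq_same]
    congr 1
    rw [him] at hy ⊢
    rcases (neg_ne_zero.1 hy).lt_or_gt with h | h
    · rw [if_pos h, if_neg (by linarith), neg_mul_neg, one_mul]
    · rw [if_neg h.not_gt, if_pos (by linarith), one_mul]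

lemma neg_chart_mem_slitPlane {x : M} (hx : x ∈ e.chart.source) (hx0 : e.chart x ≠ 0)
    (hnorm : ‖e.chart x‖ < 1) (harc : x ∉ e.openArc) : -e.chart x ∈ Complex.slitPlane := by
  rw [Complex.mem_slitPlane_iff]
  by_contra! h
  simp only [Complex.neg_re, Complex.neg_im, neg_nonpos, neg_eq_zero] at h
  have hre : (e.chart x).re ≠ 0 := fun hre => hx0 (Complex.ext hre h.2)
  exact harc (e.mem_openArc_iff.2
    ⟨hx, ⟨h.1.lt_of_ne hre.symm, (Complex.re_le_norm _).trans_lt hnorm⟩, h.2⟩)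

lemma isBranchAt_div_slitRoot_of_mem (he : e = G.arc i ∨ e = (G.arc i).reverse)
    {x : M} (hx : x ∈ e.openArc) {f s : M → ℂ} (hs : ContinuousAt s x)
    (hsq : s x ^ 2 = e.chart x * f x) :
    G.IsBranchAt (Pi.mulSingle i (-1)) f (fun y => s y / slitRoot (e.chart y)) x := by
  obtain ⟨ε, hε⟩ := exists_slitRoot_eq_jump_mulSingle_smul he
  have hxi : x ∈ (G.arc i).openArc := by
    rcases he with rfl | rfl
    exacts [hx, (G.arc i).reverse_openArc ▸ hx]
  obtain ⟨hsource, hre, -⟩ := e.mem_openArc_iff.1 hx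
  have hslit : e.chart x ∈ Complex.slitPlane := .inl hre.1
  have hx0 : e.chart x ≠ 0 := Complex.slitPlane_ne_zero hslit
  have hlog : ContinuousAt (fun y => Complex.log (e.chart y)) x :=
    (e.chart.continuousAt hsource).clog hslit
  refine ⟨ε • (s x / Complex.exp (Complex.log (e.chart x) / 2)), ?_, ?_⟩
  · rw [smul_pow, Int.units_sq, one_smul, div_pow, exp_div_two_sq, Complex.exp_log hx0, hsq,
      mul_div_cancel_left₀ _ hx0]
  · have hlim : ContinuousAt (fun y => ε • (s y / Complex.exp (Complex.log (e.chart y) / 2))) x :=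
      (hs.div (by fun_prop) (Complex.exp_ne_zero _)).const_smul ε
    refine (hlim.mono_left nhdsWithin_le_nhds).congr' ?_
    filter_upwards [self_mem_nhdsWithin,
      eventually_nhdsWithin_of_eventually_nhds (e.eventually_mem_openArc_iff hx)] with y hy hy'
    have him : (e.chart y).im ≠ 0 := fun h => hy (G.openArc_subset_carrier i (by
      rcases he with rfl | rfl
      exacts [hy'.2.2 h, (G.arc i).reverse_openArc ▸ hy'.2.2 h]))
    rw [hε x hxi y him, div_units_smul, smul_smul, ← mul_assoc, Int.units_mul_self, one_mul]

lemma isBranchAt_div_slitRoot (he : e = G.arc i ∨ e = (G.arc i).reverse) {x : M}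
    (hx : x ∈ e.chart.source) (hx0 : e.chart x ≠ 0) (hnorm : ‖e.chart x‖ < 1) {f s : M → ℂ}
    (hs : ContinuousAt s x) (hsq : s x ^ 2 = e.chart x * f x) :
    G.IsBranchAt (Pi.mulSingle i (-1)) f (fun y => s y / slitRoot (e.chart y)) x := by
  by_cases harc : x ∈ e.openArc
  · exact isBranchAt_div_slitRoot_of_mem he harc hs hsq
  have hroot : ContinuousAt (fun y => slitRoot (e.chart y)) x :=
    ContinuousAt.comp (g := slitRoot)
      (continuousAt_slitRoot (neg_chart_mem_slitPlane hx hx0 hnorm harc)) (e.chart.continuousAt hx)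
  refine (IsBranchAt.of_continuousAt (hs.div hroot (slitRoot_ne_zero _)) ?_).congr
    (fun j hj => (Pi.mulSingle_eq_of_ne (M := fun _ => ℤˣ) ?_ _).symm) rfl
  · rw [Pi.div_apply, div_pow, slitRoot_sq hx0, hsq, mul_div_cancel_left₀ _ hx0]
  · rintro rfl
    rcases he with rfl | rfl
    exacts [harc hj, harc ((G.arc j).reverse_openArc.symm ▸ hj)]

end Branch

lemma exists_isBranchAt_mulSingle [DecidableEq ι] [T2Space M] {i : ι} {v : M}
    (hi : G.IsEndpoint v i) (χ : OpenPartialHomeomorph M ℂ) (hv : v ∈ χ.source) (hχv : χ v = 0) :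
    ∃ r : M → ℂ, ∀ᶠ x in 𝓝[≠] v, G.IsBranchAt (Pi.mulSingle i (-1)) χ r x := by
  obtain ⟨e, he, rfl⟩ : ∃ e, (e = G.arc i ∨ e = (G.arc i).reverse) ∧ e.src = v :=
    hi.elim (fun h => ⟨_, .inl rfl, h⟩)
      fun h => ⟨_, .inr rfl, (G.arc i).reverse_src.trans h⟩
  obtain ⟨s, hs⟩ := hasSqrtNear_mul_chart e.chart χ e.src_mem_source e.chart_src hv hχv
  have hpunct := tendsto_punctured e.chart e.src_mem_source
  rw [e.chart_src] at hpunct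
  refine ⟨fun y => s y / slitRoot (e.chart y), ?_⟩
  filter_upwards [hs, hpunct self_mem_nhdsWithin,
    hpunct (nhdsWithin_le_nhds (Metric.ball_mem_nhds 0 one_pos)),
    nhdsWithin_le_nhds (e.chart.open_source.mem_nhds e.src_mem_source)] with x hx hx0 hnorm hsource
  exact isBranchAt_div_slitRoot he hsource hx0 (mem_ball_zero_iff.1 hnorm) hx.1 hx.2

end ArcGraph

namespace ArcGraph
variable {M : Type*} [TopologicalSpace M] {ι : Type} [Fintype ι] (G : ArcGraph M ι)

open Classical in
/-- The product of the signs `z` over the edges ending at `v`. -/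
noncomputable def vertexSign (z : ι → ℤˣ) (v : M) : ℤˣ := ∏ i, if G.IsEndpoint v i then z i else 1

/-- Sign vectors with an even number of negative edges at every vertex: the cycles mod 2 of `G`. -/
def IsCycle (z : ι → ℤˣ) : Prop := ∀ v ∈ G.verts, G.vertexSign z v = 1

/-- On a neighbourhood of `K`, the sign `s` is locally constant off `G` and changes by `z` across
the edges. No condition is imposed at the vertices themselves. -/
def IsColoringNear (z : ι → ℤˣ) (s : M → ℤˣ) (K : Set M) : Prop :=
  ∀ᶠ x in 𝓝ˢ K, x ∉ G.verts → G.IsColoringAt z s x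

/-- Some sign is a coloring with jumps `z` near `K`. -/
def ColorableNear (z : ι → ℤˣ) (K : Set M) : Prop := ∃ s, G.IsColoringNear z s K

/-- Sign vectors that are the jumps of a global 2-coloring of the complement of `G`: the boundaries
mod 2. -/
def IsBoundary (z : ι → ℤˣ) : Prop := G.ColorableNear z univ

open Classical in
/-- The edges at `v` with negative sign. -/
noncomputable def negEdges (z : ι → ℤˣ) (v : M) : Finset ι := {i | G.IsEndpoint v i ∧ z i = -1}

lemma vertexSign_eq_neg_one_pow (z : ι → ℤˣ) (v : M) :
    G.vertexSign z v = (-1) ^ (G.negEdges z v).card := by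
  classical
  rw [← Finset.prod_const, negEdges, Finset.prod_filter]
  refine Finset.prod_congr rfl fun i _ => ?_
  by_cases h : G.IsEndpoint v i
  · rcases Int.units_eq_one_or (z i) with h1 | h1 <;> simp [h, h1]
  · simp only [h, false_and, if_false]

lemma prod_negEdges_mulSingle [DecidableEq ι] (z : ι → ℤˣ) {v : M} {i : ι}
    (hi : G.IsEndpoint v i) :
    (∏ j ∈ G.negEdges z v, Pi.mulSingle j (-1 : ℤˣ)) i = z i := by
  rw [Finset.prod_apply, Finset.prod_pi_mulSingle]
  rcases Int.units_eq_one_or (z i) with h | h <;> simp [negEdges, hi, h]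

lemma isBoundary_iff {z : ι → ℤˣ} :
    G.IsBoundary z ↔ ∃ s : M → ℤˣ, ∀ x ∉ G.verts, G.IsColoringAt z s x := by
  simp only [IsBoundary, ColorableNear, IsColoringNear, nhdsSet_univ, eventually_top]

variable [T2Space M]

lemma exists_isBranchAt_pow_card_negEdges (z : ι → ℤˣ) {v : M} (hv : v ∈ G.verts)
    (χ : OpenPartialHomeomorph M ℂ) (hχ : v ∈ χ.source) (hχv : χ v = 0) :
    ∃ r : M → ℂ, ∀ᶠ x in 𝓝[≠] v,
      G.IsBranchAt z (fun y => χ y ^ (G.negEdges z v).card) r x := by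
  classical
  have h : ∀ i : ι, ∃ r : M → ℂ, G.IsEndpoint v i →
      ∀ᶠ x in 𝓝[≠] v, G.IsBranchAt (Pi.mulSingle i (-1)) χ r x := fun i => by
    by_cases hi : G.IsEndpoint v i
    · obtain ⟨r, hr⟩ := G.exists_isBranchAt_mulSingle hi χ hχ hχv
      exact ⟨r, fun _ => hr⟩
    · exact ⟨0, fun h => absurd h hi⟩
  choose r hr using h
  refine ⟨∏ i ∈ G.negEdges z v, r i, ?_⟩
  filter_upwards [eventually_all.2 fun i => eventually_imp_distrib_left.2 (hr i),
    eventually_nhdsWithin_of_eventually_nhds (G.eventually_isEndpoint_of_mem_openArc hv)]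
    with x hx hend
  refine (IsBranchAt.prod (G.negEdges z v) fun i hi =>
    hx i (Finset.mem_filter.1 hi).2.1).congr (fun i hi => ?_) ?_
  · exact G.prod_negEdges_mulSingle z (hend i hi)
  · rw [Finset.prod_const, Pi.pow_apply]

lemma exists_isBranchAt_pow_card_negEdges_mod_two (z : ι → ℤˣ) {v : M} (hv : v ∈ G.verts)
    (χ : OpenPartialHomeomorph M ℂ) (hχ : v ∈ χ.source) (hχv : χ v = 0) :
    ∃ r : M → ℂ, ∀ᶠ x in 𝓝[≠] v,
      G.IsBranchAt z (fun y => χ y ^ ((G.negEdges z v).card % 2)) r x := by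
  obtain ⟨r, hr⟩ := G.exists_isBranchAt_pow_card_negEdges z hv χ hχ hχv
  set n := (G.negEdges z v).card
  refine ⟨r * fun y => (χ y ^ (n / 2))⁻¹, ?_⟩
  filter_upwards [hr, hχv ▸ tendsto_punctured χ hχ self_mem_nhdsWithin,
    nhdsWithin_le_nhds (χ.open_source.mem_nhds hχ)] with x hx hx0 hsource
  have hne : χ x ^ (n / 2) ≠ 0 := pow_ne_zero _ hx0
  have hinv : G.IsBranchAt 1 (fun y => ((χ y ^ (n / 2)) ^ 2)⁻¹) (fun y => (χ y ^ (n / 2))⁻¹) x :=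
    .of_continuousAt (((χ.continuousAt hsource).pow _).inv₀ hne) (inv_pow _ _)
  refine (hx.mul hinv).congr (fun i _ => by rw [mul_one]) ?_
  rw [Pi.mul_apply, mul_inv_eq_iff_eq_mul₀ (pow_ne_zero _ hne), ← pow_mul, ← pow_add, mul_comm _ 2,
    Nat.mod_add_div]

variable {G} in
lemma IsBranchAt.hasSqrtNear {f s : M → ℂ} {v : M} (h : ∀ᶠ x in 𝓝[≠] v, G.IsBranchAt 1 f s x) :
    HasSqrtNear f v := by
  obtain ⟨U, hU, hUopen, hvU⟩ := eventually_nhds_iff.1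
    (eventually_nhdsWithin_iff.1 (h.and (G.eventually_notMem_verts_punctured v)))
  have hlim : ∀ x ∈ U \ {v}, (𝓝[G.carrierᶜ] x).NeBot ∧
      ∃ c : ℂ, c ^ 2 = f x ∧ Tendsto s (𝓝[G.carrierᶜ] x) (𝓝 c) := fun x hx => by
    obtain ⟨⟨c, hc, hs⟩, hverts⟩ := hU x hx.1 hx.2
    exact ⟨G.nhdsWithin_compl_carrier_neBot hverts, c, hc, by
      simpa only [jump_one, one_smul] using hs⟩
  have hcont : ContinuousOn (extendFrom G.carrierᶜ s) (U \ {v}) :=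
    continuousOn_extendFrom (fun x hx => mem_closure_iff_nhdsWithin_neBot.2 (hlim x hx).1)
      fun x hx => let ⟨c, _, hc⟩ := (hlim x hx).2; ⟨c, hc⟩
  refine ⟨extendFrom G.carrierᶜ s, eventually_nhdsWithin_iff.2 ?_⟩
  filter_upwards [hUopen.mem_nhds hvU] with x hxU hxv
  obtain ⟨hne, c, hc, hs⟩ := hlim x ⟨hxU, hxv⟩
  refine ⟨hcont.continuousAt ((hUopen.sdiff isClosed_singleton).mem_nhds ⟨hxU, hxv⟩), ?_⟩
  rw [extendFrom_eq (mem_closure_iff_nhdsWithin_neBot.2 hne) hs, hc]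

lemma colorableNear_vertex_iff (z : ι → ℤˣ) {v : M} (hv : v ∈ G.verts)
    (χ : OpenPartialHomeomorph M ℂ) (hχ : v ∈ χ.source) (hχv : χ v = 0) :
    G.ColorableNear z {v} ↔ G.vertexSign z v = 1 := by
  obtain ⟨r, hr⟩ := G.exists_isBranchAt_pow_card_negEdges_mod_two z hv χ hχ hχv
  simp only [ColorableNear, IsColoringNear, nhdsSet_singleton, vertexSign_eq_neg_one_pow]
  rcases Nat.mod_two_eq_zero_or_one (G.negEdges z v).card with heven | hodd
  · refine iff_of_true ⟨fun y => signOf (r y), ?_⟩ (Nat.even_iff.2 heven).neg_one_pow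
    have hbranch : ∀ᶠ x in 𝓝 v, x ∉ G.verts → G.IsBranchAt z 1 r x :=
      (eventually_nhdsWithin_iff.1 hr).mono fun x hx hverts =>
        (hx fun h => hverts (h ▸ hv)).congr (fun _ _ => rfl) (by rw [heven, pow_zero, Pi.one_apply])
    filter_upwards [hbranch.eventually_nhds] with x hx hverts
      using IsBranchAt.isColoringAt hx hverts
  · have hsign : (-1 : ℤˣ) ^ (G.negEdges z v).card = -1 := (Nat.odd_iff.2 hodd).neg_one_pow
    refine iff_of_false (fun ⟨s, hs⟩ => not_hasSqrtNear_chart χ hχ hχv ?_) (by rw [hsign]; decide)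
    refine IsBranchAt.hasSqrtNear (G := G) (s := (fun y => s y • 1) * r) ?_
    filter_upwards [hr, eventually_nhdsWithin_of_eventually_nhds hs,
      G.eventually_notMem_verts_punctured v] with x hbranch hcol hverts
    refine ((hcol hverts).isBranchAt.mul hbranch).congr (fun i _ => Int.units_mul_self (z i)) ?_
    simp only [hodd, pow_one, one_mul]

lemma colorableNear_singleton_of_notMem_verts (z : ι → ℤˣ) {x : M} (hx : x ∉ G.verts) :
    G.ColorableNear z {x} := by
  simp only [ColorableNear, IsColoringNear, nhdsSet_singleton]
  by_cases hxG : x ∈ G.carrier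
  · obtain ⟨i, hi⟩ := hxG.resolve_left hx
    refine ⟨fun y => if ((G.arc i).chart y).im < 0 then z i else 1, ?_⟩
    filter_upwards [G.eventually_carrier_iff hi, (G.arc i).eventually_mem_openArc_iff hi]
      with y hiff hy _
    by_cases him : ((G.arc i).chart y).im = 0
    · refine ⟨1, .of_forall fun w => ?_⟩
      rw [G.jump_of_mem_openArc z (hiff.1.2 him), Int.units_mul_self]
    · have hcont : ContinuousAt (fun w => ((G.arc i).chart w).im) y :=
        Complex.continuous_im.continuousAt.comp ((G.arc i).chart.continuousAt hy.1)
      simp only [IsColoringAt, G.jump_of_notMem_carrier z (fun h => him (hiff.2.1 h)), one_mul]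
      rcases lt_or_gt_of_ne him with h | h
      · exact ⟨z i, eventually_nhdsWithin_of_eventually_nhds
          ((hcont.eventually_lt_const h).mono fun w hw => if_pos hw)⟩
      · exact ⟨1, eventually_nhdsWithin_of_eventually_nhds
          ((hcont.eventually_const_lt h).mono fun w hw => if_neg hw.not_gt)⟩
  · refine ⟨1, ?_⟩
    filter_upwards [G.isClosed_carrier.isOpen_compl.mem_nhds hxG] with y hy _
    exact ⟨1, .of_forall fun w => by rw [G.jump_of_notMem_carrier z hy, Pi.one_apply, one_mul]⟩

variable [ChartedSpace ℂ M]

variable {G} in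
lemma IsCycle.colorableNear_singleton {z : ι → ℤˣ} (hz : G.IsCycle z) (x : M) :
    G.ColorableNear z {x} := by
  by_cases hx : x ∈ G.verts
  · obtain ⟨χ, hχ, hχx⟩ := exists_chart_eq_zero x
    exact (G.colorableNear_vertex_iff z hx χ hχ hχx).2 (hz x hx)
  · exact G.colorableNear_singleton_of_notMem_verts z hx

variable {G} in
lemma IsBoundary.isCycle {z : ι → ℤˣ} (hz : G.IsBoundary z) : G.IsCycle z := fun v hv => by
  obtain ⟨χ, hχ, hχv⟩ := exists_chart_eq_zero v
  exact (G.colorableNear_vertex_iff z hv χ hχ hχv).1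
    (hz.imp fun _ hs => hs.filter_mono (nhdsSet_mono (subset_univ _)))

end ArcGraph

lemma exists_isPreconnected_mem_punctured {M : Type*} [TopologicalSpace M] [ChartedSpace ℂ M]
    {v : M} {U : Set M} (hU : U ∈ 𝓝[≠] v) : ∃ B ⊆ U, B ∈ 𝓝[≠] v ∧ IsPreconnected B := by
  obtain ⟨χ, hχ, hχv⟩ := exists_chart_eq_zero v
  have h0 : (0 : ℂ) ∈ χ.target := hχv ▸ χ.map_source hχ
  have hsymm := tendsto_punctured χ.symm h0
  rw [← hχv, χ.left_inv hχ, hχv] at hsymm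
  obtain ⟨a, ha⟩ := eventually_punctured_zero_iff_exp.1
    ((hsymm.eventually_mem hU).and (nhdsWithin_le_nhds (χ.open_target.mem_nhds h0)))
  refine ⟨(fun u => χ.symm (Complex.exp u)) '' {u | u.re < a},
    image_subset_iff.2 fun u hu => (ha u hu).1, ?_,
    (convex_halfSpace_re_lt a).isPreconnected.image _ (χ.continuousOn_symm.comp
      Complex.continuous_exp.continuousOn fun u hu => (ha u hu).2)⟩
  have hexp : Complex.exp '' {u | u.re < a} ∈ 𝓝[≠] (χ v) := hχv ▸
    eventually_punctured_zero_iff_exp.2 ⟨a, fun u hu => mem_image_of_mem Complex.exp hu⟩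
  filter_upwards [tendsto_punctured χ hχ hexp,
    nhdsWithin_le_nhds (χ.open_source.mem_nhds hχ)] with y ⟨u, hu, huy⟩ hy
  exact ⟨u, hu, (congrArg χ.symm huy).trans (χ.left_inv hy)⟩

lemma punctured_nhds_neBot {M : Type*} [TopologicalSpace M] [ChartedSpace ℂ M] (v : M) :
    (𝓝[≠] v).NeBot := by
  have h := tendsto_punctured (chartAt ℂ v).symm (mem_chart_target ℂ v)
  rw [(chartAt ℂ v).left_inv (mem_chart_source ℂ v)] at h
  exact h.neBot

lemma exists_eventually_nhdsSet_eq {α X : Type*} [TopologicalSpace α] [Nonempty X]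
    {B Q : Set α} {s : α → X} (hB : IsPreconnected B) (hQ : ∀ x ∈ B, (𝓝[Q] x).NeBot)
    (h : ∀ x ∈ B, ∃ c, ∀ᶠ y in 𝓝[Q] x, s y = c) : ∃ c, ∀ᶠ y in 𝓝ˢ B, y ∈ Q → s y = c := by
  let _ : TopologicalSpace X := ⊥
  have : DiscreteTopology X := ⟨rfl⟩
  have hclosure : B ⊆ closure Q := fun x hx => mem_closure_iff_nhdsWithin_neBot.2 (hQ x hx)
  have hlim : ∀ x ∈ B, ∀ c, (∀ᶠ y in 𝓝[Q] x, s y = c) → Tendsto s (𝓝[Q] x) (𝓝 c) :=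
    fun x _ c hc => tendsto_const_nhds.congr' (hc.mono fun _ h => h.symm)
  have hcont : ContinuousOn (extendFrom Q s) B := continuousOn_extendFrom hclosure
    fun x hx => (h x hx).imp (hlim x hx)
  rcases B.eq_empty_or_nonempty with rfl | ⟨x₀, hx₀⟩
  · simp
  refine ⟨extendFrom Q s x₀, eventually_nhdsSet_iff_forall.2 fun x hx =>
    eventually_nhdsWithin_iff.1 ?_⟩
  obtain ⟨c, hc⟩ := h x hx
  rwa [hB.constant hcont hx₀ hx, extendFrom_eq (hclosure hx) (hlim x hx c hc)]

open unitInterval in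
lemma unitInterval_induction {P : I → I → Prop}
    (hlocal : ∀ x, ∃ U ∈ 𝓝 x, ∀ a b, Icc a b ⊆ U → P a b)
    (hglue : ∀ a b c, a ≤ b → b ≤ c → P a b → P b c → P a c) : P 0 1 := by
  choose U hU hP using hlocal
  obtain ⟨t, ht0, htmono, ⟨n, hn⟩, ht⟩ := exists_monotone_Icc_subset_open_cover_unitInterval
    (c := fun x => interior (U x)) (fun _ => isOpen_interior)
    fun x _ => mem_iUnion.2 ⟨x, mem_interior_iff_mem_nhds.2 (hU x)⟩
  have hstep : ∀ m, P (t m) (t (m + 1)) := fun m =>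
    let ⟨x, hx⟩ := ht m
    hP x _ _ (hx.trans interior_subset)
  have hzero : ∀ m, P 0 (t (m + 1)) := fun m => by
    induction m with
    | zero => exact ht0 ▸ hstep 0
    | succ m ih => exact hglue _ _ _ (t _).2.1 (htmono (Nat.le_succ _)) ih (hstep _)
  exact hn (n + 1) n.le_succ ▸ hzero n

namespace ArcGraph
variable {M : Type*} [TopologicalSpace M] {ι : Type} (G : ArcGraph M ι)

lemma nhdsWithin_compl_carrier_neBot_of_chartedSpace [Finite ι] [T2Space M] [ChartedSpace ℂ M]
    (x : M) : (𝓝[G.carrierᶜ] x).NeBot := by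
  by_cases hx : x ∈ G.verts
  · have := punctured_nhds_neBot x
    have hverts : (G.verts : Set M)ᶜ ⊆ closure G.carrierᶜ := fun y hy =>
      mem_closure_iff_nhdsWithin_neBot.2 (G.nhdsWithin_compl_carrier_neBot hy)
    refine mem_closure_iff_nhdsWithin_neBot.1 (closure_minimal hverts isClosed_closure
      (mem_closure_iff_frequently.2 ?_))
    exact (G.eventually_notMem_verts_punctured x).frequently.filter_mono nhdsWithin_le_nhds
  · exact G.nhdsWithin_compl_carrier_neBot hx

variable [Fintype ι]

variable {G} in
lemma ColorableNear.mono {z : ι → ℤˣ} {K L : Set M} (h : G.ColorableNear z L) (hKL : K ⊆ L) :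
    G.ColorableNear z K :=
  h.imp fun _ hs => hs.filter_mono (nhdsSet_mono hKL)

variable {G} in
lemma ColorableNear.exists_isOpen {z : ι → ℤˣ} {K : Set M} (h : G.ColorableNear z K) :
    ∃ U, IsOpen U ∧ K ⊆ U ∧ G.ColorableNear z U := by
  obtain ⟨s, hs⟩ := h
  obtain ⟨U, hU, hKU, hsU⟩ := eventually_nhdsSet_iff_exists.1 hs
  exact ⟨U, hU, hKU, s, eventually_nhdsSet_iff_exists.2 ⟨U, hU, Subset.rfl, hsU⟩⟩

variable {G} in
lemma IsColoringNear.congr {z : ι → ℤˣ} {s s' : M → ℤˣ} {K : Set M} (h : G.IsColoringNear z s K)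
    (hs : ∀ᶠ y in 𝓝ˢ K, y ∉ G.carrier → s y = s' y) : G.IsColoringNear z s' K := by
  filter_upwards [h, hs.eventually_nhdsSet] with x hx hxs hverts
  exact (hx hverts).congr (eventually_nhdsWithin_iff.2 hxs)

variable {G} in
lemma IsColoringNear.const_mul {z : ι → ℤˣ} {s : M → ℤˣ} {K : Set M} (h : G.IsColoringNear z s K)
    (ε : ℤˣ) : G.IsColoringNear z (fun y => ε * s y) K := by
  filter_upwards [h] with x hx hverts
  exact one_mul z ▸ (isColoringAt_const ε x).mul (hx hverts)

variable [T2Space M] [ChartedSpace ℂ M]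

lemma exists_eventually_eq_of_isColoringAt_one {s : M → ℤˣ} {x : M}
    (h : ∀ᶠ y in 𝓝 x, y ∉ G.verts → G.IsColoringAt 1 s y) :
    ∃ c, ∀ᶠ y in 𝓝[G.carrierᶜ] x, s y = c := by
  have hs : ∀ y, G.IsColoringAt 1 s y → ∃ c, ∀ᶠ w in 𝓝[G.carrierᶜ] y, s w = c := fun y hy => by
    simpa only [IsColoringAt, jump_one, one_mul] using hy
  by_cases hx : x ∈ G.verts
  · have hcol : {y | G.IsColoringAt 1 s y} ∈ 𝓝[≠] x := by
      filter_upwards [nhdsWithin_le_nhds h, G.eventually_notMem_verts_punctured x] with y h1 h2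
        using h1 h2
    obtain ⟨B, hBcol, hB, hBconn⟩ := exists_isPreconnected_mem_punctured hcol
    obtain ⟨c, hc⟩ := exists_eventually_nhdsSet_eq hBconn
      (fun y _ => G.nhdsWithin_compl_carrier_neBot_of_chartedSpace y) fun y hy => hs y (hBcol hy)
    have hle : 𝓝[G.carrierᶜ] x ≤ 𝓝[≠] x :=
      nhdsWithin_mono x fun y hy => by rintro rfl; exact hy (G.verts_subset_carrier hx)
    refine ⟨c, ?_⟩
    filter_upwards [hle hB, self_mem_nhdsWithin] with y hyB hy
    exact (eventually_nhdsSet_iff_forall.1 hc y hyB).self_of_nhds hy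
  · exact hs x (h.self_of_nhds hx)

variable {G}

lemma IsColoringNear.exists_eventually_eq_mul {z : ι → ℤˣ} {s s' : M → ℤˣ} {B : Set M}
    (h : G.IsColoringNear z s B) (h' : G.IsColoringNear z s' B) (hB : IsPreconnected B) :
    ∃ ε : ℤˣ, ∀ᶠ y in 𝓝ˢ B, y ∉ G.carrier → s y = ε * s' y := by
  have hzz : z * z = 1 := funext fun i => Int.units_mul_self (z i)
  have hone : ∀ᶠ y in 𝓝ˢ B, y ∉ G.verts → G.IsColoringAt 1 (s * s') y := by
    filter_upwards [h, h'] with y hy hy' hverts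
    exact hzz ▸ (hy hverts).mul (hy' hverts)
  obtain ⟨ε, hε⟩ := exists_eventually_nhdsSet_eq hB
    (fun y _ => G.nhdsWithin_compl_carrier_neBot_of_chartedSpace y) fun y hy =>
      G.exists_eventually_eq_of_isColoringAt_one (eventually_nhdsSet_iff_forall.1 hone y hy)
  refine ⟨ε, hε.mono fun y hy hyG => ?_⟩
  rw [← hy hyG, Pi.mul_apply, mul_assoc, Int.units_mul_self, mul_one]

lemma ColorableNear.union {z : ι → ℤˣ} {K L : Set M} (hK : IsCompact K) (hL : IsCompact L)
    (hKL : IsPreconnected (K ∩ L)) (h : G.ColorableNear z K) (h' : G.ColorableNear z L) :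
    G.ColorableNear z (K ∪ L) := by
  classical
  obtain ⟨s, hs⟩ := h
  obtain ⟨s', hs'⟩ := h'
  obtain ⟨ε, hε⟩ := IsColoringNear.exists_eventually_eq_mul
    (hs.filter_mono (nhdsSet_mono inter_subset_left))
    (hs'.filter_mono (nhdsSet_mono inter_subset_right)) hKL
  rw [hK.nhdsSet_inter_eq hL] at hε
  obtain ⟨U, hU, V, hV, hUV⟩ := mem_inf_iff_superset.1 hε
  refine ⟨fun y => if y ∈ U then s y else ε * s' y, ?_⟩
  rw [IsColoringNear, nhdsSet_union, eventually_sup]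
  refine ⟨hs.congr ?_, (hs'.const_mul ε).congr ?_⟩
  · filter_upwards [hU] with y hy _ using (if_pos hy).symm
  · filter_upwards [hV] with y hyV hy
    split_ifs with hyU
    exacts [(hUV ⟨hyU, hyV⟩ hy).symm, rfl]

open unitInterval in
lemma colorableNear_image_prod_singleton {z : ι → ℤˣ} (h : ∀ x, G.ColorableNear z {x})
    {F : I × I → M} (hF : Continuous F) (hinj : F.Injective) (q : I) :
    G.ColorableNear z (F '' (univ ×ˢ {q})) := by
  have hlocal : ∀ p : I, ∃ U ∈ 𝓝 p, ∀ a b, Icc a b ⊆ U →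
      G.ColorableNear z (F '' (Icc a b ×ˢ {q})) := fun p => by
    obtain ⟨U, hU, hpU, hcol⟩ := (h (F (p, q))).exists_isOpen
    refine ⟨{p' | F (p', q) ∈ U}, (hU.preimage (by fun_prop)).mem_nhds (hpU rfl), ?_⟩
    rintro a b hab
    refine hcol.mono (image_subset_iff.2 ?_)
    rintro ⟨p', _⟩ ⟨hp', rfl⟩
    exact hab hp'
  have hglue : ∀ a b c : I, a ≤ b → b ≤ c → G.ColorableNear z (F '' (Icc a b ×ˢ {q})) →
      G.ColorableNear z (F '' (Icc b c ×ˢ {q})) → G.ColorableNear z (F '' (Icc a c ×ˢ {q})) := by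
    intro a b c hab hbc hcol hcol'
    rw [← Icc_union_Icc_eq_Icc hab hbc, union_prod, image_union]
    refine hcol.union ((isCompact_Icc.prod isCompact_singleton).image hF)
      ((isCompact_Icc.prod isCompact_singleton).image hF) ?_ hcol'
    rw [← image_inter hinj, ← inter_prod, Icc_inter_Icc]
    exact (isPreconnected_Icc.prod isPreconnected_singleton).image F hF.continuousOn
  have huniv : Icc (0 : I) 1 = univ := Icc_bot_top
  exact huniv ▸ unitInterval_induction hlocal hglue

open unitInterval in
lemma colorableNear_range_square {z : ι → ℤˣ} (h : ∀ x, G.ColorableNear z {x})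
    {F : I × I → M} (hF : Continuous F) (hinj : F.Injective) : G.ColorableNear z (range F) := by
  have hlocal : ∀ q : I, ∃ U ∈ 𝓝 q, ∀ a b, Icc a b ⊆ U →
      G.ColorableNear z (F '' (univ ×ˢ Icc a b)) := fun q => by
    obtain ⟨U, hU, hqU, hcol⟩ :=
      (colorableNear_image_prod_singleton h hF hinj q).exists_isOpen
    obtain ⟨u, v, -, hv, hu, hqv, huv⟩ := generalized_tube_lemma isCompact_univ
      isCompact_singleton (hU.preimage hF) (image_subset_iff.1 hqU)
    exact ⟨v, hv.mem_nhds (hqv rfl), fun a b hab => hcol.mono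
      (image_subset_iff.2 ((prod_mono hu hab).trans huv))⟩
  have hglue : ∀ a b c : I, a ≤ b → b ≤ c → G.ColorableNear z (F '' (univ ×ˢ Icc a b)) →
      G.ColorableNear z (F '' (univ ×ˢ Icc b c)) → G.ColorableNear z (F '' (univ ×ˢ Icc a c)) := by
    intro a b c hab hbc hcol hcol'
    rw [← Icc_union_Icc_eq_Icc hab hbc, prod_union, image_union]
    refine hcol.union ((isCompact_univ.prod isCompact_Icc).image hF)
      ((isCompact_univ.prod isCompact_Icc).image hF) ?_ hcol'
    rw [← image_inter hinj, ← prod_inter, Icc_inter_Icc]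
    exact (isPreconnected_univ.prod isPreconnected_Icc).image F hF.continuousOn
  have huniv : Icc (0 : I) 1 = univ := Icc_bot_top
  have hrange : range F = F '' (univ ×ˢ Icc 0 1) := by rw [huniv, univ_prod_univ, image_univ]
  exact hrange ▸ unitInterval_induction hlocal hglue

end ArcGraph

/-! ### Finiteness of the cycles modulo boundaries -/

open unitInterval in
lemma exists_square_mem_nhds {M : Type*} [TopologicalSpace M] [ChartedSpace ℂ M] (x : M) :
    ∃ F : I × I → M, Continuous F ∧ F.Injective ∧ range F ∈ 𝓝 x := by
  set χ := chartAt ℂ x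
  set Ψ : ℝ × ℝ → M := fun p => χ.symm (Complex.equivRealProdCLM.symm p)
  set p₀ := Complex.equivRealProdCLM (χ x)
  have htarget : Complex.equivRealProdCLM.symm ⁻¹' χ.target ∈ 𝓝 p₀ :=
    Complex.equivRealProdCLM.symm.continuous.continuousAt.preimage_mem_nhds
      (by rw [ContinuousLinearEquiv.symm_apply_apply]
          exact χ.open_target.mem_nhds (mem_chart_target ℂ x))
  obtain ⟨r, hr, hball⟩ := Metric.nhds_basis_closedBall.mem_iff.1 htarget
  rw [← closedBall_prod_same, Real.closedBall_eq_Icc, Real.closedBall_eq_Icc] at hball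
  set e : ∀ t : ℝ, Icc (t - r) (t + r) ≃ₜ I := fun t => iccHomeoI _ _ (by linarith)
  set g : I × I → ℝ × ℝ := fun q => ((e p₀.1).symm q.1, (e p₀.2).symm q.2)
  have hg : ∀ q, Complex.equivRealProdCLM.symm (g q) ∈ χ.target := fun q =>
    hball ⟨((e p₀.1).symm q.1).2, ((e p₀.2).symm q.2).2⟩
  have hginj : g.Injective := fun q q' h => Prod.ext
    ((e p₀.1).symm.injective (Subtype.ext (congrArg Prod.fst h)))
    ((e p₀.2).symm.injective (Subtype.ext (congrArg Prod.snd h)))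
  refine ⟨fun q => Ψ (g q), χ.continuousOn_symm.comp_continuous (by fun_prop) hg, fun q q' h =>
    hginj (Complex.equivRealProdCLM.symm.injective (χ.symm.injOn (hg q) (hg q') h)), ?_⟩
  have hsquare : ∀ᶠ y in 𝓝 x, Complex.equivRealProdCLM (χ y) ∈ Metric.closedBall p₀ r :=
    (Complex.equivRealProdCLM.continuous.continuousAt.comp
      (χ.continuousAt (mem_chart_source ℂ x))).eventually_mem (Metric.closedBall_mem_nhds _ hr)
  filter_upwards [hsquare, χ.open_source.mem_nhds (mem_chart_source ℂ x)] with y hy hsource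
  rw [← closedBall_prod_same, Real.closedBall_eq_Icc, Real.closedBall_eq_Icc] at hy
  refine ⟨(e p₀.1 ⟨_, hy.1⟩, e p₀.2 ⟨_, hy.2⟩), ?_⟩
  simp only [g, Ψ, Homeomorph.symm_apply_apply, Prod.mk.eta, ContinuousLinearEquiv.symm_apply_apply,
    χ.left_inv hsource]

lemma card_le_mul_card_of_mul_inv_mem {H E : Type*} [Group H] [Finite H] [Finite E] {S T : Set H}
    (ε : S → E) (h : ∀ z z' : S, ε z = ε z' → (z : H) * (z' : H)⁻¹ ∈ T) :
    Nat.card S ≤ Nat.card E * Nat.card T := by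
  let rep : S → S := fun z => rangeSplitting ε ⟨ε z, mem_range_self z⟩
  have hrep : ∀ z, ε z = ε (rep z) := fun z => (apply_rangeSplitting ε ⟨ε z, _⟩).symm
  rw [← Nat.card_prod]
  refine Nat.card_le_card_of_injective (β := E × T)
    (fun z => (ε z, ⟨z * (rep z : H)⁻¹, h z _ (hrep z)⟩)) fun z z' hzz => ?_
  simp only [Prod.mk.injEq, Subtype.mk.injEq] at hzz
  have hreps : rep z = rep z' := congrArg (rangeSplitting ε) (Subtype.ext hzz.1)
  exact Subtype.ext (mul_right_cancel (hreps ▸ hzz.2))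

/-- Cycles modulo boundaries have dimension at most `w` over `ℤ/2`, for all finite graphs in `M`;
this stands in for a bound on `dim H₁(M; ℤ/2)`. -/
def HomologyRankLE (M : Type*) [TopologicalSpace M] (w : ℕ) : Prop :=
  ∀ (ι : Type) [Fintype ι] (G : ArcGraph M ι),
    Nat.card {z // G.IsCycle z} ≤ 2 ^ w * Nat.card {z // G.IsBoundary z}

namespace ArcGraph
variable {M : Type*} [TopologicalSpace M] {ι : Type} [Fintype ι] {G : ArcGraph M ι}

lemma isBoundary_of_forall_agree {z : ι → ℤˣ} {α : Type*} {K : α → Set M} {t : α → M → ℤˣ}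
    (hcover : ∀ x, ∃ a, K a ∈ 𝓝 x) (ht : ∀ a, G.IsColoringNear z (t a) (K a))
    (hagree : ∀ a b, ∀ y ∈ K a ∩ K b, y ∉ G.carrier → t a y = t b y) : G.IsBoundary z := by
  choose a ha using hcover
  refine G.isBoundary_iff.2 ⟨fun y => t (a y) y, fun x hx => ?_⟩
  refine ((eventually_nhdsSet_iff_forall.1 (ht (a x)) x (mem_of_mem_nhds (ha x))).self_of_nhds
    hx).congr ?_
  filter_upwards [nhdsWithin_le_nhds (ha x), self_mem_nhdsWithin] with y hyK hy
  exact hagree _ _ y ⟨hyK, mem_of_mem_nhds (ha y)⟩ hy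

lemma IsColoringNear.mul {z z' : ι → ℤˣ} {s s' : M → ℤˣ} {K : Set M}
    (h : G.IsColoringNear z s K) (h' : G.IsColoringNear z' s' K) :
    G.IsColoringNear (z * z') (s * s') K := by
  filter_upwards [h, h'] with x hx hx' hverts using (hx hverts).mul (hx' hverts)

end ArcGraph

lemma homologyRankLE_of_cover {M : Type*} [TopologicalSpace M] [T2Space M] [ChartedSpace ℂ M]
    {α β : Type*} [Finite β] {K L : α → Set M} {B : β → Set M} {p q : β → α}
    (hcover : ∀ x, ∃ a, K a ∈ 𝓝 x) (hB : ∀ i, IsPreconnected (B i))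
    (hBL : ∀ i, B i ⊆ L (p i) ∩ L (q i))
    (hKB : ∀ a b, ∀ y ∈ K a ∩ K b, ∃ i, p i = a ∧ q i = b ∧ y ∈ B i)
    (hcol : ∀ (ι : Type) [Fintype ι] (G : ArcGraph M ι) (z : ι → ℤˣ), G.IsCycle z →
      ∀ a, G.ColorableNear z (L a)) : HomologyRankLE M (Nat.card β) := by
  intro ι _ G
  have hKL : ∀ a, K a ⊆ L a := fun a y hy => by
    obtain ⟨i, rfl, -, hyB⟩ := hKB a a y ⟨hy, hy⟩
    exact (hBL i hyB).1
  choose s hs using fun z : {z // G.IsCycle z} => hcol ι G z z.2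
  have htransition : ∀ z i, ∃ ε : ℤˣ, ∀ᶠ y in 𝓝ˢ (B i),
      y ∉ G.carrier → s z (p i) y = ε * s z (q i) y := fun z i =>
    ArcGraph.IsColoringNear.exists_eventually_eq_mul
      ((hs z _).filter_mono (nhdsSet_mono fun y hy => (hBL i hy).1))
      ((hs z _).filter_mono (nhdsSet_mono fun y hy => (hBL i hy).2)) (hB i)
  choose ε hε using htransition
  refine (card_le_mul_card_of_mul_inv_mem (T := {z | G.IsBoundary z}) ε
    fun z z' hzz => ?_).trans_eq ?_
  · have hinv : (z' : ι → ℤˣ)⁻¹ = z' := funext fun i => Int.units_inv_eq_self _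
    refine hinv ▸ ArcGraph.isBoundary_of_forall_agree hcover
      (fun a => ((hs z a).mul (hs z' a)).filter_mono (nhdsSet_mono (hKL a))) ?_
    intro a b y hy hyG
    obtain ⟨i, rfl, rfl, hyB⟩ := hKB a b y hy
    have heq := fun z => subset_of_mem_nhdsSet (hε z i) hyB hyG
    rw [Pi.mul_apply, heq z, heq z', hzz, mul_mul_mul_comm, Int.units_mul_self, one_mul,
      Pi.mul_apply]
  · rw [Nat.card_fun, Nat.card_eq_fintype_card, Fintype.card_units_int]
    rfl

lemma exists_finset_subset_iUnion_connectedComponentIn {M : Type*} [TopologicalSpace M]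
    [LocallyConnectedSpace M] {K U : Set M} (hK : IsCompact K) (hU : IsOpen U) (hKU : K ⊆ U) :
    ∃ P : Finset M, K ⊆ ⋃ p ∈ P, connectedComponentIn U p := by
  obtain ⟨P, -, hP⟩ := hK.elim_nhds_subcover (connectedComponentIn U) fun y hy =>
    hU.connectedComponentIn.mem_nhds (mem_connectedComponentIn (hKU hy))
  exact ⟨P, hP⟩

lemma exists_homologyRankLE (M : Type*) [TopologicalSpace M] [T2Space M] [CompactSpace M]
    [ChartedSpace ℂ M] : ∃ w, HomologyRankLE M w := by
  have := ChartedSpace.locallyConnectedSpace ℂ M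
  choose F hF hFinj hFx using exists_square_mem_nhds (M := M)
  have hL : ∀ x, IsOpen (interior (range (F x))) := fun x => isOpen_interior
  choose K hKcompact hxK hKL using fun x =>
    exists_compact_subset (hL x) (mem_interior_iff_mem_nhds.2 (hFx x))
  obtain ⟨T, hT⟩ := CompactSpace.elim_nhds_subcover (fun x => interior (K x))
    fun x => isOpen_interior.mem_nhds (hxK x)
  have hpieces : ∀ a b, ∃ P : Finset M, K a ∩ K b ⊆
      ⋃ c ∈ P, connectedComponentIn (interior (range (F a)) ∩ interior (range (F b))) c :=
    fun a b => exists_finset_subset_iUnion_connectedComponentIn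
      ((hKcompact a).inter (hKcompact b)) ((hL a).inter (hL b))
      (inter_subset_inter (hKL a) (hKL b))
  choose P hP using hpieces
  let β : Type _ := (ab : T × T) × {c // c ∈ P ab.1 ab.2}
  refine ⟨Nat.card β, homologyRankLE_of_cover (K := fun a : T => K a)
    (B := fun i : β => connectedComponentIn
      (interior (range (F i.1.1)) ∩ interior (range (F i.1.2))) i.2)
    (L := fun a : T => interior (range (F a))) (p := fun i => i.1.1) (q := fun i => i.1.2)
    ?_ (fun _ => isPreconnected_connectedComponentIn) (fun _ => connectedComponentIn_subset _ _)
    ?_ fun ι _ G z hz a => (ArcGraph.colorableNear_range_square hz.colorableNear_singleton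
      (hF a) (hFinj a)).mono interior_subset⟩
  · intro x
    obtain ⟨a, ha, hxa⟩ := mem_iUnion₂.1 (hT.ge (mem_univ x))
    exact ⟨⟨a, ha⟩, mem_interior_iff_mem_nhds.1 hxa⟩
  · intro a b y hy
    obtain ⟨c, hc, hyc⟩ := mem_iUnion₂.1 (hP a b hy)
    exact ⟨⟨(a, b), c, hc⟩, rfl, rfl, hyc⟩

/-! ### Faces and the Euler bound -/

lemma FlatArc.frequently_im_chart_mem {M : Type*} [TopologicalSpace M] (e : FlatArc M) {x : M}
    (hx : x ∈ e.openArc) {A : Set ℝ} (hA : (0 : ℝ) ∈ closure A) :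
    ∃ᶠ y in 𝓝 x, (e.chart y).im ∈ A := by
  rwa [mem_closure_iff_frequently, ← e.map_im_chart_nhds hx, frequently_map] at hA

lemma FlatArc.openArc_nonempty {M : Type*} [TopologicalSpace M] (e : FlatArc M) :
    e.openArc.Nonempty :=
  (nonempty_Ioo.2 zero_lt_one).image _

namespace ArcGraph
variable {M : Type*} [TopologicalSpace M] {ι : Type} (G : ArcGraph M ι)

/-- The face of `G` containing `y`; empty when `y` lies on `G`. -/
def face (y : M) : Set M := connectedComponentIn G.carrierᶜ y

variable {G} in
lemma face_eq_of_isPreconnected {B : Set M} (hB : IsPreconnected B) (hBG : B ⊆ G.carrierᶜ)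
    {x y : M} (hx : x ∈ B) (hy : y ∈ B) : G.face x = G.face y :=
  connectedComponentIn_eq (hB.subset_connectedComponentIn hx hBG hy)

section Finite
variable [Finite ι] [T2Space M]

lemma exists_eventually_face_eq_of_mem_openArc {i : ι} {x : M} (hx : x ∈ (G.arc i).openArc)
    {A : Set ℝ} (hA : Convex ℝ A) (h0 : (0 : ℝ) ∉ A) (hcl : (0 : ℝ) ∈ closure A) :
    ∃ f, ∀ᶠ y in 𝓝[{y | ((G.arc i).chart y).im ∈ A}] x, G.face y = f := by
  set χ := (G.arc i).chart
  have hxsource : x ∈ χ.source := (G.arc i).openArc_subset_source hx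
  have hsymm : Tendsto χ.symm (𝓝 (χ x)) (𝓝 x) := 
    (congrArg 𝓝 (χ.left_inv hxsource)) ▸ χ.continuousAt_symm (χ.map_source hxsource)
  obtain ⟨r, hr, hball⟩ := Metric.eventually_nhds_iff_ball.1
    ((χ.open_target.eventually_mem (χ.map_source hxsource)).and
      (hsymm.eventually (G.eventually_carrier_iff hx)))
  set B := χ.symm '' (Metric.ball (χ x) r ∩ Complex.imLm ⁻¹' A)
  have hB : IsPreconnected B := (((convex_ball _ _).inter
    (hA.linear_preimage Complex.imLm)).isPreconnected).image _
      (χ.continuousOn_symm.mono fun w hw => (hball w hw.1).1)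
  have hBG : B ⊆ G.carrierᶜ := by
    rintro _ ⟨w, ⟨hw, hwA⟩, rfl⟩ hcarrier
    have him := (hball w hw).2.2.1 hcarrier
    rw [χ.right_inv (hball w hw).1] at him
    exact h0 (him ▸ hwA)
  have hnear : ∀ᶠ y in 𝓝 x, (χ y).im ∈ A → y ∈ B := by
    filter_upwards [χ.open_source.mem_nhds hxsource,
      (χ.continuousAt hxsource).eventually_mem (Metric.ball_mem_nhds _ hr)] with y hy hyr hyA
    exact ⟨χ y, ⟨hyr, hyA⟩, χ.left_inv hy⟩
  obtain ⟨y₀, hy₀A, hy₀⟩ := ((((G.arc i).frequently_im_chart_mem hx hcl).and_eventually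
    hnear)).exists
  refine ⟨G.face y₀, eventually_nhdsWithin_iff.2 ?_⟩
  filter_upwards [hnear] with y hy hyA
  exact face_eq_of_isPreconnected hB hBG (hy hyA) (hy₀ hy₀A)

lemma exists_eventually_face_eq (i : ι) {A : Set ℝ} (hA : Convex ℝ A) (h0 : (0 : ℝ) ∉ A)
    (hcl : (0 : ℝ) ∈ closure A) :
    ∃ f, ∀ᶠ y in 𝓝ˢ (G.arc i).openArc, ((G.arc i).chart y).im ∈ A → G.face y = f :=
  exists_eventually_nhdsSet_eq (G.arc i).isPreconnected_openArc
    (fun _ hx => frequently_mem_iff_neBot.1 ((G.arc i).frequently_im_chart_mem hx hcl))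
    fun _ hx => G.exists_eventually_face_eq_of_mem_openArc hx hA h0 hcl

/-- The face of `G` on the side of the edge `i` where its chart has positive imaginary part. -/
noncomputable def leftFace (i : ι) : Set M :=
  (G.exists_eventually_face_eq i (convex_Ioi 0) self_notMem_Ioi (by simp)).choose

/-- The face of `G` on the side of the edge `i` where its chart has negative imaginary part. -/
noncomputable def rightFace (i : ι) : Set M :=
  (G.exists_eventually_face_eq i (convex_Iio 0) self_notMem_Iio (by simp)).choose

variable {G}

lemma eventually_face_eq_leftFace {i : ι} {x : M} (hx : x ∈ (G.arc i).openArc) :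
    ∀ᶠ y in 𝓝 x, 0 < ((G.arc i).chart y).im → G.face y = G.leftFace i :=
  eventually_nhdsSet_iff_forall.1 (G.exists_eventually_face_eq i (convex_Ioi 0) self_notMem_Ioi
    (by simp)).choose_spec x hx

lemma eventually_face_eq_rightFace {i : ι} {x : M} (hx : x ∈ (G.arc i).openArc) :
    ∀ᶠ y in 𝓝 x, ((G.arc i).chart y).im < 0 → G.face y = G.rightFace i :=
  eventually_nhdsSet_iff_forall.1 (G.exists_eventually_face_eq i (convex_Iio 0) self_notMem_Iio
    (by simp)).choose_spec x hx

lemma eventually_face_eq_of_notMem_carrier [LocallyConnectedSpace M] {x : M} (hx : x ∉ G.carrier) :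
    ∀ᶠ y in 𝓝 x, G.face y = G.face x :=
  mem_of_superset (G.isClosed_carrier.isOpen_compl.connectedComponentIn.mem_nhds
    (mem_connectedComponentIn hx)) fun _ hy => (connectedComponentIn_eq hy).symm

end Finite

variable [Fintype ι] {G}

lemma exists_eq_face_of_isColoringAt {z : ι → ℤˣ} {s : M → ℤˣ}
    (hs : ∀ x ∉ G.verts, G.IsColoringAt z s x) :
    ∃ h : Set M → ℤˣ, ∀ y ∉ G.carrier, s y = h (G.face y) := by
  have hfactor : Function.FactorsThrough (fun y : ↥G.carrierᶜ => s y) fun y => G.face y := by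
    intro x y hxy
    obtain ⟨c, hc⟩ := exists_eventually_nhdsSet_eq (B := G.face y) (Q := G.carrierᶜ) (s := s)
      isPreconnected_connectedComponentIn
      (fun u hu => mem_closure_iff_nhdsWithin_neBot.1
        (subset_closure (connectedComponentIn_subset _ _ hu))) fun u hu => by
        have hu' : u ∉ G.carrier := connectedComponentIn_subset _ _ hu
        obtain ⟨c, hc⟩ := hs u fun hv => hu' (G.verts_subset_carrier hv)
        simp only [G.jump_of_notMem_carrier z hu', one_mul] at hc
        exact ⟨c, hc⟩
    have hc' : ∀ u : ↥G.carrierᶜ, (u : M) ∈ G.face y → s u = c := fun u hu =>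
      subset_of_mem_nhdsSet hc hu u.2
    have hface : G.face x = G.face y := hxy
    exact (hc' x (hface ▸ mem_connectedComponentIn x.2)).trans
      (hc' y (mem_connectedComponentIn y.2)).symm
  exact ⟨Function.extend (fun y : ↥G.carrierᶜ => G.face y) (fun y => s y) 1,
    fun y hy => (hfactor.extend_apply 1 ⟨y, hy⟩).symm⟩

variable [T2Space M]

lemma IsBoundary.exists_eq_leftFace_mul_rightFace {z : ι → ℤˣ} (hz : G.IsBoundary z) :
    ∃ h : Set M → ℤˣ, ∀ i, z i = h (G.leftFace i) * h (G.rightFace i) := by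
  obtain ⟨s, hs⟩ := G.isBoundary_iff.1 hz
  obtain ⟨h, hh⟩ := exists_eq_face_of_isColoringAt hs
  refine ⟨h, fun i => ?_⟩
  obtain ⟨x, hx⟩ := (G.arc i).openArc_nonempty
  obtain ⟨c, hc⟩ := hs x (G.notMem_verts i x hx)
  have hoff : ∀ᶠ y in 𝓝 x, ((G.arc i).chart y).im ≠ 0 → G.jump z x y * h (G.face y) = c := by
    filter_upwards [eventually_nhdsWithin_iff.1 hc, G.eventually_carrier_iff hx] with y hy hyG him
    have hycarrier : y ∉ G.carrier := fun hcarrier => him (hyG.2.1 hcarrier)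
    rw [← hh y hycarrier, hy hycarrier]
  have hleft : h (G.leftFace i) = c := by
    obtain ⟨y, hpos, hface, hy⟩ := (((G.arc i).frequently_im_chart_mem hx
      (A := Ioi 0) (by simp)).and_eventually ((eventually_face_eq_leftFace hx).and hoff)).exists
    rw [← hface hpos, ← hy hpos.ne', G.jump_of_mem_openArc z hx, if_neg hpos.not_gt, one_mul]
  have hright : z i * h (G.rightFace i) = c := by
    obtain ⟨y, hneg, hface, hy⟩ := (((G.arc i).frequently_im_chart_mem hx
      (A := Iio 0) (by simp)).and_eventually ((eventually_face_eq_rightFace hx).and hoff)).exists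
    rw [← hface hneg, ← hy hneg.ne, G.jump_of_mem_openArc z hx, if_pos (mem_Iio.1 hneg)]
  rw [hleft, ← hright, mul_assoc, Int.units_mul_self, mul_one]

open Classical in
variable (G) in
/-- The boundary mod 2 of the face `f`: negative on the edges with `f` on exactly one side. -/
noncomputable def faceBoundary (f : Set M) (i : ι) : ℤˣ :=
  (if G.leftFace i = f then -1 else 1) * if G.rightFace i = f then -1 else 1

lemma isBoundary_faceBoundary [LocallyConnectedSpace M] (f : Set M) :
    G.IsBoundary (G.faceBoundary f) := by
  classical
  refine G.isBoundary_iff.2 ⟨fun y => if G.face y = f then -1 else 1, fun x hx => ?_⟩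
  rcases em (x ∈ G.carrier) with (hv | ⟨i, hi⟩) | hxG
  · exact absurd hv hx
  · refine ⟨if G.leftFace i = f then -1 else 1, eventually_nhdsWithin_iff.2 ?_⟩
    filter_upwards [eventually_face_eq_leftFace hi, eventually_face_eq_rightFace hi,
      G.eventually_carrier_iff hi] with y hleft hright hcarrier hy
    rw [G.jump_of_mem_openArc _ hi]
    rcases lt_or_gt_of_ne fun him => hy (hcarrier.2.2 him) with hneg | hpos
    · rw [if_pos hneg, hright hneg, faceBoundary, mul_assoc, Int.units_mul_self, mul_one]
    · rw [if_neg hpos.not_gt, hleft hpos, one_mul]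
  · refine ⟨if G.face x = f then -1 else 1, ?_⟩
    filter_upwards [nhdsWithin_le_nhds (eventually_face_eq_of_notMem_carrier hxG)] with y hy
    rw [G.jump_of_notMem_carrier _ hxG, one_mul, hy]

end ArcGraph

lemma card_units_int_fun (α : Type*) [Finite α] : Nat.card (α → ℤˣ) = 2 ^ Nat.card α := by
  rw [Nat.card_fun, Nat.card_eq_fintype_card, Fintype.card_units_int]

namespace ArcGraph
variable {M : Type*} [TopologicalSpace M] {ι : Type} (G : ArcGraph M ι)

/-- The edge `i` joins vertices with different labels. -/
def IsCrossing {𝒟 : Type*} (lab : M → 𝒟) (i : ι) : Prop := lab (G.arc i).src ≠ lab (G.arc i).tgt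

/-- The unordered pair of labels of the end points of the edge `i`. -/
noncomputable def labelPair {𝒟 : Type*} (lab : M → 𝒟) (i : ι) : Sym2 𝒟 :=
  s(lab (G.arc i).src, lab (G.arc i).tgt)

/-- The label pairs of the crossing edges: the edges of the graph on `𝒟` obtained from `G` by
contracting each label class to a point. -/
def crossingPairs {𝒟 : Type*} (lab : M → 𝒟) : Set (Sym2 𝒟) :=
  G.labelPair lab '' {i | G.IsCrossing lab i}

variable [Fintype ι]

/-- Contracting the edges that do not cross turns `G` into a simple graph with vertex set `𝒟`, and
the contracted edges form a forest whose trees correspond to the labels. The last two fields say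
this homologically: a cycle is determined by its signs on the crossing edges, and the Euler
characteristic does not change. -/
structure IsSimpleContraction {𝒟 : Type*} (lab : M → 𝒟) : Prop where
  injOn : InjOn (G.labelPair lab) {i | G.IsCrossing lab i}
  eq_one : ∀ z, G.IsCycle z → (∀ i, G.IsCrossing lab i → z i = 1) → z = 1
  card_add : Nat.card ι + Nat.card 𝒟 = G.verts.card + (G.crossingPairs lab).ncard

lemma vertexSign_mul (z z' : ι → ℤˣ) (v : M) :
    G.vertexSign (z * z') v = G.vertexSign z v * G.vertexSign z' v := by
  simp only [vertexSign, ← Finset.prod_mul_distrib, ite_mul_ite, Pi.mul_apply, mul_one]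

variable {G} in
lemma IsCycle.mul {z z' : ι → ℤˣ} (h : G.IsCycle z) (h' : G.IsCycle z') : G.IsCycle (z * z') :=
  fun v hv => by rw [vertexSign_mul, h v hv, h' v hv, one_mul]

lemma two_pow_card_le_mul_card_isCycle :
    2 ^ Nat.card ι ≤ 2 ^ G.verts.card * Nat.card {z // G.IsCycle z} := by
  have hE : Nat.card (G.verts → ℤˣ) = 2 ^ G.verts.card := by
    rw [card_units_int_fun, Nat.card_eq_finsetCard]
  rw [← card_units_int_fun ι, ← hE, ← Nat.card_univ]
  refine card_le_mul_card_of_mul_inv_mem (T := {z | G.IsCycle z})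
    (fun z v => G.vertexSign z v) fun z z' hzz v hv => ?_
  have hinv : (z' : ι → ℤˣ)⁻¹ = z' := funext fun i => Int.units_inv_eq_self _
  have hv' : G.vertexSign z v = G.vertexSign z' v := congrFun hzz ⟨v, hv⟩
  rw [hinv, vertexSign_mul, hv', Int.units_mul_self]

variable {G}

open Classical in
lemma IsCycle.prod_cut {z : ι → ℤˣ} (hz : G.IsCycle z) (D : Set M) :
    ∏ i with ¬((G.arc i).src ∈ D ↔ (G.arc i).tgt ∈ D), z i = 1 := by
  have hD : ∏ v ∈ G.verts with v ∈ D, G.vertexSign z v = 1 :=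
    Finset.prod_eq_one fun v hv => hz v (Finset.mem_filter.1 hv).1
  simp only [vertexSign] at hD
  rw [← hD, Finset.prod_comm, Finset.prod_filter]
  refine Finset.prod_congr rfl fun i _ => ?_
  have hsplit : ∀ v, (if G.IsEndpoint v i then z i else 1) =
      (if (G.arc i).src = v then z i else 1) * if (G.arc i).tgt = v then z i else 1 := fun v => by
    have hne := (G.arc i).src_ne_tgt
    by_cases hsrc : (G.arc i).src = v <;> by_cases htgt : (G.arc i).tgt = v <;>
      simp_all [IsEndpoint]
  simp only [hsplit, Finset.prod_mul_distrib, Finset.prod_ite_eq, Finset.mem_filter, G.src_mem,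
    G.tgt_mem, true_and]
  by_cases hsrc : (G.arc i).src ∈ D <;> by_cases htgt : (G.arc i).tgt ∈ D <;>
    simp [hsrc, htgt, Int.units_mul_self]

lemma IsCycle.exists_ne_of_cut {z : ι → ℤˣ} (hz : G.IsCycle z) {D : Set M} {i : ι}
    (hi : ¬((G.arc i).src ∈ D ↔ (G.arc i).tgt ∈ D)) (hzi : z i = -1) :
    ∃ j ≠ i, ¬((G.arc j).src ∈ D ↔ (G.arc j).tgt ∈ D) ∧ z j = -1 := by
  classical
  by_contra hcon
  have hprod := hz.prod_cut D
  rw [Finset.prod_eq_single_of_mem i (Finset.mem_filter.2 ⟨Finset.mem_univ i, hi⟩)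
    fun j hj hji => (Int.units_eq_one_or _).resolve_right fun hzj =>
      hcon ⟨j, hji, (Finset.mem_filter.1 hj).2, hzj⟩, hzi] at hprod
  exact absurd hprod (by decide)

open Classical in
lemma IsCycle.three_le_card_crossing {𝒟 : Type*} {lab : M → 𝒟} {z : ι → ℤˣ} (hz : G.IsCycle z)
    (hsimple : InjOn (G.labelPair lab) {i | G.IsCrossing lab i})
    {i : ι} (hi : G.IsCrossing lab i) (hzi : z i = -1) :
    3 ≤ Finset.card {j | G.IsCrossing lab j ∧ z j = -1} := by
  have hcut : ∀ d j, ¬((G.arc j).src ∈ lab ⁻¹' {d} ↔ (G.arc j).tgt ∈ lab ⁻¹' {d}) ↔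
      G.IsCrossing lab j ∧ d ∈ G.labelPair lab j := fun d j => by
    simp only [mem_preimage, mem_singleton_iff, IsCrossing, labelPair, Sym2.mem_iff]
    grind
  have hother : ∀ d ∈ G.labelPair lab i, ∃ j ≠ i,
      (G.IsCrossing lab j ∧ d ∈ G.labelPair lab j) ∧ z j = -1 := by
    intro d hd
    simpa only [hcut] using hz.exists_ne_of_cut ((hcut d i).2 ⟨hi, hd⟩) hzi
  obtain ⟨j, hji, ⟨hj, hdj⟩, hzj⟩ := hother _ (Sym2.mem_mk_left _ _)
  obtain ⟨k, hki, ⟨hk, hdk⟩, hzk⟩ := hother _ (Sym2.mem_mk_right _ _)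
  have hjk : j ≠ k := by
    rintro rfl
    exact hji (hsimple hj hi ((Sym2.mem_and_mem_iff hi).1 ⟨hdj, hdk⟩))
  rw [← Finset.card_eq_three.2 ⟨i, j, k, hji.symm, hki.symm, hjk, rfl⟩]
  refine Finset.card_le_card fun l hl => ?_
  simp only [Finset.mem_insert, Finset.mem_singleton] at hl
  rcases hl with rfl | rfl | rfl
  exacts [Finset.mem_filter_univ _ |>.2 ⟨hi, hzi⟩, Finset.mem_filter_univ _ |>.2 ⟨hj, hzj⟩,
    Finset.mem_filter_univ _ |>.2 ⟨hk, hzk⟩]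

variable [T2Space M]

lemma faceBoundary_eq_neg_one_iff {f : Set M} {i : ι} :
    G.faceBoundary f i = -1 ↔ ¬(G.leftFace i = f ↔ G.rightFace i = f) := by
  by_cases hl : G.leftFace i = f <;> by_cases hr : G.rightFace i = f <;>
    simp [faceBoundary, hl, hr]

variable {𝒟 : Type*} {lab : M → 𝒟} [ChartedSpace ℂ M]

lemma three_mul_card_faces_le (hsimple : InjOn (G.labelPair lab) {i | G.IsCrossing lab i})
    {F : Finset (Set M)}
    (hF : ∀ f ∈ F, ∃ i, G.IsCrossing lab i ∧ G.faceBoundary f i = -1) :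
    F.card * 3 ≤ Nat.card {i // G.IsCrossing lab i} * 2 := by
  classical
  have := ChartedSpace.locallyConnectedSpace ℂ M
  rw [Nat.card_eq_fintype_card, Fintype.card_subtype]
  refine Finset.card_mul_le_card_mul (fun f i => G.faceBoundary f i = -1) (fun f hf => ?_)
    fun i _ => ?_
  · obtain ⟨i, hi, hfi⟩ := hF f hf
    rw [Finset.bipartiteAbove, Finset.filter_filter]
    exact (isBoundary_faceBoundary f).isCycle.three_le_card_crossing hsimple hi hfi
  · refine (Finset.card_le_card (t := {G.leftFace i, G.rightFace i}) fun f hf => ?_).trans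
      Finset.card_le_two
    have hfi := faceBoundary_eq_neg_one_iff.1 ((Finset.mem_bipartiteBelow _).1 hf).2
    simp only [Finset.mem_insert, Finset.mem_singleton]
    grind

lemma card_isBoundary_le {F : Finset (Set M)}
    (hF : ∀ i, G.IsCrossing lab i → G.leftFace i ≠ G.rightFace i →
      G.leftFace i ∈ F ∧ G.rightFace i ∈ F)
    (hindep : ∀ z, G.IsCycle z → (∀ i, G.IsCrossing lab i → z i = 1) → z = 1) :
    Nat.card {z // G.IsBoundary z} ≤ 2 ^ F.card := by
  choose h hh using fun z : {z // G.IsBoundary z} => z.2.exists_eq_leftFace_mul_rightFace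
  have hE : Nat.card (F → ℤˣ) * Nat.card ({1} : Set (ι → ℤˣ)) = 2 ^ F.card := by
    rw [card_units_int_fun, Nat.card_eq_finsetCard, Nat.card_unique, mul_one]
  rw [← hE]
  refine card_le_mul_card_of_mul_inv_mem (S := {z | G.IsBoundary z}) (fun z (f : F) => h z f)
    fun z z' hzz => hindep _ ?_ fun i hi => ?_
  all_goals have hinv : (z' : ι → ℤˣ)⁻¹ = z' := funext fun i => Int.units_inv_eq_self _
  · exact hinv ▸ z.2.isCycle.mul z'.2.isCycle
  · rw [hinv, Pi.mul_apply, hh z i, hh z' i]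
    by_cases hlr : G.leftFace i = G.rightFace i
    · rw [hlr, Int.units_mul_self, Int.units_mul_self, one_mul]
    · rw [congrFun hzz ⟨_, (hF i hi hlr).1⟩, congrFun hzz ⟨_, (hF i hi hlr).2⟩,
        Int.units_mul_self]

theorem IsSimpleContraction.ncard_crossingPairs_le (h : G.IsSimpleContraction lab)
    {w : ℕ} (hw : HomologyRankLE M w) : (G.crossingPairs lab).ncard ≤ 3 * Nat.card 𝒟 + 3 * w := by
  classical
  let F : Finset (Set M) := {f ∈ Finset.univ.image G.leftFace ∪ Finset.univ.image G.rightFace |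
    ∃ i, G.IsCrossing lab i ∧ G.faceBoundary f i = -1}
  have hfaces : F.card * 3 ≤ Nat.card {i // G.IsCrossing lab i} * 2 :=
    three_mul_card_faces_le h.injOn fun f hf => (Finset.mem_filter.1 hf).2
  have hF : ∀ i, G.IsCrossing lab i → G.leftFace i ≠ G.rightFace i →
      G.leftFace i ∈ F ∧ G.rightFace i ∈ F := fun i hi hlr => by
    refine ⟨Finset.mem_filter.2 ⟨by simp, i, hi, ?_⟩, Finset.mem_filter.2 ⟨by simp, i, hi, ?_⟩⟩ <;>
      simp [faceBoundary_eq_neg_one_iff, hlr, hlr.symm]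
  have hpow : 2 ^ Nat.card ι ≤ 2 ^ (G.verts.card + (w + F.card)) := by
    rw [pow_add, pow_add]
    refine G.two_pow_card_le_mul_card_isCycle.trans (Nat.mul_le_mul_left _ ((hw ι G).trans ?_))
    exact Nat.mul_le_mul_left _ (card_isBoundary_le hF h.eq_one)
  have hle := (Nat.pow_le_pow_iff_right one_lt_two).1 hpow
  have hcount := h.card_add
  have hncard : (G.crossingPairs lab).ncard = Nat.card {i // G.IsCrossing lab i} :=
    h.injOn.ncard_image
  omega

end ArcGraph

/-! ### Adding and subdividing edges -/

/-- The affine homeomorphism of `ℂ` that sends `a` to `0` and `b` to `1`. -/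
noncomputable def affineHomeomorph {a b : ℂ} (hab : a ≠ b) : ℂ ≃ₜ ℂ where
  toFun w := (w - a) / (b - a)
  invFun u := a + u * (b - a)
  left_inv w := by field_simp [sub_ne_zero.2 hab.symm]; ring
  right_inv u := by field_simp [sub_ne_zero.2 hab.symm]; ring
  continuous_toFun := by fun_prop
  continuous_invFun := by fun_prop

namespace FlatArc
variable {M : Type*} [TopologicalSpace M]

/-- The arc that a chart maps onto the segment from `a` to `b`. -/
noncomputable def ofChart (φ : OpenPartialHomeomorph M ℂ) {a b : ℂ} (hab : a ≠ b)
    (h : ∀ t ∈ Icc (0 : ℝ) 1, a + t * (b - a) ∈ φ.target) : FlatArc M where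
  chart := φ.transHomeomorph (affineHomeomorph hab)
  mem_target t ht := h t ht

lemma ofChart_pt (φ : OpenPartialHomeomorph M ℂ) {a b : ℂ} (hab : a ≠ b)
    (h : ∀ t ∈ Icc (0 : ℝ) 1, a + t * (b - a) ∈ φ.target) (t : ℝ) :
    (ofChart φ hab h).pt t = φ.symm (a + t * (b - a)) := rfl

variable (e : FlatArc M) {a b : ℝ}

/-- The part of an arc between the parameters `a < b`. -/
noncomputable def subArc (ha : 0 ≤ a) (hab : a < b) (hb : b ≤ 1) : FlatArc M :=
  ofChart e.chart (Complex.ofReal_injective.ne hab.ne) fun t ht => by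
    have h := e.mem_target (a + t * (b - a)) ⟨by nlinarith [ht.1], by nlinarith [ht.2]⟩
    simpa using h

variable (ha : 0 ≤ a) (hab : a < b) (hb : b ≤ 1)

lemma subArc_pt (t : ℝ) : (e.subArc ha hab hb).pt t = e.pt (a + t * (b - a)) := by
  rw [subArc, ofChart_pt, pt]
  push_cast
  rfl

lemma subArc_src : (e.subArc ha hab hb).src = e.pt a := by simp [src, subArc_pt]

lemma subArc_tgt : (e.subArc ha hab hb).tgt = e.pt b := by simp [tgt, subArc_pt]

lemma subArc_openArc : (e.subArc ha hab hb).openArc = e.pt '' Ioo a b := by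
  rw [← openSegment_eq_Ioo hab, openSegment_eq_image', image_image]
  exact image_congr fun t _ => e.subArc_pt ha hab hb t

lemma subArc_openArc_subset : (e.subArc ha hab hb).openArc ⊆ e.openArc :=
  (e.subArc_openArc ha hab hb).trans_subset (image_mono (Ioo_subset_Ioo ha hb))

lemma subArc_closedArc_subset : (e.subArc ha hab hb).closedArc ⊆ e.closedArc := by
  rw [closedArc_eq, subArc_src, subArc_tgt]
  refine insert_subset (mem_image_of_mem _ ⟨ha, hab.le.trans hb⟩) (insert_subset
    (mem_image_of_mem _ ⟨ha.trans hab.le, hb⟩) ?_)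
  exact (e.subArc_openArc_subset ha hab hb).trans e.openArc_subset_closedArc

end FlatArc

namespace ArcGraph
variable {M : Type*} [TopologicalSpace M] {ι : Type} (G : ArcGraph M ι)

open Classical in
/-- The graph `G` with one more edge `e` that starts at a vertex and otherwise meets `G` at most in
its other end point, which must then be a vertex as well. -/
noncomputable def addArc (e : FlatArc M) (hsrc : e.src ∈ G.verts)
    (hdisj : Disjoint e.openArc G.carrier) (htgt : e.tgt ∈ G.carrier → e.tgt ∈ G.verts) :
    ArcGraph M (Option ι) where
  arc o := o.elim e G.arc
  verts := insert e.tgt G.verts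
  src_mem
    | none => Finset.mem_insert_of_mem hsrc
    | some i => Finset.mem_insert_of_mem (G.src_mem i)
  tgt_mem
    | none => Finset.mem_insert_self _ _
    | some i => Finset.mem_insert_of_mem (G.tgt_mem i)
  notMem_verts o x hx := by
    rw [Finset.mem_insert, not_or]
    cases o with
    | none =>
      exact ⟨fun h => e.tgt_notMem_openArc (h ▸ hx), fun h =>
        disjoint_left.1 hdisj hx (G.verts_subset_carrier h)⟩
    | some i =>
      exact ⟨fun h => G.notMem_verts i x hx (h ▸ htgt (h ▸ G.openArc_subset_carrier i hx)),
        G.notMem_verts i x hx⟩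
  eq_of_mem
    | none, none, _, _, _ => rfl
    | none, some j, _, hx, hx' => absurd (G.openArc_subset_carrier j hx') (disjoint_left.1 hdisj hx)
    | some i, none, _, hx, hx' => absurd (G.openArc_subset_carrier i hx) (disjoint_left.1 hdisj hx')
    | some i, some j, x, hx, hx' => congrArg some (G.eq_of_mem i j x hx hx')

section AddArc
variable {G} {e : FlatArc M} {hsrc : e.src ∈ G.verts} {hdisj : Disjoint e.openArc G.carrier}
  {htgt : e.tgt ∈ G.carrier → e.tgt ∈ G.verts}

lemma addArc_carrier :
    (G.addArc e hsrc hdisj htgt).carrier = G.carrier ∪ insert e.tgt e.openArc := by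
  ext x
  simp only [carrier, addArc, Finset.mem_insert, Option.exists, Option.elim_none, Option.elim_some,
    mem_ofPred_eq, mem_union, mem_insert_iff]
  tauto

lemma addArc_crossingPairs_of_eq {𝒟 : Type*} {lab : M → 𝒟} (hlab : lab e.src = lab e.tgt) :
    (G.addArc e hsrc hdisj htgt).crossingPairs lab = G.crossingPairs lab := by
  ext p
  simp [crossingPairs, labelPair, IsCrossing, addArc, Option.exists, hlab]

lemma addArc_crossingPairs_of_ne {𝒟 : Type*} {lab : M → 𝒟} (hlab : lab e.src ≠ lab e.tgt) :
    (G.addArc e hsrc hdisj htgt).crossingPairs lab =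
      insert s(lab e.src, lab e.tgt) (G.crossingPairs lab) := by
  ext p
  simp [crossingPairs, labelPair, IsCrossing, addArc, Option.exists, hlab, eq_comm]

variable [Fintype ι]

open Classical in
lemma addArc_vertexSign (z : Option ι → ℤˣ) (v : M) :
    (G.addArc e hsrc hdisj htgt).vertexSign z v =
      (if (G.addArc e hsrc hdisj htgt).IsEndpoint v none then z none else 1) *
        G.vertexSign (z ∘ some) v :=
  Fintype.prod_option _

lemma IsCycle.of_addArc {z : Option ι → ℤˣ} (hz : (G.addArc e hsrc hdisj htgt).IsCycle z)
    (hnone : z none = 1) : G.IsCycle (z ∘ some) := fun v hv => by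
  classical
  have h := hz v (Finset.mem_insert_of_mem hv)
  rwa [addArc_vertexSign, hnone, ite_self, one_mul] at h

lemma IsCycle.addArc_none {z : Option ι → ℤˣ} (hz : (G.addArc e hsrc hdisj htgt).IsCycle z)
    (hnew : e.tgt ∉ G.verts) : z none = 1 := by
  classical
  have h := hz e.tgt (Finset.mem_insert_self _ _)
  have hG : G.vertexSign (z ∘ some) e.tgt = 1 := Finset.prod_eq_one fun i _ => if_neg <| by
    rintro (h | h)
    exacts [hnew (h ▸ G.src_mem i), hnew (h ▸ G.tgt_mem i)]
  rwa [addArc_vertexSign, if_pos (.inr rfl), hG, mul_one] at h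

variable {𝒟 : Type*} {lab : M → 𝒟}

lemma IsSimpleContraction.eq_one_of_addArc (h : G.IsSimpleContraction lab) {z : Option ι → ℤˣ}
    (hz : (G.addArc e hsrc hdisj htgt).IsCycle z)
    (hcross : ∀ o, (G.addArc e hsrc hdisj htgt).IsCrossing lab o → z o = 1)
    (hnone : z none = 1) : z = 1 := by
  have hsome := h.eq_one _ (hz.of_addArc hnone) fun i hi => hcross (some i) hi
  exact funext (Option.rec hnone (congrFun hsome))

lemma IsSimpleContraction.addArc_of_notMem (h : G.IsSimpleContraction lab)
    (hnew : e.tgt ∉ G.verts) (hlab : lab e.src = lab e.tgt) :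
    (G.addArc e hsrc hdisj htgt).IsSimpleContraction lab where
  injOn
    | none, ho, _, _, _ => absurd hlab ho
    | some _, _, none, ho, _ => absurd hlab ho
    | some _, hi, some _, hj, hij => congrArg some (h.injOn hi hj hij)
  eq_one z hz hcross := h.eq_one_of_addArc hz hcross (hz.addArc_none hnew)
  card_add := by
    classical
    have hverts : (G.addArc e hsrc hdisj htgt).verts.card = G.verts.card + 1 :=
      Finset.card_insert_of_notMem hnew
    rw [addArc_crossingPairs_of_eq hlab, hverts, Finite.card_option]
    linarith [h.card_add]

lemma IsSimpleContraction.addArc_of_mem (h : G.IsSimpleContraction lab) (hold : e.tgt ∈ G.verts)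
    (hlab : lab e.src ≠ lab e.tgt) (hpair : s(lab e.src, lab e.tgt) ∉ G.crossingPairs lab) :
    (G.addArc e hsrc hdisj htgt).IsSimpleContraction lab where
  injOn
    | none, _, none, _, _ => rfl
    | none, _, some j, hj, hij => absurd ⟨j, hj, hij.symm⟩ hpair
    | some i, hi, none, _, hij => absurd ⟨i, hi, hij⟩ hpair
    | some _, hi, some _, hj, hij => congrArg some (h.injOn hi hj hij)
  eq_one z hz hcross := h.eq_one_of_addArc hz hcross (hcross none hlab)
  card_add := by
    classical
    have hverts : (G.addArc e hsrc hdisj htgt).verts.card = G.verts.card :=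
      congrArg _ (Finset.insert_eq_of_mem hold)
    rw [addArc_crossingPairs_of_ne hlab, hverts, Finite.card_option,
      ncard_insert_of_notMem hpair ((toFinite _).image _)]
    linarith [h.card_add]

end AddArc

lemma labelPair_congr {𝒟 : Type*} {lab lab' : M → 𝒟} (hlab : EqOn lab lab' G.verts) :
    G.labelPair lab = G.labelPair lab' := funext fun i => by
  rw [labelPair, labelPair, hlab (G.src_mem i), hlab (G.tgt_mem i)]

lemma isCrossing_congr {𝒟 : Type*} {lab lab' : M → 𝒟} (hlab : EqOn lab lab' G.verts) :
    G.IsCrossing lab = G.IsCrossing lab' := funext fun i => by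
  rw [IsCrossing, IsCrossing, hlab (G.src_mem i), hlab (G.tgt_mem i)]

lemma crossingPairs_congr {𝒟 : Type*} {lab lab' : M → 𝒟} (hlab : EqOn lab lab' G.verts) :
    G.crossingPairs lab = G.crossingPairs lab' := by
  rw [crossingPairs, crossingPairs, G.labelPair_congr hlab, G.isCrossing_congr hlab]

variable {G} in
lemma IsSimpleContraction.congr [Fintype ι] {𝒟 : Type*} {lab lab' : M → 𝒟}
    (h : G.IsSimpleContraction lab) (hlab : EqOn lab lab' G.verts) :
    G.IsSimpleContraction lab' where
  injOn := by rw [← G.labelPair_congr hlab, ← G.isCrossing_congr hlab]; exact h.injOn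
  eq_one := by rw [← G.isCrossing_congr hlab]; exact h.eq_one
  card_add := by rw [← G.crossingPairs_congr hlab]; exact h.card_add

end ArcGraph

namespace FlatArc
variable {M : Type*} [TopologicalSpace M] (e : FlatArc M) {h : ℝ} (hh : h ∈ Ioo (0 : ℝ) 1)

lemma openArc_eq_union_subArc : e.openArc = (e.subArc le_rfl hh.1 hh.2.le).openArc ∪
    insert (e.pt h) (e.subArc hh.1.le hh.2 le_rfl).openArc := by
  rw [subArc_openArc, subArc_openArc, ← image_insert_eq, Ioo_insert_left hh.2, ← image_union,
    Ioo_union_Ico_eq_Ioo hh.1 hh.2.le, openArc]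

lemma pt_notMem_subArc_fst : e.pt h ∉ (e.subArc le_rfl hh.1 hh.2.le).openArc := by
  rw [subArc_openArc]
  rintro ⟨t, ht, heq⟩
  exact ht.2.ne (e.injOn_pt ⟨ht.1.le, (ht.2.trans hh.2).le⟩ (Ioo_subset_Icc_self hh) heq)

lemma pt_notMem_subArc_snd : e.pt h ∉ (e.subArc hh.1.le hh.2 le_rfl).openArc := by
  rw [subArc_openArc]
  rintro ⟨t, ht, heq⟩
  exact ht.1.ne' (e.injOn_pt ⟨(hh.1.trans ht.1).le, ht.2.le⟩ (Ioo_subset_Icc_self hh) heq)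

lemma disjoint_subArc :
    Disjoint (e.subArc le_rfl hh.1 hh.2.le).openArc (e.subArc hh.1.le hh.2 le_rfl).openArc := by
  rw [subArc_openArc, subArc_openArc, disjoint_left]
  rintro _ ⟨t, ht, rfl⟩ ⟨u, hu, hut⟩
  have hut := e.injOn_pt ⟨(hh.1.trans hu.1).le, hu.2.le⟩ ⟨ht.1.le, (ht.2.trans hh.2).le⟩ hut
  exact lt_asymm ht.2 (hut ▸ hu.1)

end FlatArc

namespace ArcGraph
variable {M : Type*} [TopologicalSpace M] {ι : Type} (G : ArcGraph M ι) (j : ι) {h : ℝ}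
  (hh : h ∈ Ioo (0 : ℝ) 1)

open Classical in
/-- The edges of `G` after the edge `j` has been cut at the parameter `h`: its first half keeps the
name `j`, its second half becomes the additional edge. -/
noncomputable def subdivideArc (o : Option ι) : FlatArc M :=
  o.elim ((G.arc j).subArc hh.1.le hh.2 le_rfl)
    (Function.update G.arc j ((G.arc j).subArc le_rfl hh.1 hh.2.le))

lemma subdivideArc_none : G.subdivideArc j hh none = (G.arc j).subArc hh.1.le hh.2 le_rfl := rfl

lemma subdivideArc_some_self :
    G.subdivideArc j hh (some j) = (G.arc j).subArc le_rfl hh.1 hh.2.le := by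
  classical
  exact Function.update_self j _ G.arc

variable {j} in
lemma subdivideArc_some_of_ne {i : ι} (hi : i ≠ j) : G.subdivideArc j hh (some i) = G.arc i := by
  classical
  exact Function.update_of_ne hi ..

lemma subdivideArc_some_src (i : ι) : (G.subdivideArc j hh (some i)).src = (G.arc i).src := by
  rcases eq_or_ne i j with rfl | hi
  · rw [subdivideArc_some_self, FlatArc.subArc_src]
    rfl
  · rw [subdivideArc_some_of_ne G hh hi]

lemma subdivideArc_none_src : (G.subdivideArc j hh none).src = (G.arc j).pt h := by
  rw [subdivideArc_none, FlatArc.subArc_src]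

lemma subdivideArc_none_tgt : (G.subdivideArc j hh none).tgt = (G.arc j).tgt := by
  rw [subdivideArc_none, FlatArc.subArc_tgt]
  rfl

lemma subdivideArc_some_self_tgt : (G.subdivideArc j hh (some j)).tgt = (G.arc j).pt h := by
  rw [subdivideArc_some_self, FlatArc.subArc_tgt]

lemma subdivideArc_openArc_subset (o : Option ι) :
    (G.subdivideArc j hh o).openArc ⊆ (G.arc (o.getD j)).openArc := by
  rcases o with _ | i
  · exact (G.arc j).subArc_openArc_subset hh.1.le hh.2 le_rfl
  · rcases eq_or_ne i j with rfl | hi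
    · rw [subdivideArc_some_self]
      exact FlatArc.subArc_openArc_subset ..
    · exact (congrArg _ (G.subdivideArc_some_of_ne hh hi)).le

lemma pt_notMem_subdivideArc (o : Option ι) :
    (G.arc j).pt h ∉ (G.subdivideArc j hh o).openArc := by
  intro hmem
  have ho : o.getD j = j :=
    G.eq_of_mem _ _ _ (G.subdivideArc_openArc_subset j hh o hmem) (mem_image_of_mem _ hh)
  rcases o with _ | i
  · exact (G.arc j).pt_notMem_subArc_snd hh hmem
  · obtain rfl : i = j := ho
    exact (G.arc i).pt_notMem_subArc_fst hh (G.subdivideArc_some_self i hh ▸ hmem)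

lemma eq_of_mem_subdivideArc {o o' : Option ι} {x : M}
    (ho : x ∈ (G.subdivideArc j hh o).openArc) (ho' : x ∈ (G.subdivideArc j hh o').openArc) :
    o = o' := by
  have hget := G.eq_of_mem _ _ x (G.subdivideArc_openArc_subset j hh o ho)
    (G.subdivideArc_openArc_subset j hh o' ho')
  have hdisj := disjoint_left.1 ((G.arc j).disjoint_subArc hh)
  rcases o with _ | i <;> rcases o' with _ | i' <;>
    simp only [Option.getD_none, Option.getD_some] at hget
  · rfl
  · subst hget
    exact absurd ho (hdisj (G.subdivideArc_some_self j hh ▸ ho'))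
  · subst hget
    exact absurd ho' (hdisj (G.subdivideArc_some_self i hh ▸ ho))
  · rw [hget]

open Classical in
/-- The graph `G` with an additional vertex at the parameter `h` of the edge `j`. -/
noncomputable def subdivide : ArcGraph M (Option ι) where
  arc := G.subdivideArc j hh
  verts := insert ((G.arc j).pt h) G.verts
  src_mem
    | none => G.subdivideArc_none_src j hh ▸ Finset.mem_insert_self _ _
    | some i => G.subdivideArc_some_src j hh i ▸ Finset.mem_insert_of_mem (G.src_mem i)
  tgt_mem
    | none => G.subdivideArc_none_tgt j hh ▸ Finset.mem_insert_of_mem (G.tgt_mem j)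
    | some i => by
      rcases eq_or_ne i j with rfl | hi
      · exact G.subdivideArc_some_self_tgt i hh ▸ Finset.mem_insert_self _ _
      · exact G.subdivideArc_some_of_ne hh hi ▸ Finset.mem_insert_of_mem (G.tgt_mem i)
  notMem_verts o x hx := by
    rw [Finset.mem_insert, not_or]
    exact ⟨fun heq => G.pt_notMem_subdivideArc j hh o (heq ▸ hx),
      G.notMem_verts _ x (G.subdivideArc_openArc_subset j hh o hx)⟩
  eq_of_mem _ _ _ := G.eq_of_mem_subdivideArc j hh

variable {G} {j} {hh}

lemma subdivide_carrier : (G.subdivide j hh).carrier = G.carrier := by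
  classical
  refine Subset.antisymm ?_ ?_
  · rintro x (hx | ⟨o, hx⟩)
    · rcases Finset.mem_insert.1 hx with rfl | hx
      exacts [G.openArc_subset_carrier j (mem_image_of_mem _ hh), .inl hx]
    · exact G.openArc_subset_carrier _ (G.subdivideArc_openArc_subset j hh o hx)
  · rintro x (hx | ⟨i, hx⟩)
    · exact .inl (Finset.mem_insert_of_mem hx)
    · rcases eq_or_ne i j with rfl | hi
      · rw [FlatArc.openArc_eq_union_subArc _ hh] at hx
        rcases hx with hx | rfl | hx
        exacts [
          .inr ⟨some i, (congrArg FlatArc.openArc (G.subdivideArc_some_self i hh)).superset hx⟩,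
          .inl (Finset.mem_insert_self _ _), .inr ⟨none, hx⟩]
      · exact .inr ⟨some i,
          (congrArg FlatArc.openArc (G.subdivideArc_some_of_ne hh hi)).superset hx⟩

section Cycles
variable [Fintype ι] {z : Option ι → ℤˣ} (hz : (G.subdivide j hh).IsCycle z)
include hz

lemma IsCycle.subdivide_none : z none = z (some j) := by
  classical
  have hpt := G.notMem_verts j _ (mem_image_of_mem _ hh)
  have hcycle := hz _ (Finset.mem_insert_self _ _)
  have hnone : (G.subdivide j hh).IsEndpoint ((G.arc j).pt h) none :=
    .inl (G.subdivideArc_none_src j hh)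
  have hsome : (G.subdivide j hh).IsEndpoint ((G.arc j).pt h) (some j) :=
    .inr (G.subdivideArc_some_self_tgt j hh)
  have hother : ∀ i ≠ j, ¬(G.subdivide j hh).IsEndpoint ((G.arc j).pt h) (some i) := by
    intro i hi hend
    simp only [IsEndpoint, subdivide, subdivideArc_some_of_ne G hh hi] at hend
    rcases hend with hend | hend
    exacts [hpt (hend ▸ G.src_mem i), hpt (hend ▸ G.tgt_mem i)]
  rw [vertexSign, Fintype.prod_option, if_pos hnone, Finset.prod_eq_single j
    (fun i _ hi => if_neg (hother i hi)) (by simp), if_pos hsome, mul_eq_one_iff_eq_inv,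
    Int.units_inv_eq_self] at hcycle
  exact hcycle

lemma IsCycle.of_subdivide : G.IsCycle (z ∘ some) := fun v hv => by
  classical
  have hpt : (G.arc j).pt h ≠ v := fun heq =>
    G.notMem_verts j _ (mem_image_of_mem _ hh) (heq ▸ hv)
  have hcycle := hz v (Finset.mem_insert_of_mem hv)
  rw [vertexSign, Fintype.prod_option, ← Finset.mul_prod_erase _ _ (Finset.mem_univ j),
    ← mul_assoc] at hcycle
  rw [vertexSign, ← Finset.mul_prod_erase _ _ (Finset.mem_univ j)]
  refine Eq.trans ?_ hcycle
  congr 1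
  · have hne := (G.arc j).src_ne_tgt
    simp only [IsEndpoint, subdivide, subdivideArc_none_src, subdivideArc_none_tgt,
      subdivideArc_some_src, subdivideArc_some_self_tgt, hz.subdivide_none, Function.comp_apply]
    by_cases hsrc : (G.arc j).src = v <;> by_cases htgt : (G.arc j).tgt = v <;> simp_all
  · refine Finset.prod_congr rfl fun i hi => ?_
    have hend : (G.subdivide j hh).IsEndpoint v (some i) ↔ G.IsEndpoint v i := by
      simp only [IsEndpoint, subdivide, G.subdivideArc_some_of_ne hh (Finset.ne_of_mem_erase hi)]
    simp only [hend, Function.comp_apply]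

end Cycles

variable {𝒟 : Type*} {lab : M → 𝒟} (hlab : lab ((G.arc j).pt h) = lab (G.arc j).src)
include hlab

lemma subdivide_isCrossing_iff {o : Option ι} :
    (G.subdivide j hh).IsCrossing lab o ↔ o ≠ some j ∧ G.IsCrossing lab (o.getD j) := by
  rcases o with _ | i
  · simp [IsCrossing, subdivide, subdivideArc_none_src, subdivideArc_none_tgt, hlab]
  · rcases eq_or_ne i j with rfl | hi
    · simp [IsCrossing, subdivide, subdivideArc_some_src, subdivideArc_some_self_tgt, hlab]
    · simp [IsCrossing, subdivide, subdivideArc_some_of_ne G hh hi, hi]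

lemma subdivide_labelPair {o : Option ι} (ho : o ≠ some j) :
    (G.subdivide j hh).labelPair lab o = G.labelPair lab (o.getD j) := by
  rcases o with _ | i
  · simp [labelPair, subdivide, subdivideArc_none_src, subdivideArc_none_tgt, hlab]
  · have hi : i ≠ j := fun hij => ho (congrArg some hij)
    simp [labelPair, subdivide, subdivideArc_some_of_ne G hh hi]

lemma exists_subdivide_isCrossing {i : ι} (hi : G.IsCrossing lab i) :
    ∃ o : Option ι, o.getD j = i ∧ (G.subdivide j hh).IsCrossing lab o := by
  simp only [subdivide_isCrossing_iff hlab]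
  rcases eq_or_ne i j with rfl | hij
  exacts [⟨none, rfl, nofun, hi⟩, ⟨some i, rfl, by simpa using hij, hi⟩]

lemma subdivide_crossingPairs : (G.subdivide j hh).crossingPairs lab = G.crossingPairs lab := by
  refine Subset.antisymm ?_ ?_
  · rintro _ ⟨o, ho, rfl⟩
    obtain ⟨hoj, ho⟩ := (subdivide_isCrossing_iff hlab).1 ho
    exact ⟨_, ho, (subdivide_labelPair hlab hoj).symm⟩
  · rintro _ ⟨i, hi, rfl⟩
    obtain ⟨o, rfl, ho⟩ := exists_subdivide_isCrossing (hh := hh) hlab hi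
    exact ⟨o, ho, subdivide_labelPair hlab ((subdivide_isCrossing_iff hlab).1 ho).1⟩

lemma IsSimpleContraction.subdivide [Fintype ι] (hG : G.IsSimpleContraction lab) :
    (G.subdivide j hh).IsSimpleContraction lab where
  injOn o ho o' ho' heq := by
    obtain ⟨hoj, ho⟩ := (subdivide_isCrossing_iff hlab).1 ho
    obtain ⟨hoj', ho'⟩ := (subdivide_isCrossing_iff hlab).1 ho'
    rw [subdivide_labelPair hlab hoj, subdivide_labelPair hlab hoj'] at heq
    have hget := hG.injOn ho ho' heq
    rcases o with _ | i <;> rcases o' with _ | i' <;> simp_all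
  eq_one z hz hcross := by
    have hsome : z ∘ some = 1 := hG.eq_one _ hz.of_subdivide fun i hi => by
      obtain ⟨o, rfl, ho⟩ := exists_subdivide_isCrossing (hh := hh) hlab hi
      rcases o with _ | i
      exacts [hz.subdivide_none.symm.trans (hcross _ ho), hcross _ ho]
    exact funext (Option.rec (hz.subdivide_none.trans (congrFun hsome j)) (congrFun hsome))
  card_add := by
    classical
    have hverts : (G.subdivide j hh).verts.card = G.verts.card + 1 :=
      Finset.card_insert_of_notMem (G.notMem_verts j _ (mem_image_of_mem _ hh))
    rw [subdivide_crossingPairs hlab, hverts, Finite.card_option]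
    linarith [hG.card_add]

end ArcGraph

lemma exists_gap {α : Type*} [LinearOrder α] [TopologicalSpace α] [OrderClosedTopology α]
    {K K' : Set α} (hK : IsCompact K) (hK' : IsCompact K') (hdisj : Disjoint K K') {x y : α}
    (hx : x ∈ K) (hy : y ∈ K') (hxy : x ≤ y) :
    ∃ a ∈ K, ∃ b ∈ K', x ≤ a ∧ a < b ∧ b ≤ y ∧ Disjoint (Ioo a b) (K ∪ K') := by
  obtain ⟨a, ⟨haK, hay⟩, ha⟩ := (hK.inter_right isClosed_Iic).exists_isGreatest ⟨x, hx, hxy⟩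
  obtain ⟨b, ⟨hbK, hab⟩, hb⟩ := (hK'.inter_right isClosed_Ici).exists_isLeast ⟨y, hy, hay⟩
  refine ⟨a, haK, b, hbK, ha ⟨hx, hxy⟩, hab.lt_of_ne (hdisj.ne_of_mem haK hbK), hb ⟨hy, hay⟩,
    disjoint_left.2 ?_⟩
  rintro t ⟨hat, htb⟩ (ht | ht)
  · exact hat.not_ge (ha ⟨ht, htb.le.trans (hb ⟨hy, hay⟩)⟩)
  · exact htb.not_ge (hb ⟨ht, hat.le⟩)

namespace FlatArc
variable {M : Type*} [TopologicalSpace M] (e : FlatArc M)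

lemma reverse_tgt : e.reverse.tgt = e.src := by simp only [src, tgt, reverse_pt, sub_self]

lemma reverse_closedArc : e.reverse.closedArc = e.closedArc := by
  rw [closedArc_eq, closedArc_eq, reverse_src, reverse_tgt, reverse_openArc, insert_comm]

lemma exists_arc_mem_tgt {x : M} (hx : x ∈ e.openArc) :
    ∃ e' : FlatArc M, e'.src = x ∧ e'.tgt = e.tgt ∧ e'.openArc ⊆ e.openArc := by
  obtain ⟨t, ht, rfl⟩ := hx
  exact ⟨e.subArc ht.1.le ht.2 le_rfl, e.subArc_src .., e.subArc_tgt ..,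
    e.subArc_openArc_subset ..⟩

lemma exists_gap {K K' : Set M} (hK : IsClosed K) (hK' : IsClosed K') (hdisj : Disjoint K K')
    (hsrc : e.src ∈ K) (htgt : e.tgt ∈ K') :
    ∃ e' : FlatArc M, e'.src ∈ K ∧ e'.tgt ∈ K' ∧ e'.openArc ⊆ e.openArc ∧
      e'.closedArc ⊆ e.closedArc ∧ Disjoint e'.openArc (K ∪ K') := by
  have hcompact {C : Set M} (hC : IsClosed C) : IsCompact (Icc 0 1 ∩ e.pt ⁻¹' C) :=
    isCompact_Icc.of_isClosed_subset
      (e.continuousOn_pt.preimage_isClosed_of_isClosed isClosed_Icc hC) inter_subset_left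
  obtain ⟨a, ha, b, hb, -, hab, -, hgap⟩ := SurfaceArrangement.exists_gap (hcompact hK)
    (hcompact hK') ((hdisj.preimage e.pt).mono inter_subset_right inter_subset_right)
    ⟨unitInterval.zero_mem, hsrc⟩ ⟨unitInterval.one_mem, htgt⟩ zero_le_one
  refine ⟨e.subArc ha.1.1 hab hb.1.2, ?_, ?_, e.subArc_openArc_subset ..,
    e.subArc_closedArc_subset .., ?_⟩
  · rw [subArc_src]
    exact ha.2
  · rw [subArc_tgt]
    exact hb.2
  · rw [← inter_union_distrib_left] at hgap
    rw [subArc_openArc, disjoint_left]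
    rintro _ ⟨t, ht, rfl⟩ htK
    exact disjoint_left.1 hgap ht
      ⟨⟨ha.1.1.trans ht.1.le, ht.2.le.trans hb.1.2⟩, htK⟩

end FlatArc

section FlatConvexity
variable {M : Type*} [TopologicalSpace M]

/-- Any two distinct points of `N` are joined by a flat arc in `N`. -/
def IsFlatConvex (N : Set M) : Prop :=
  ∀ y ∈ N, ∀ y' ∈ N, y ≠ y' → ∃ e : FlatArc M, e.src = y ∧ e.tgt = y' ∧ e.closedArc ⊆ N

lemma isFlatConvex_image_symm (φ : OpenPartialHomeomorph M ℂ) {B : Set ℂ} (hB : Convex ℝ B)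
    (hsub : B ⊆ φ.target) : IsFlatConvex (φ.symm '' B) := by
  rintro _ ⟨w, hw, rfl⟩ _ ⟨w', hw', rfl⟩ hne
  have hseg : ∀ t ∈ Icc (0 : ℝ) 1, w + t * (w' - w) ∈ B := fun t ht => by
    simpa only [Complex.real_smul] using hB.add_smul_sub_mem hw hw' ht
  refine ⟨FlatArc.ofChart φ (ne_of_apply_ne φ.symm hne) fun t ht => hsub (hseg t ht), ?_, ?_, ?_⟩
  · simp [FlatArc.src, FlatArc.ofChart_pt]
  · simp [FlatArc.tgt, FlatArc.ofChart_pt]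
  · rintro _ ⟨t, ht, rfl⟩
    exact ⟨_, hseg t ht, rfl⟩

lemma exists_isOpen_isFlatConvex_subset [ChartedSpace ℂ M] {x : M} {O : Set M} (hO : O ∈ 𝓝 x) :
    ∃ N ⊆ O, IsOpen N ∧ x ∈ N ∧ IsFlatConvex N := by
  obtain ⟨χ, hx, hχx⟩ := exists_chart_eq_zero x
  have htarget : (0 : ℂ) ∈ χ.target := hχx ▸ χ.map_source hx
  have hsymm : χ.symm 0 = x := by rw [← hχx, χ.left_inv hx]
  have hO' : χ.symm ⁻¹' O ∈ 𝓝 0 := (χ.continuousAt_symm htarget).preimage_mem_nhds (by rwa [hsymm])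
  obtain ⟨r, hr, hball⟩ :=
    Metric.mem_nhds_iff.1 (inter_mem hO' (χ.open_target.mem_nhds htarget))
  have hsub : Metric.ball 0 r ⊆ χ.target := hball.trans inter_subset_right
  exact ⟨χ.symm '' Metric.ball 0 r, image_subset_iff.2 (hball.trans inter_subset_left),
    χ.isOpen_image_symm_of_subset_target Metric.isOpen_ball hsub,
    ⟨0, Metric.mem_ball_self hr, hsymm⟩, isFlatConvex_image_symm χ (convex_ball 0 r) hsub⟩

end FlatConvexity

lemma subset_of_isPreconnected_of_forall_exists_nhds {X : Type*} [TopologicalSpace X] {U R : Set X}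
    (hU : IsPreconnected U) (hne : (U ∩ R).Nonempty)
    (h : ∀ x ∈ U, ∃ N ∈ 𝓝 x, (N ∩ R).Nonempty → N ⊆ R) : U ⊆ R := by
  obtain ⟨x₀, hx₀, hxR⟩ := hne
  intro x hx
  refine hU.induction₂' (fun y z => y ∈ R → z ∈ R) ?_ ?_ hx₀ hx hxR
  · intro y hy
    obtain ⟨N, hN, hNR⟩ := h y hy
    filter_upwards [nhdsWithin_le_nhds hN] with z hz
    exact ⟨fun hyR => hNR ⟨y, mem_of_mem_nhds hN, hyR⟩ hz,
      fun hzR => hNR ⟨z, hz, hzR⟩ (mem_of_mem_nhds hN)⟩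
  · exact fun _ _ _ _ _ _ hxy hyz => hyz ∘ hxy

/-! ### Labelled graphs of maximal size -/

/-- Two families of connected open sets, where a small piece that meets a large one lies in it,
small pieces are disjoint, and distinct large pieces meet only inside small pieces. For a family of
sets, the large pieces are the components of the `k`-fold intersections and the small ones are the
components of the `(k + 1)`-fold intersections. -/
structure PieceFamily (M : Type*) [TopologicalSpace M] (𝒟 𝒞 : Type*) where
  small : 𝒟 → Set M
  large : 𝒞 → Set M
  isOpen_small : ∀ d, IsOpen (small d)
  isPreconnected_small : ∀ d, IsPreconnected (small d)
  nonempty_small : ∀ d, (small d).Nonempty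
  isOpen_large : ∀ c, IsOpen (large c)
  isPreconnected_large : ∀ c, IsPreconnected (large c)
  small_subset : ∀ {d c x}, x ∈ small d → x ∈ large c → small d ⊆ large c
  eq_of_mem_small : ∀ {d d' x}, x ∈ small d → x ∈ small d' → d = d'
  exists_mem_small : ∀ {c c' x}, c ≠ c' → x ∈ large c → x ∈ large c' → ∃ d, x ∈ small d

/-- A piece family whose small pieces have disjoint closures. -/
structure PieceSystem (M : Type*) [TopologicalSpace M] (𝒟 𝒞 : Type*) extends
    PieceFamily M 𝒟 𝒞 where
  eq_of_mem_closure : ∀ {d d' x}, x ∈ closure (small d) → x ∈ closure (small d') → d = d'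

namespace PieceSystem
variable {M : Type*} [TopologicalSpace M] {𝒟 𝒞 : Type*} (S : PieceSystem M 𝒟 𝒞)

/-- The small piece `l` may serve as a label for `x`: it is the small piece around `x` if there is
one, and it lies in every large piece around `x`. -/
def IsLabel (x : M) (l : 𝒟) : Prop :=
  (∀ d, x ∈ S.small d → l = d) ∧ ∀ c, x ∈ S.large c → S.small l ⊆ S.large c

variable {S}

lemma isLabel_of_mem_small {x : M} {d : 𝒟} (hx : x ∈ S.small d) : S.IsLabel x d :=
  ⟨fun _ => S.eq_of_mem_small hx, fun _ => S.small_subset hx⟩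

lemma isLabel_of_mem_large {x : M} {c₀ : 𝒞} {l : 𝒟} (hx : x ∈ S.large c₀)
    (hl : S.small l ⊆ S.large c₀) (hsmall : ∀ d, x ∈ S.small d → l = d) : S.IsLabel x l := by
  refine ⟨hsmall, fun c hc => ?_⟩
  rcases eq_or_ne c c₀ with rfl | hne
  · exact hl
  · obtain ⟨d, hd⟩ := S.exists_mem_small hne hc hx
    rw [hsmall d hd]
    exact S.small_subset hd hc

end PieceSystem

/-- A graph with admissible labels that are constant along open edges. It meets every small piece,
and contracting the edges between equal labels makes it a simple graph on the small pieces. -/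
structure LabelledGraph {M : Type*} [TopologicalSpace M] {𝒟 𝒞 : Type*}
    (S : PieceSystem M 𝒟 𝒞) where
  ι : Type
  fintype : Fintype ι
  graph : ArcGraph M ι
  label : M → 𝒟
  isSimpleContraction : graph.IsSimpleContraction label
  label_openArc : ∀ i, ∀ x ∈ (graph.arc i).openArc, label x = label (graph.arc i).src
  isLabel : ∀ x ∈ graph.carrier, S.IsLabel x (label x)
  exists_mem : ∀ d, ∃ x ∈ graph.carrier, x ∈ S.small d

namespace LabelledGraph
variable {M : Type*} [TopologicalSpace M] {𝒟 𝒞 : Type*} {S : PieceSystem M 𝒟 𝒞}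

attribute [instance] LabelledGraph.fintype

/-- The set of points covered by a labelled graph. -/
abbrev carrier (L : LabelledGraph S) : Set M := L.graph.carrier

/-- The edges of the simple graph obtained by contraction. -/
def crossingPairs (L : LabelledGraph S) : Set (Sym2 𝒟) := L.graph.crossingPairs L.label

lemma isClosed_carrier [T2Space M] (L : LabelledGraph S) : IsClosed L.carrier :=
  L.graph.isClosed_carrier

lemma label_eq (L : LabelledGraph S) {x : M} (hx : x ∈ L.carrier) {d : 𝒟} (hd : x ∈ S.small d) :
    L.label x = d :=
  (L.isLabel x hx).1 d hd

lemma small_label_subset (L : LabelledGraph S) {x : M} (hx : x ∈ L.carrier) {c : 𝒞}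
    (hc : x ∈ S.large c) : S.small (L.label x) ⊆ S.large c :=
  (L.isLabel x hx).2 c hc

/-- `L'` is a larger labelled graph than `L` with the same contraction. -/
structure Extends (L L' : LabelledGraph S) : Prop where
  carrier_subset : L.carrier ⊆ L'.carrier
  label_eqOn : EqOn L'.label L.label L.carrier
  crossingPairs_eq : L'.crossingPairs = L.crossingPairs

lemma Extends.refl (L : LabelledGraph S) : L.Extends L := ⟨Subset.rfl, fun _ _ => rfl, rfl⟩

lemma Extends.trans {L L' L'' : LabelledGraph S} (h : L.Extends L') (h' : L'.Extends L'') :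
    L.Extends L'' :=
  ⟨h.carrier_subset.trans h'.carrier_subset,
    fun _ hx => (h'.label_eqOn (h.carrier_subset hx)).trans (h.label_eqOn hx),
    h'.crossingPairs_eq.trans h.crossingPairs_eq⟩

lemma exists_mem_verts (L : LabelledGraph S) {x : M} (hx : x ∈ L.carrier) :
    ∃ L' : LabelledGraph S, L'.carrier = L.carrier ∧ L'.label = L.label ∧
      L'.crossingPairs = L.crossingPairs ∧ L.graph.verts ⊆ L'.graph.verts ∧
      x ∈ L'.graph.verts := by
  classical
  rcases hx with hx | ⟨j, h, hh, rfl⟩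
  · exact ⟨L, rfl, rfl, rfl, Subset.rfl, hx⟩
  have hlab := L.label_openArc j _ (mem_image_of_mem _ hh)
  have hcarrier := ArcGraph.subdivide_carrier (G := L.graph) (j := j) (hh := hh)
  refine ⟨{
    ι := Option L.ι
    fintype := inferInstance
    graph := L.graph.subdivide j hh
    label := L.label
    isSimpleContraction := L.isSimpleContraction.subdivide hlab
    label_openArc := fun o x hx => ?_
    isLabel := hcarrier ▸ L.isLabel
    exists_mem := hcarrier ▸ L.exists_mem }, hcarrier, rfl,
    ArcGraph.subdivide_crossingPairs hlab, Finset.subset_insert _ _, Finset.mem_insert_self _ _⟩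
  rw [L.label_openArc _ x (L.graph.subdivideArc_openArc_subset j hh o hx)]
  cases o with
  | none => exact hlab.symm.trans (congrArg L.label (L.graph.subdivideArc_none_src j hh).symm)
  | some i => exact congrArg L.label (L.graph.subdivideArc_some_src j hh i).symm

open Classical in
/-- The labelling that continues the labels of `L` by the constant `l` outside of `L`. -/
noncomputable def extendLabel (L : LabelledGraph S) (l : 𝒟) : M → 𝒟 :=
  L.carrier.piecewise L.label fun _ => l

lemma extendLabel_of_mem (L : LabelledGraph S) (l : 𝒟) {x : M} (hx : x ∈ L.carrier) :
    L.extendLabel l x = L.label x := by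
  classical exact piecewise_eq_of_mem _ _ _ hx

lemma extendLabel_of_notMem (L : LabelledGraph S) (l : 𝒟) {x : M} (hx : x ∉ L.carrier) :
    L.extendLabel l x = l := by
  classical exact piecewise_eq_of_notMem _ _ _ hx

lemma eqOn_extendLabel (L : LabelledGraph S) (l : 𝒟) :
    EqOn L.label (L.extendLabel l) L.graph.verts := fun _ hx =>
  (L.extendLabel_of_mem l (L.graph.verts_subset_carrier hx)).symm

/-- The labelled graph `L` with one more edge, labelled like its initial point. -/
noncomputable def addArc (L : LabelledGraph S) (e : FlatArc M) (hsrc : e.src ∈ L.graph.verts)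
    (hdisj : Disjoint e.openArc L.carrier) (htgt : e.tgt ∈ L.carrier → e.tgt ∈ L.graph.verts)
    (hlabel : ∀ x ∈ insert e.tgt e.openArc, x ∉ L.carrier → S.IsLabel x (L.label e.src))
    (hsimple : (L.graph.addArc e hsrc hdisj htgt).IsSimpleContraction
      (L.extendLabel (L.label e.src))) : LabelledGraph S where
  ι := Option L.ι
  fintype := inferInstance
  graph := L.graph.addArc e hsrc hdisj htgt
  label := L.extendLabel (L.label e.src)
  isSimpleContraction := hsimple
  label_openArc
    | none, x, hx => (L.extendLabel_of_notMem _ (disjoint_left.1 hdisj hx)).trans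
        (L.eqOn_extendLabel _ hsrc)
    | some i, x, hx => (L.extendLabel_of_mem _ (L.graph.openArc_subset_carrier i hx)).trans
        ((L.label_openArc i x hx).trans (L.eqOn_extendLabel _ (L.graph.src_mem i)))
  isLabel x hx := by
    by_cases hxL : x ∈ L.carrier
    · rw [L.extendLabel_of_mem _ hxL]
      exact L.isLabel x hxL
    · rw [L.extendLabel_of_notMem _ hxL]
      exact hlabel x ((ArcGraph.addArc_carrier.subset hx).resolve_left hxL) hxL
  exists_mem d := by
    obtain ⟨x, hx, hd⟩ := L.exists_mem d
    exact ⟨x, ArcGraph.addArc_carrier.superset (.inl hx), hd⟩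

lemma exists_extends_of_pendant (L : LabelledGraph S) (e : FlatArc M) (hsrc : e.src ∈ L.carrier)
    (hdisj : Disjoint (insert e.tgt e.openArc) L.carrier)
    (hlabel : ∀ x ∈ insert e.tgt e.openArc, S.IsLabel x (L.label e.src)) :
    ∃ L' : LabelledGraph S, L.Extends L' ∧ L'.carrier = L.carrier ∪ insert e.tgt e.openArc := by
  obtain ⟨L₁, hcarrier, hlab, hpairs, -, hsrc₁⟩ := L.exists_mem_verts hsrc
  rw [← hcarrier] at hdisj
  rw [← hlab] at hlabel
  obtain ⟨htgt, hopen⟩ := disjoint_insert_left.1 hdisj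
  have htgt' : e.tgt ∉ L₁.graph.verts := fun h => htgt (L₁.graph.verts_subset_carrier h)
  have heq : L₁.extendLabel (L₁.label e.src) e.src = L₁.extendLabel (L₁.label e.src) e.tgt := by
    rw [L₁.extendLabel_of_notMem _ htgt, ← L₁.eqOn_extendLabel _ hsrc₁]
  have hpairs₁ := L₁.graph.crossingPairs_congr (L₁.eqOn_extendLabel (L₁.label e.src))
  have hunion : (L₁.graph.addArc e hsrc₁ hopen (absurd · htgt)).carrier =
      L.carrier ∪ insert e.tgt e.openArc := hcarrier ▸ ArcGraph.addArc_carrier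
  refine ⟨L₁.addArc e hsrc₁ hopen (absurd · htgt) (fun x hx _ => hlabel x hx)
    ((L₁.isSimpleContraction.congr (L₁.eqOn_extendLabel _)).addArc_of_notMem htgt' heq),
    ⟨subset_union_left.trans hunion.superset, ?_, ?_⟩, hunion⟩
  · exact fun x hx => (L₁.extendLabel_of_mem _ (hcarrier ▸ hx)).trans (congrFun hlab x)
  · refine Eq.trans ?_ (hpairs₁.symm.trans hpairs)
    exact ArcGraph.addArc_crossingPairs_of_eq (hsrc := hsrc₁) (hdisj := hopen)
      (htgt := (absurd · htgt)) heq

lemma exists_ssubset_of_chord (L : LabelledGraph S) (e : FlatArc M) (hsrc : e.src ∈ L.carrier)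
    (htgt : e.tgt ∈ L.carrier) (hdisj : Disjoint e.openArc L.carrier)
    (hlabel : ∀ x ∈ e.openArc, S.IsLabel x (L.label e.src))
    (hne : L.label e.src ≠ L.label e.tgt)
    (hnew : s(L.label e.src, L.label e.tgt) ∉ L.crossingPairs) :
    ∃ L' : LabelledGraph S, L.crossingPairs ⊂ L'.crossingPairs := by
  obtain ⟨L₁, hcarrier₁, hlab₁, hpairs₁, -, hsrc₁⟩ := L.exists_mem_verts hsrc
  obtain ⟨L₂, hcarrier₂, hlab₂, hpairs₂, hverts, htgt₂⟩ := L₁.exists_mem_verts (hcarrier₁ ▸ htgt)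
  rw [← hcarrier₁, ← hcarrier₂] at hdisj
  rw [← hlab₁, ← hlab₂] at hlabel hne hnew
  rw [← hpairs₁, ← hpairs₂] at hnew ⊢
  have hsrc₂ := hverts hsrc₁
  have hlab := L₂.eqOn_extendLabel (L₂.label e.src)
  have hne' : L₂.extendLabel (L₂.label e.src) e.src ≠ L₂.extendLabel (L₂.label e.src) e.tgt := by
    rwa [← hlab hsrc₂, ← hlab htgt₂]
  have hpairs := L₂.graph.crossingPairs_congr hlab
  have hnew' : s(L₂.extendLabel (L₂.label e.src) e.src, L₂.extendLabel (L₂.label e.src) e.tgt) ∉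
      L₂.graph.crossingPairs (L₂.extendLabel (L₂.label e.src)) := by
    rwa [← hlab hsrc₂, ← hlab htgt₂, ← hpairs]
  refine ⟨L₂.addArc e hsrc₂ hdisj (fun _ => htgt₂) (fun x hx hxL => hlabel x (hx.resolve_left ?_))
    ((L₂.isSimpleContraction.congr hlab).addArc_of_mem htgt₂ hne' hnew'), ?_⟩
  · rintro rfl
    exact hxL (L₂.graph.verts_subset_carrier htgt₂)
  · refine lt_of_lt_of_eq (hpairs.trans_lt (ssubset_insert hnew')) ?_
    exact (ArcGraph.addArc_crossingPairs_of_ne (hsrc := hsrc₂) (hdisj := hdisj)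
      (htgt := fun _ => htgt₂) hne').symm

end LabelledGraph

namespace PieceSystem
variable {M : Type*} [TopologicalSpace M] {𝒟 𝒞 : Type*} (S : PieceSystem M 𝒟 𝒞)

/-- The small pieces that meet `N`. -/
def piecesMeeting (N : Set M) : Set 𝒟 := {d | (S.small d ∩ N).Nonempty}

lemma piecesMeeting_mono {N N' : Set M} (h : N ⊆ N') : S.piecesMeeting N ⊆ S.piecesMeeting N' :=
  fun _ hd => hd.mono (inter_subset_inter_right _ h)

lemma exists_mem_nhds_subsingleton_piecesMeeting [Finite 𝒟] (x : M) :
    ∃ O ∈ 𝓝 x, (S.piecesMeeting O).Subsingleton := by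
  refine ⟨{y | ∀ d, y ∈ closure (S.small d) → x ∈ closure (S.small d)}, ?_, ?_⟩
  · refine eventually_all.2 fun d => ?_
    by_cases h : x ∈ closure (S.small d)
    · exact .of_forall fun _ _ => h
    · filter_upwards [isClosed_closure.isOpen_compl.mem_nhds h] with y hy hy'
      exact absurd hy' hy
  · rintro d ⟨y, hd, hy⟩ d' ⟨y', hd', hy'⟩
    exact S.eq_of_mem_closure (hy d (subset_closure hd)) (hy' d' (subset_closure hd'))

end PieceSystem

namespace LabelledGraph
variable {M : Type*} [TopologicalSpace M] {𝒟 𝒞 : Type*} {S : PieceSystem M 𝒟 𝒞}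
  {L : LabelledGraph S} {c : 𝒞} {A : Set 𝒟}

section Growth
variable [T2Space M]

lemma exists_extends_mem (L : LabelledGraph S) (e : FlatArc M) (hsrc : e.src ∈ L.carrier)
    (hlabel : ∀ x ∈ e.closedArc, x ∈ L.carrier → ∀ y ∈ e.closedArc, y ∉ L.carrier →
      S.IsLabel y (L.label x)) :
    ∃ L' : LabelledGraph S, L.Extends L' ∧ e.tgt ∈ L'.carrier ∧
      L'.carrier ⊆ L.carrier ∪ e.closedArc := by
  by_cases htgt : e.tgt ∈ L.carrier
  · exact ⟨L, .refl L, htgt, subset_union_left⟩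
  obtain ⟨e', hsrc', htgt', -, hclosed, hdisj⟩ :=
    e.exists_gap L.isClosed_carrier isClosed_singleton (disjoint_singleton_right.2 htgt) hsrc rfl
  rw [mem_singleton_iff] at htgt'
  have hP : Disjoint (insert e'.tgt e'.openArc) L.carrier :=
    disjoint_insert_left.2 ⟨htgt' ▸ htgt, (disjoint_union_right.1 hdisj).1⟩
  have hPsub : insert e'.tgt e'.openArc ⊆ e.closedArc :=
    (insert_subset e'.tgt_mem_closedArc e'.openArc_subset_closedArc).trans hclosed
  obtain ⟨L', hext, hcarrier⟩ := L.exists_extends_of_pendant e' hsrc' hP fun x hx =>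
    hlabel _ (hclosed e'.src_mem_closedArc) hsrc' x (hPsub hx) (disjoint_left.1 hP hx)
  exact ⟨L', hext, htgt' ▸ hcarrier ▸ .inr (mem_insert _ _),
    hcarrier ▸ union_subset_union_right _ hPsub⟩

variable [ChartedSpace ℂ M]

lemma exists_extends_mem_of_mem_small (L : LabelledGraph S) {d : 𝒟} {x : M} (hx : x ∈ S.small d) :
    ∃ L' : LabelledGraph S, L.Extends L' ∧ x ∈ L'.carrier ∧
      L'.carrier ⊆ L.carrier ∪ S.small d := by
  suffices S.small d ⊆ {y | ∃ L' : LabelledGraph S, L.Extends L' ∧ y ∈ L'.carrier ∧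
      L'.carrier ⊆ L.carrier ∪ S.small d} from this hx
  refine subset_of_isPreconnected_of_forall_exists_nhds (S.isPreconnected_small d) ?_ ?_
  · obtain ⟨y, hy, hyd⟩ := L.exists_mem d
    exact ⟨y, hyd, L, .refl L, hy, subset_union_left⟩
  · intro y hy
    obtain ⟨N, hNd, hN, hyN, hconv⟩ :=
      exists_isOpen_isFlatConvex_subset ((S.isOpen_small d).mem_nhds hy)
    refine ⟨N, hN.mem_nhds hyN, ?_⟩
    rintro ⟨z, hz, L₁, hL₁, hzL₁, hsub₁⟩ z' hz'
    rcases eq_or_ne z z' with rfl | hne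
    · exact ⟨L₁, hL₁, hzL₁, hsub₁⟩
    obtain ⟨e, rfl, rfl, heN⟩ := hconv z hz z' hz' hne
    obtain ⟨L₂, hL₂, htgt, hsub₂⟩ := L₁.exists_extends_mem e hzL₁ fun u hu huL v hv _ =>
      L₁.label_eq huL (hNd (heN hu)) ▸ PieceSystem.isLabel_of_mem_small (hNd (heN hv))
    exact ⟨L₂, hL₁.trans hL₂, htgt,
      hsub₂.trans (union_subset hsub₁ ((heN.trans hNd).trans subset_union_right))⟩

lemma exists_extends_mem_of_isFlatConvex (L : LabelledGraph S) {N : Set M} (hN : IsFlatConvex N)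
    (hNc : N ⊆ S.large c) (hone : (S.piecesMeeting N).Subsingleton) {y y' : M} (hy : y ∈ N)
    (hyL : y ∈ L.carrier) (hy' : y' ∈ N) :
    ∃ L' : LabelledGraph S, L.Extends L' ∧ y' ∈ L'.carrier := by
  by_cases hy'L : y' ∈ L.carrier
  · exact ⟨L, .refl L, hy'L⟩
  obtain ⟨e₀, rfl, rfl, he₀N⟩ := hN y hy y' hy' (ne_of_mem_of_not_mem hyL hy'L)
  obtain ⟨e, hsrc, htgt, -, hclosed, hdisj⟩ := e₀.exists_gap L.isClosed_carrier
    isClosed_singleton (disjoint_singleton_right.2 hy'L) hyL rfl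
  rw [mem_singleton_iff] at htgt
  rw [← htgt] at hy'L ⊢
  have heN := hclosed.trans he₀N
  have hopen := (disjoint_union_right.1 hdisj).1
  by_cases hsmall : ∃ x ∈ insert e.tgt e.openArc, ∃ d, x ∈ S.small d
  · obtain ⟨x, hx, d, hd⟩ := hsmall
    obtain ⟨L', hext, hxL', hsub⟩ := L.exists_extends_mem_of_mem_small hd
    rcases hx with rfl | hx
    · exact ⟨L', hext, hxL'⟩
    obtain ⟨e', rfl, htgt', hopen'⟩ := e.exists_arc_mem_tgt hx
    have hP : e'.closedArc ⊆ insert e.tgt e.openArc := by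
      rw [FlatArc.closedArc_eq, htgt', insert_comm]
      exact insert_subset_insert (insert_subset hx hopen')
    have hPN : e'.closedArc ⊆ N := hP.trans <|
      (insert_subset e.tgt_mem_closedArc e.openArc_subset_closedArc).trans heN
    have hPL : Disjoint e'.closedArc L.carrier :=
      (disjoint_insert_left.2 ⟨hy'L, hopen⟩).mono_left hP
    obtain ⟨L'', hext', htgt'', -⟩ := L'.exists_extends_mem e' hxL' fun u hu huL' v hv _ =>
      L'.label_eq huL' ((hsub huL').resolve_left (disjoint_left.1 hPL hu)) ▸
        PieceSystem.isLabel_of_mem_large (hNc (hPN hv))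
          (S.small_subset hd (hNc (hPN e'.src_mem_closedArc)))
          fun d' hd' => hone ⟨_, hd, hPN e'.src_mem_closedArc⟩ ⟨v, hd', hPN hv⟩
    exact ⟨L'', hext.trans hext', htgt' ▸ htgt''⟩
  · have hnew (v : M) (hv : v ∈ e.closedArc) (hvL : v ∉ L.carrier) :
        v ∈ insert e.tgt e.openArc := by
      rw [FlatArc.closedArc_eq] at hv
      exact hv.resolve_left fun h => hvL (h ▸ hsrc)
    obtain ⟨L', hext, htgt', -⟩ := L.exists_extends_mem e hsrc fun u hu huL v hv hvL =>
      PieceSystem.isLabel_of_mem_large (hNc (heN hv)) (L.small_label_subset huL (hNc (heN hu)))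
        fun d hd => (hsmall ⟨v, hnew v hv hvL, d, hd⟩).elim
    exact ⟨L', hext, htgt'⟩

end Growth

/-- No edge of the contraction of `L` joins a piece in `A` to a piece outside of `A` when both
pieces lie in `S.large c`. -/
def NoCrossing (L : LabelledGraph S) (c : 𝒞) (A : Set 𝒟) : Prop :=
  ∀ p ∈ A, ∀ q ∉ A, S.small p ⊆ S.large c → S.small q ⊆ S.large c → s(p, q) ∉ L.crossingPairs

lemma NoCrossing.compl (h : L.NoCrossing c A) : L.NoCrossing c Aᶜ := fun p hp q hq hpc hqc => by
  rw [Sym2.eq_swap]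
  exact h q (not_notMem.1 hq) p hp hqc hpc

lemma NoCrossing.of_extends {L' : LabelledGraph S} (h : L.NoCrossing c A) (hext : L.Extends L') :
    L'.NoCrossing c A := by
  rwa [NoCrossing, hext.crossingPairs_eq]

lemma NoCrossing.mem_iff (h : L.NoCrossing c A) {p q : 𝒟} (hp : S.small p ⊆ S.large c)
    (hq : S.small q ⊆ S.large c) (hpq : s(p, q) ∈ L.crossingPairs) : p ∈ A ↔ q ∈ A := by
  by_contra hcon
  rcases not_iff.1 hcon with h'
  by_cases hpA : p ∈ A
  · exact h p hpA q (fun hqA => (h'.2 hqA) hpA) hp hq hpq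
  · exact h q (h'.1 hpA) p hpA hq hp (Sym2.eq_swap ▸ hpq)

lemma NoCrossing.label_mem_iff_of_isEndpoint (h : L.NoCrossing c A) {i : L.ι} {x y : M}
    (hy : y ∈ (L.graph.arc i).openArc) (hx : L.graph.IsEndpoint x i) (hxc : x ∈ S.large c)
    (hyc : y ∈ S.large c) : L.label y ∈ A ↔ L.label x ∈ A := by
  have hpc := L.small_label_subset (L.graph.openArc_subset_carrier i hy) hyc
  rw [L.label_openArc i y hy] at hpc ⊢
  rcases hx with rfl | rfl
  · rfl
  by_cases hlab : L.label (L.graph.arc i).src = L.label (L.graph.arc i).tgt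
  · rw [hlab]
  · exact h.mem_iff hpc (L.small_label_subset
      (L.graph.verts_subset_carrier (L.graph.tgt_mem i)) hxc) ⟨i, hlab, rfl⟩

variable [T2Space M]

lemma NoCrossing.eventually_label_mem_iff (h : L.NoCrossing c A) {x : M} (hx : x ∈ L.carrier)
    (hxc : x ∈ S.large c) : ∀ᶠ y in 𝓝 x, y ∈ L.carrier → (L.label y ∈ A ↔ L.label x ∈ A) := by
  rcases hx with hx | ⟨i, hi⟩
  · have hisolated : ∀ᶠ y in 𝓝 x, y ∉ (L.graph.verts : Set M) \ {x} :=
      (L.graph.verts.finite_toSet.sdiff.isClosed).isOpen_compl.mem_nhds fun hx => hx.2 rfl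
    filter_upwards [L.graph.eventually_isEndpoint_of_mem_openArc hx, hisolated,
      (S.isOpen_large c).mem_nhds hxc] with y hend hy hyc hyL
    rcases hyL with hyV | ⟨i, hi⟩
    · rw [not_notMem.1 fun hne => hy ⟨hyV, hne⟩]
    · exact h.label_mem_iff_of_isEndpoint hi (hend i hi) hxc hyc
  · filter_upwards [L.graph.eventually_carrier_iff hi] with y hy hyL
    rw [L.label_openArc i y (hy.1.2 (hy.2.1 hyL)), L.label_openArc i x hi]

lemma NoCrossing.isClosed_setOf_label_mem (h : L.NoCrossing c A) {F : Set M} (hF : IsClosed F)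
    (hFL : F ⊆ L.carrier) (hFc : F ⊆ S.large c) : IsClosed {x ∈ F | L.label x ∈ A} := by
  refine isClosed_iff_frequently.2 fun x hx => ?_
  have hxF : x ∈ F := hF.mem_of_frequently_of_tendsto (hx.mono fun _ hy => hy.1) tendsto_id
  obtain ⟨y, hy, hyx⟩ :=
    (hx.and_eventually (h.eventually_label_mem_iff (hFL hxF) (hFc hxF))).exists
  exact ⟨hxF, (hyx (hFL hy.1)).1 hy.2⟩

lemma NoCrossing.exists_gap (h : L.NoCrossing c A) (e : FlatArc M) (hec : e.closedArc ⊆ S.large c)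
    (hsrc : e.src ∈ L.carrier) (htgt : e.tgt ∈ L.carrier) (hsrcA : L.label e.src ∈ A)
    (htgtA : L.label e.tgt ∉ A) :
    ∃ e' : FlatArc M, e'.src ∈ L.carrier ∧ e'.tgt ∈ L.carrier ∧ L.label e'.src ∈ A ∧
      L.label e'.tgt ∉ A ∧ e'.openArc ⊆ e.openArc ∧ e'.closedArc ⊆ e.closedArc ∧
      Disjoint e'.openArc L.carrier := by
  have hF := e.isCompact_closedArc.isClosed.inter L.isClosed_carrier
  have hclosed {B : Set 𝒟} (hB : L.NoCrossing c B) :=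
    hB.isClosed_setOf_label_mem hF inter_subset_right (inter_subset_left.trans hec)
  obtain ⟨e', hsrc', htgt', hopen', hclosed', hdisj⟩ :=
    e.exists_gap (hclosed h) (hclosed h.compl) (disjoint_left.2 fun _ hx hx' => hx'.2 hx.2)
      ⟨⟨e.src_mem_closedArc, hsrc⟩, hsrcA⟩ ⟨⟨e.tgt_mem_closedArc, htgt⟩, htgtA⟩
  refine ⟨e', hsrc'.1.2, htgt'.1.2, hsrc'.2, htgt'.2, hopen', hclosed',
    disjoint_left.2 fun x hx hxL => disjoint_left.1 hdisj hx ?_⟩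
  have hxF : x ∈ e.closedArc ∩ L.carrier := ⟨hclosed' (e'.openArc_subset_closedArc hx), hxL⟩
  by_cases hxA : L.label x ∈ A
  exacts [.inl ⟨hxF, hxA⟩, .inr ⟨hxF, hxA⟩]

omit [T2Space M] in
lemma NoCrossing.exists_ssubset_of_disjoint (h : L.NoCrossing c A) (e : FlatArc M)
    (hec : e.closedArc ⊆ S.large c) (hsrc : e.src ∈ L.carrier) (htgt : e.tgt ∈ L.carrier)
    (hsrcA : L.label e.src ∈ A) (htgtA : L.label e.tgt ∉ A) (hdisj : Disjoint e.openArc L.carrier)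
    (hsmall : ∀ x ∈ e.openArc, ∀ d, x ∈ S.small d → L.label e.src = d) :
    ∃ L' : LabelledGraph S, L.crossingPairs ⊂ L'.crossingPairs := by
  have hsrcc := L.small_label_subset hsrc (hec e.src_mem_closedArc)
  exact L.exists_ssubset_of_chord e hsrc htgt hdisj
    (fun x hx => PieceSystem.isLabel_of_mem_large (hec (e.openArc_subset_closedArc hx)) hsrcc
      (hsmall x hx))
    (ne_of_mem_of_not_mem hsrcA htgtA)
    (h _ hsrcA _ htgtA hsrcc (L.small_label_subset htgt (hec e.tgt_mem_closedArc)))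

variable [ChartedSpace ℂ M]

lemma NoCrossing.exists_ssubset_of_mem_small (h : L.NoCrossing c A) (e : FlatArc M)
    (hec : e.closedArc ⊆ S.large c) (hone : (S.piecesMeeting e.closedArc).Subsingleton)
    (htgt : e.tgt ∈ L.carrier) (htgtA : L.label e.tgt ∉ A) (hdisj : Disjoint e.openArc L.carrier)
    {x : M} {d : 𝒟} (hx : x ∈ e.openArc) (hd : x ∈ S.small d) (hdA : d ∈ A) :
    ∃ L' : LabelledGraph S, L.crossingPairs ⊂ L'.crossingPairs := by
  obtain ⟨L₁, hext, hxL₁, hsub⟩ := L.exists_extends_mem_of_mem_small hd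
  obtain ⟨e₁, rfl, htgt₁, hopen₁⟩ := e.exists_arc_mem_tgt hx
  have hclosed₁ : e₁.closedArc ⊆ insert e.tgt e.openArc := by
    rw [FlatArc.closedArc_eq, htgt₁, insert_comm]
    exact insert_subset_insert (insert_subset hx hopen₁)
  have hec₁ : e₁.closedArc ⊆ e.closedArc :=
    hclosed₁.trans (insert_subset e.tgt_mem_closedArc e.openArc_subset_closedArc)
  have htgtA₁ : L₁.label e.tgt ∉ A := by rwa [hext.label_eqOn htgt]
  have htgtL₁ := hext.carrier_subset htgt
  rw [← htgt₁] at htgtA₁ htgtL₁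
  have hsrcA₁ : L₁.label e₁.src ∈ A := by rwa [L₁.label_eq hxL₁ hd]
  have h₁ := h.of_extends hext
  obtain ⟨e₂, hsrc₂, htgt₂, hsrcA₂, htgtA₂, -, hclosed₂, hdisj₂⟩ :=
    h₁.exists_gap e₁ (hec₁.trans hec) hxL₁ htgtL₁ hsrcA₁ htgtA₁
  have hec₂ := hclosed₂.trans hec₁
  have hsrc_open : e₂.src ∈ e.openArc :=
    (hclosed₁ (hclosed₂ e₂.src_mem_closedArc)).resolve_left
      fun heq => htgtA₁ (htgt₁ ▸ heq ▸ hsrcA₂)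
  have hlab : L₁.label e₂.src = d :=
    L₁.label_eq hsrc₂ ((hsub hsrc₂).resolve_left (disjoint_left.1 hdisj hsrc_open))
  obtain ⟨L', hL'⟩ := h₁.exists_ssubset_of_disjoint e₂ (hec₂.trans hec) hsrc₂ htgt₂ hsrcA₂ htgtA₂
    hdisj₂ fun y hy d' hd' => hlab.trans <| hone ⟨_, hd, e.openArc_subset_closedArc hx⟩
      ⟨y, hd', hec₂ (e₂.openArc_subset_closedArc hy)⟩
  exact ⟨L', hext.crossingPairs_eq ▸ hL'⟩

lemma NoCrossing.exists_ssubset (h : L.NoCrossing c A) (e : FlatArc M)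
    (hec : e.closedArc ⊆ S.large c) (hone : (S.piecesMeeting e.closedArc).Subsingleton)
    (hsrc : e.src ∈ L.carrier) (htgt : e.tgt ∈ L.carrier) (hsrcA : L.label e.src ∈ A)
    (htgtA : L.label e.tgt ∉ A) :
    ∃ L' : LabelledGraph S, L.crossingPairs ⊂ L'.crossingPairs := by
  obtain ⟨e', hsrc', htgt', hsrcA', htgtA', -, hclosed, hdisj⟩ :=
    h.exists_gap e hec hsrc htgt hsrcA htgtA
  have hec' := hclosed.trans hec
  have hone' := hone.anti (S.piecesMeeting_mono hclosed)
  by_cases hsmall : ∃ x ∈ e'.openArc, ∃ d, x ∈ S.small d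
  · obtain ⟨x, hx, d, hd⟩ := hsmall
    by_cases hdA : d ∈ A
    · exact h.exists_ssubset_of_mem_small e' hec' hone' htgt' htgtA' hdisj hx hd hdA
    · rw [← FlatArc.reverse_closedArc] at hec' hone'
      rw [← FlatArc.reverse_openArc] at hdisj hx
      rw [← FlatArc.reverse_tgt] at hsrc' hsrcA'
      exact h.compl.exists_ssubset_of_mem_small e'.reverse hec' hone' hsrc' (not_not.2 hsrcA')
        hdisj hx hd hdA
  · exact h.exists_ssubset_of_disjoint e' hec' hsrc' htgt' hsrcA' htgtA' hdisj
      fun x hx d hd => (hsmall ⟨x, hx, d, hd⟩).elim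

lemma not_noCrossing_of_maximal [Finite 𝒟]
    (hmax : ∀ L' : LabelledGraph S, ¬ L.crossingPairs ⊂ L'.crossingPairs) {p q : 𝒟}
    (hp : S.small p ⊆ S.large c) (hq : S.small q ⊆ S.large c) (hpA : p ∈ A) (hqA : q ∉ A) :
    ¬ L.NoCrossing c A := by
  intro h
  have hreach : S.large c ⊆
      {y | ∃ L' : LabelledGraph S, L.Extends L' ∧ y ∈ L'.carrier ∧ L'.label y ∈ A} := by
    refine subset_of_isPreconnected_of_forall_exists_nhds (S.isPreconnected_large c) ?_ ?_
    · obtain ⟨x, hx, hxp⟩ := L.exists_mem p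
      exact ⟨x, hp hxp, L, .refl L, hx, (L.label_eq hx hxp).symm ▸ hpA⟩
    · intro x hx
      obtain ⟨O, hO, hone⟩ := S.exists_mem_nhds_subsingleton_piecesMeeting x
      obtain ⟨N, hNO, hN, hxN, hconv⟩ := exists_isOpen_isFlatConvex_subset
        (inter_mem hO ((S.isOpen_large c).mem_nhds hx))
      have hNc : N ⊆ S.large c := hNO.trans inter_subset_right
      have honeN := hone.anti (S.piecesMeeting_mono (hNO.trans inter_subset_left))
      refine ⟨N, hN.mem_nhds hxN, ?_⟩
      rintro ⟨y, hy, L₁, hL₁, hyL₁, hyA⟩ y' hy'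
      obtain ⟨L₂, hL₂, hy'L₂⟩ :=
        L₁.exists_extends_mem_of_isFlatConvex hconv hNc honeN hy hyL₁ hy'
      refine ⟨L₂, hL₁.trans hL₂, hy'L₂, ?_⟩
      by_contra hy'A
      rw [← hL₂.label_eqOn hyL₁] at hyA
      obtain ⟨e, rfl, rfl, heN⟩ := hconv y hy y' hy' fun heq => hy'A (heq ▸ hyA)
      obtain ⟨L₃, hL₃⟩ := (h.of_extends (hL₁.trans hL₂)).exists_ssubset e (heN.trans hNc)
        (honeN.anti (S.piecesMeeting_mono heN)) (hL₂.carrier_subset hyL₁) hy'L₂ hyA hy'A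
      exact hmax L₃ ((hL₁.trans hL₂).crossingPairs_eq ▸ hL₃)
  obtain ⟨x, hx⟩ := S.nonempty_small q
  obtain ⟨L', -, hxL', hxA⟩ := hreach (hq hx)
  exact hqA (L'.label_eq hxL' hx ▸ hxA)

end LabelledGraph

namespace PieceSystem
variable {M : Type*} [TopologicalSpace M] {𝒟 𝒞 : Type*} (S : PieceSystem M 𝒟 𝒞)

lemma nonempty_labelledGraph [Finite 𝒟] [Nonempty 𝒟] : Nonempty (LabelledGraph S) := by
  classical
  have := Fintype.ofFinite 𝒟
  choose p hp using S.nonempty_small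
  have hinj : Function.Injective p := fun d d' h => S.eq_of_mem_small (hp d) (h ▸ hp d')
  have hlab : ∀ x, ∃ l, ∀ d, x ∈ S.small d → l = d := fun x => by
    by_cases h : ∃ d, x ∈ S.small d
    · exact ⟨h.choose, fun d => S.eq_of_mem_small h.choose_spec⟩
    · exact ⟨Classical.arbitrary 𝒟, fun d hd => absurd ⟨d, hd⟩ h⟩
  choose label hlabel using hlab
  exact ⟨{
    ι := Empty
    fintype := inferInstance
    graph :=
      { arc := Empty.elim
        verts := Finset.univ.image p
        src_mem := fun i => i.elim
        tgt_mem := fun i => i.elim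
        notMem_verts := fun i => i.elim
        eq_of_mem := fun i => i.elim }
    label
    isSimpleContraction :=
      { injOn := fun i => i.elim
        eq_one := fun _ _ _ => Subsingleton.elim _ _
        card_add := by
          rw [Finset.card_image_of_injective _ hinj, ArcGraph.crossingPairs,
            eq_empty_of_isEmpty {i : Empty | _}]
          simp }
    label_openArc := fun i => i.elim
    isLabel := by
      rintro _ (hx | ⟨i, -⟩)
      · obtain ⟨d, -, rfl⟩ := Finset.mem_image.1 hx
        rw [hlabel _ d (hp d)]
        exact isLabel_of_mem_small (hp d)
      · exact i.elim
    exists_mem := fun d => ⟨p d, .inl (Finset.mem_image_of_mem p (Finset.mem_univ d)), hp d⟩ }⟩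

theorem exists_ncard_le_forall_exists_crossing [T2Space M] [ChartedSpace ℂ M] [Finite 𝒟] {w : ℕ}
    (hw : HomologyRankLE M w) : ∃ E : Set (Sym2 𝒟), E.ncard ≤ 3 * Nat.card 𝒟 + 3 * w ∧
      ∀ c, ∀ A : Set 𝒟, (∃ p ∈ A, S.small p ⊆ S.large c) → (∃ q ∉ A, S.small q ⊆ S.large c) →
        ∃ p ∈ A, ∃ q ∉ A, S.small p ⊆ S.large c ∧ S.small q ⊆ S.large c ∧ s(p, q) ∈ E := by
  rcases isEmpty_or_nonempty 𝒟 with _ | _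
  · exact ⟨∅, by simp, fun _ _ ⟨p, _⟩ => isEmptyElim p⟩
  obtain ⟨L₀⟩ := S.nonempty_labelledGraph
  obtain ⟨_, ⟨L, rfl⟩, hmax⟩ :=
    (toFinite (range (LabelledGraph.crossingPairs (S := S)))).exists_maximal ⟨_, L₀, rfl⟩
  refine ⟨L.crossingPairs, L.isSimpleContraction.ncard_crossingPairs_le hw, ?_⟩
  rintro c A ⟨p, hpA, hp⟩ ⟨q, hqA, hq⟩
  have hcross := LabelledGraph.not_noCrossing_of_maximal
    (fun L' hL' => hL'.2 (hmax ⟨L', rfl⟩ hL'.1)) hp hq hpA hqA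
  simp only [LabelledGraph.NoCrossing] at hcross
  push Not at hcross
  exact hcross

end PieceSystem

/-! ### Double counting of faces and ridges -/

lemma card_le_ncard_add_card_of_forall_ne {X C : Type*} [Finite X] [Finite C] (E : Set (Sym2 X))
    (f : X → C) (hf : ∀ A : Set X, (∀ x ∈ A, ∀ y ∉ A, s(x, y) ∉ E) → ∀ x ∈ A, ∀ y ∉ A, f x ≠ f y) :
    Nat.card X ≤ E.ncard + Nat.card C := by
  have := Fintype.ofFinite X
  have := Fintype.ofFinite C
  have := Fintype.ofFinite E
  -- The functions that are constant along the edges are those that factor through `f`.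
  let δ : (X → ℚ) →ₗ[ℚ] (E → ℚ) :=
    LinearMap.funLeft ℚ ℚ (fun e => e.1.out.1) - LinearMap.funLeft ℚ ℚ (fun e => e.1.out.2)
  have hker : δ.ker ≤ (LinearMap.funLeft ℚ ℚ f).range := by
    intro g hg
    have hedge (x y : X) (hxy : s(x, y) ∈ E) : g x = g y := by
      have hout : g s(x, y).out.1 = g s(x, y).out.2 := sub_eq_zero.1 (congrFun hg ⟨_, hxy⟩)
      have hmk : s(s(x, y).out.1, s(x, y).out.2) = s(x, y) := Quot.out_eq _
      rcases Sym2.eq_iff.1 hmk with ⟨h₁, h₂⟩ | ⟨h₁, h₂⟩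
      · rwa [h₁, h₂] at hout
      · rw [h₁, h₂] at hout
        exact hout.symm
    have hfactors : g.FactorsThrough f := fun x y hxy => by
      by_contra hne
      exact hf {z | g z = g x} (fun z hz z' hz' hzz' => hz' ((hedge z z' hzz').symm.trans hz))
        x rfl y (fun hy => hne hy.symm) hxy
    exact ⟨Function.extend f g fun _ => 0, hfactors.extend_comp (e' := fun _ => 0)⟩
  have hrank := δ.finrank_range_add_finrank_ker
  have hrange := δ.range.finrank_le
  have hconst := (Submodule.finrank_mono hker).trans (LinearMap.finrank_range_le _)
  simp only [Module.finrank_fintype_fun_eq_card] at hrank hrange hconst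
  rw [← Nat.card_coe_set_eq]
  simp only [Nat.card_eq_fintype_card]
  lia

/-- The combinatorial data of a piece system together with its crossing edges. In an arrangement of
sets indexed by `α`, the piece `d` is a component of the intersection over `face d`, and `c` is a
component of the intersection over `ridge c`. -/
structure FaceSystem (α 𝒟 𝒞 : Type*) (k : ℕ) where
  face : 𝒟 → Finset α
  ridge : 𝒞 → Finset α
  Inc : 𝒟 → 𝒞 → Prop
  edges : Set (Sym2 𝒟)
  card_face : ∀ d, (face d).card = k + 1
  exists_inc : ∀ {τ d}, τ.card = k → τ ⊆ face d → ∃ c, ridge c = τ ∧ Inc d c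
  ridge_subset : ∀ {d c}, Inc d c → ridge c ⊆ face d
  exists_crossing : ∀ c (A : Set 𝒟), (∃ p ∈ A, Inc p c) → (∃ q ∉ A, Inc q c) →
    ∃ p ∈ A, ∃ q ∉ A, Inc p c ∧ Inc q c ∧ s(p, q) ∈ edges

namespace FaceSystem
variable {α 𝒟 𝒞 : Type*} {k : ℕ} (S : FaceSystem α 𝒟 𝒞 k)

/-- The edges between pieces with the same face. -/
def parallelEdges : Set (Sym2 𝒟) :=
  {e ∈ S.edges | (e.map S.face).IsDiag}

/-- The contraction of the parallel edges. -/
def contract : FaceSystem α (Quot fun p q => s(p, q) ∈ S.parallelEdges) 𝒞 k where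
  face := Quot.lift S.face fun _ _ h => h.2
  ridge := S.ridge
  Inc := fun x c => ∃ d, Quot.mk _ d = x ∧ S.Inc d c
  edges := Sym2.map (Quot.mk _) '' (S.edges \ S.parallelEdges)
  card_face := Quot.ind S.card_face
  exists_inc := fun {τ} x => by
    induction x using Quot.ind with | _ d => ?_
    intro hτ hτd
    obtain ⟨c, hc, hdc⟩ := S.exists_inc hτ hτd
    exact ⟨c, hc, d, rfl, hdc⟩
  ridge_subset := by
    rintro _ c ⟨d, rfl, hdc⟩
    exact S.ridge_subset hdc
  exists_crossing := by
    rintro c A ⟨_, hp, p, rfl, hpc⟩ ⟨_, hq, q, rfl, hqc⟩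
    obtain ⟨p', hp', q', hq', hpc', hqc', hpq⟩ :=
      S.exists_crossing c (Quot.mk _ ⁻¹' A) ⟨p, hp, hpc⟩ ⟨q, hq, hqc⟩
    exact ⟨_, hp', _, hq', ⟨p', rfl, hpc'⟩, ⟨q', rfl, hqc'⟩, s(p', q'),
      ⟨hpq, fun hpar : s(p', q') ∈ S.parallelEdges =>
        ne_of_mem_of_not_mem (mem_preimage.1 hp') hq' (Quot.sound hpar)⟩, rfl⟩

lemma face_ne_of_mem_edges_contract {x y} (h : s(x, y) ∈ S.contract.edges) :
    S.contract.face x ≠ S.contract.face y := by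
  obtain ⟨e, ⟨he, hpar⟩, hxy⟩ := h
  induction e using Sym2.ind with | _ p q => ?_
  have hpq : S.face p ≠ S.face q := fun hface => hpar ⟨he, hface⟩
  rcases Sym2.eq_iff.1 hxy with ⟨rfl, rfl⟩ | ⟨rfl, rfl⟩
  exacts [hpq, hpq.symm]

lemma card_le_ncard_parallelEdges_add [Finite 𝒟] :
    Nat.card 𝒟 ≤
      S.parallelEdges.ncard + Nat.card (Quot fun p q => s(p, q) ∈ S.parallelEdges) := by
  refine card_le_ncard_add_card_of_forall_ne _ (Quot.mk _) fun A hA x hx y hy hxy => hy ?_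
  have hlift : ∀ p q, s(p, q) ∈ S.parallelEdges → (p ∈ A) = (q ∈ A) := fun p q hpq => by
    refine propext ⟨fun hp => ?_, fun hq => ?_⟩
    · by_contra hq
      exact hA p hp q hq hpq
    · by_contra hp
      exact hA q hq p hp (Sym2.eq_swap ▸ hpq)
  exact (congrArg (Quot.lift (· ∈ A) hlift) hxy).mp hx

lemma inter_face_eq [DecidableEq α] {p q : 𝒟} {τ : Finset α} (hτ : τ.card = k)
    (hne : S.face p ≠ S.face q) (hp : τ ⊆ S.face p) (hq : τ ⊆ S.face q) :
    S.face p ∩ S.face q = τ := by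
  refine (Finset.eq_of_subset_of_card_le (Finset.subset_inter hp hq) ?_).symm
  by_contra! hcard
  have hp' : S.face p ∩ S.face q = S.face p :=
    Finset.eq_of_subset_of_card_le Finset.inter_subset_left (by rw [S.card_face]; lia)
  have hq' : S.face p ∩ S.face q = S.face q :=
    Finset.eq_of_subset_of_card_le Finset.inter_subset_right (by rw [S.card_face]; lia)
  exact hne (hp'.symm.trans hq')

lemma card_subset_face_le [DecidableEq α] [Finite 𝒟] [Finite 𝒞]
    (hne : ∀ {p q}, s(p, q) ∈ S.edges → S.face p ≠ S.face q) {τ : Finset α} (hτ : τ.card = k) :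
    Nat.card {d // τ ⊆ S.face d} ≤
      {e ∈ S.edges | (e.map S.face).inf = τ}.ncard + Nat.card {c // S.ridge c = τ} := by
  have hinc (x : {d // τ ⊆ S.face d}) : ∃ c : {c // S.ridge c = τ}, S.Inc x c :=
    let ⟨c, hc, hxc⟩ := S.exists_inc hτ x.2
    ⟨⟨c, hc⟩, hxc⟩
  choose f hf using hinc
  let E : Set (Sym2 {d // τ ⊆ S.face d}) :=
    Sym2.map Subtype.val ⁻¹' {e ∈ S.edges | (e.map S.face).inf = τ}
  have hE : E.ncard ≤ {e ∈ S.edges | (e.map S.face).inf = τ}.ncard :=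
    ncard_le_ncard_of_injOn _ (fun _ he => he)
      (Sym2.map.injective Subtype.val_injective).injOn (toFinite _)
  refine (card_le_ncard_add_card_of_forall_ne E f fun A hA x hx y hy hxy => ?_).trans
    (Nat.add_le_add_right hE _)
  obtain ⟨_, ⟨p, hp, rfl⟩, q, hq, -, hqc, hpq⟩ := S.exists_crossing (f x) (Subtype.val '' A)
    ⟨x, mem_image_of_mem _ hx, hf x⟩
    ⟨y, fun h => hy (Subtype.val_injective.mem_set_image.1 h), hxy ▸ hf y⟩
  have hτq : τ ⊆ S.face q := (f x).2.symm.subset.trans (S.ridge_subset hqc)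
  exact hA p hp ⟨q, hτq⟩ (fun h => hq (mem_image_of_mem _ h))
    ⟨hpq, S.inter_face_eq hτ (hne hpq) p.2 hτq⟩

lemma sum_card_subset_face [Finite 𝒟] {T : Finset (Finset α)} (hTk : ∀ τ ∈ T, τ.card = k)
    (hT : ∀ d, (S.face d).powersetCard k ⊆ T) :
    ∑ τ ∈ T, Nat.card {d // τ ⊆ S.face d} = (k + 1) * Nat.card 𝒟 := by
  classical
  have := Fintype.ofFinite 𝒟
  have hbelow (d : 𝒟) : {τ ∈ T | τ ⊆ S.face d} = (S.face d).powersetCard k := by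
    ext τ
    rw [Finset.mem_filter, Finset.mem_powersetCard]
    exact ⟨fun h => ⟨h.2, hTk τ h.1⟩, fun h => ⟨hT d (Finset.mem_powersetCard.2 h), h.1⟩⟩
  calc ∑ τ ∈ T, Nat.card {d // τ ⊆ S.face d}
      = ∑ τ ∈ T, (Finset.univ.filter fun d => τ ⊆ S.face d).card := by
        simp only [Nat.card_eq_fintype_card, Fintype.card_subtype]
    _ = ∑ d : 𝒟, {τ ∈ T | τ ⊆ S.face d}.card :=
        Finset.sum_card_bipartiteAbove_eq_sum_card_bipartiteBelow _
    _ = (k + 1) * Nat.card 𝒟 := by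
        simp only [hbelow, Finset.card_powersetCard, S.card_face, Nat.choose_succ_self_right,
          Finset.sum_const, Finset.card_univ, smul_eq_mul, Nat.card_eq_fintype_card, mul_comm]

lemma card_mul_le_of_forall_face_ne [Finite 𝒟] [Finite 𝒞]
    (hne : ∀ {p q}, s(p, q) ∈ S.edges → S.face p ≠ S.face q) {T : Finset (Finset α)}
    (hTk : ∀ τ ∈ T, τ.card = k) (hT : ∀ d, (S.face d).powersetCard k ⊆ T) {b : ℕ}
    (hb : ∀ τ ∈ T, Nat.card {c // S.ridge c = τ} ≤ b) :
    (k + 1) * Nat.card 𝒟 ≤ S.edges.ncard + b * T.card := by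
  classical
  have hedges : ∑ τ ∈ T, {e ∈ S.edges | (e.map S.face).inf = τ}.ncard ≤ S.edges.ncard := by
    have hE := toFinite S.edges
    have hcard (τ : Finset α) : {e ∈ S.edges | (e.map S.face).inf = τ}.ncard =
        {e ∈ hE.toFinset | (e.map S.face).inf = τ}.card := by
      rw [← ncard_coe_finset, Finset.coe_filter]
      simp only [Finite.mem_toFinset]
    rw [ncard_eq_toFinset_card _ hE]
    simp only [hcard]
    rw [Finset.sum_card_fiberwise_eq_card_filter]
    exact Finset.card_filter_le _ _
  calc (k + 1) * Nat.card 𝒟 = ∑ τ ∈ T, Nat.card {d // τ ⊆ S.face d} :=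
        (S.sum_card_subset_face hTk hT).symm
    _ ≤ ∑ τ ∈ T, ({e ∈ S.edges | (e.map S.face).inf = τ}.ncard + b) :=
        Finset.sum_le_sum fun τ hτ => (S.card_subset_face_le hne (hTk τ hτ)).trans
          (Nat.add_le_add_left (hb τ hτ) _)
    _ ≤ S.edges.ncard + b * T.card := by
        rw [Finset.sum_add_distrib, Finset.sum_const, smul_eq_mul, mul_comm b]
        exact Nat.add_le_add_right hedges _

theorem mul_card_faces_le [Finite 𝒟] [Finite 𝒞] {F T : Finset (Finset α)}
    (hF : ∀ σ ∈ F, ∃ d, S.face d = σ) (hTk : ∀ τ ∈ T, τ.card = k)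
    (hT : ∀ d, (S.face d).powersetCard k ⊆ T) {b w : ℕ}
    (hb : ∀ τ ∈ T, Nat.card {c // S.ridge c = τ} ≤ b) (hcard : Nat.card 𝒟 ≤ b * F.card)
    (hedges : S.edges.ncard ≤ 3 * Nat.card 𝒟 + 3 * w) :
    k * F.card ≤ 2 * b * F.card + b * T.card + 3 * w := by
  have hW := S.contract.card_mul_le_of_forall_face_ne S.face_ne_of_mem_edges_contract hTk
    (Quot.ind hT) hb
  have hFW : F.card ≤ Nat.card (Quot fun p q => s(p, q) ∈ S.parallelEdges) := by
    rw [← ncard_coe_finset, ← ncard_univ]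
    refine (ncard_le_ncard (fun σ hσ => ?_) (toFinite _)).trans
      (ncard_image_le (f := S.contract.face))
    obtain ⟨d, rfl⟩ := hF σ hσ
    exact ⟨Quot.mk _ d, mem_univ _, rfl⟩
  have hparallel := S.card_le_ncard_parallelEdges_add
  have hcontract : S.contract.edges.ncard ≤ (S.edges \ S.parallelEdges).ncard := ncard_image_le
  have hsub : S.parallelEdges ⊆ S.edges := sep_subset _ _
  have hsplit := ncard_sdiff_add_ncard_of_subset hsub
  have hkF := Nat.mul_le_mul_left k hFW
  rw [add_one_mul] at hW
  rw [mul_assoc 2]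
  lia

end FaceSystem

/-! ### Components of intersections -/

section Shrinking
variable {M : Type*} [TopologicalSpace M]

lemma exists_isOpen_isPreconnected_mem_closure_subset [RegularSpace M] [LocallyConnectedSpace M]
    {x : M} {W : Set M} (hW : W ∈ 𝓝 x) :
    ∃ V, IsOpen V ∧ IsPreconnected V ∧ x ∈ V ∧ closure V ⊆ W := by
  obtain ⟨C, hC, hCclosed, hCW⟩ := exists_mem_nhds_isClosed_subset hW
  obtain ⟨V, hVC, hV, hxV, hVconn⟩ :=
    locallyConnectedSpace_iff_subsets_isOpen_isConnected.1 inferInstance x C hC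
  exact ⟨V, hV, hVconn.isPreconnected, hxV, (closure_minimal hVC hCclosed).trans hCW⟩

lemma exists_isOpen_isPreconnected_subset_closure_subset [RegularSpace M]
    [LocallyConnectedSpace M] {W K : Set M} (hWopen : IsOpen W) (hW : IsPreconnected W)
    (hK : IsCompact K) (hKW : K ⊆ W) :
    ∃ V, IsOpen V ∧ IsPreconnected V ∧ K ⊆ V ∧ closure V ⊆ W := by
  rcases K.eq_empty_or_nonempty with rfl | ⟨x₀, hx₀⟩
  · exact ⟨∅, isOpen_empty, isPreconnected_empty, Subset.rfl, by simp⟩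
  let 𝒱 : Set (Set M) := {V | IsOpen V ∧ IsPreconnected V ∧ x₀ ∈ V ∧ closure V ⊆ W}
  have hlocal (x : M) (hx : x ∈ W) :=
    exists_isOpen_isPreconnected_mem_closure_subset (hWopen.mem_nhds hx)
  have hunion {V V' : Set M} {x : M} (hV : V ∈ 𝒱) (hx : x ∈ V) (hx' : x ∈ V') (hopen : IsOpen V')
      (hconn : IsPreconnected V') (hclosure : closure V' ⊆ W) : V ∪ V' ∈ 𝒱 :=
    ⟨hV.1.union hopen, hV.2.1.union x hx hx' hconn, Or.inl hV.2.2.1,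
      closure_union.trans_subset (union_subset hV.2.2.2 hclosure)⟩
  obtain ⟨V₀, hV₀, hV₀conn, hx₀V₀, hV₀W⟩ := hlocal x₀ (hKW hx₀)
  have hV₀mem : V₀ ∈ 𝒱 := ⟨hV₀, hV₀conn, hx₀V₀, hV₀W⟩
  have hcover : W ⊆ ⋃ V : 𝒱, (V : Set M) := by
    refine subset_of_isPreconnected_of_forall_exists_nhds hW
      ⟨x₀, hKW hx₀, mem_iUnion.2 ⟨⟨V₀, hV₀mem⟩, hx₀V₀⟩⟩ fun x hx => ?_
    obtain ⟨N, hN, hNconn, hxN, hNW⟩ := hlocal x hx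
    refine ⟨N, hN.mem_nhds hxN, ?_⟩
    rintro ⟨y, hyN, hy⟩
    obtain ⟨V, hyV⟩ := mem_iUnion.1 hy
    exact subset_union_right.trans
      (subset_iUnion (fun V : 𝒱 => (V : Set M)) ⟨_, hunion V.2 hyV hyN hN hNconn hNW⟩)
  have hdirected : Directed (· ⊆ ·) fun V : 𝒱 => (V : Set M) := fun V V' =>
    ⟨⟨_, hunion V.2 V.2.2.2.1 V'.2.2.2.1 V'.2.1 V'.2.2.1 V'.2.2.2.2⟩,
      subset_union_left, subset_union_right⟩
  have : Nonempty 𝒱 := ⟨⟨V₀, hV₀mem⟩⟩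
  obtain ⟨V, hKV⟩ := hK.elim_directed_cover _ (fun V : 𝒱 => V.2.1) (hKW.trans hcover) hdirected
  exact ⟨V, V.2.1, V.2.2.1, hKV, V.2.2.2.2⟩

lemma isPreconnected_union_iUnion {ι : Type*} {V : Set M} {U : ι → Set M} (hV : IsPreconnected V)
    (hU : ∀ i, IsPreconnected (U i)) (hne : ∀ i, (V ∩ U i).Nonempty) :
    IsPreconnected (V ∪ ⋃ i, U i) := by
  cases isEmpty_or_nonempty ι with
  | inl _ => rwa [iUnion_of_empty, union_empty]
  | inr h =>
    rw [union_iUnion]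
    exact isPreconnected_iUnion ((hne h.some).left.mono (subset_iInter fun _ => subset_union_left))
      fun i => hV.union' (hne i) (hU i)

namespace PieceFamily
variable {𝒟 𝒞 : Type*} (P : PieceFamily M 𝒟 𝒞)

lemma exists_pieceSystem_of_closure_subset {U : 𝒟 → Set M} {V : 𝒞 → Set M}
    (hU : ∀ d, IsOpen (U d)) (hUconn : ∀ d, IsPreconnected (U d)) (hUne : ∀ d, (U d).Nonempty)
    (hUP : ∀ d, closure (U d) ⊆ P.small d) (hV : ∀ c, IsOpen (V c))
    (hVconn : ∀ c, IsPreconnected (V c)) (hVP : ∀ c, V c ⊆ P.large c)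
    (hVU : ∀ {d c}, P.small d ⊆ P.large c → (V c ∩ U d).Nonempty)
    (hVV : ∀ {c c' x}, c ≠ c' → x ∈ V c → x ∈ V c' → ∃ d, x ∈ U d) :
    ∃ S : PieceSystem M 𝒟 𝒞, ∀ d c, S.small d ⊆ S.large c ↔ P.small d ⊆ P.large c := by
  have hsmall (d : 𝒟) : U d ⊆ P.small d := subset_closure.trans (hUP d)
  have hlarge (c : 𝒞) : V c ∪ ⋃ d : {d // P.small d ⊆ P.large c}, U d ⊆ P.large c :=
    union_subset (hVP c) (iUnion_subset fun d => (hsmall d).trans d.2)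
  have hsub {d : 𝒟} {c : 𝒞} (h : P.small d ⊆ P.large c) :
      U d ⊆ V c ∪ ⋃ d : {d // P.small d ⊆ P.large c}, U d :=
    (subset_iUnion (fun d : {d // P.small d ⊆ P.large c} => U d) ⟨d, h⟩).trans subset_union_right
  refine ⟨{ small := U
            large := fun c => V c ∪ ⋃ d : {d // P.small d ⊆ P.large c}, U d
            isOpen_small := hU
            isPreconnected_small := hUconn
            nonempty_small := hUne
            isOpen_large := fun c => (hV c).union (isOpen_iUnion fun d => hU d)
            isPreconnected_large := fun c =>
              isPreconnected_union_iUnion (hVconn c) (fun d => hUconn d) fun d => hVU d.2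
            small_subset := fun hd hc => hsub (P.small_subset (hsmall _ hd) (hlarge _ hc))
            eq_of_mem_small := fun hd hd' => P.eq_of_mem_small (hsmall _ hd) (hsmall _ hd')
            eq_of_mem_closure := fun hd hd' => P.eq_of_mem_small (hUP _ hd) (hUP _ hd')
            exists_mem_small := ?_ }, fun d c => ⟨fun h => ?_, hsub⟩⟩
  · rintro c c' x hne (hc | hc) (hc' | hc')
    · exact hVV hne hc hc'
    · exact (mem_iUnion.1 hc').imp' Subtype.val fun _ => id
    all_goals exact (mem_iUnion.1 hc).imp' Subtype.val fun _ => id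
  · obtain ⟨x, hx⟩ := hUne d
    exact P.small_subset (hsmall d hx) (hlarge c (h hx))

lemma isCompact_small_inter [CompactSpace M] {T : Set M} (hT : IsClosed T)
    (hTP : T ⊆ ⋃ d, P.small d) (d : 𝒟) : IsCompact (P.small d ∩ T) := by
  have heq : P.small d ∩ T = T \ ⋃ d' : {d' // d' ≠ d}, P.small d' := by
    refine Subset.antisymm (fun x ⟨hxd, hxT⟩ => ⟨hxT, fun hx => ?_⟩) fun x ⟨hxT, hx⟩ => ⟨?_, hxT⟩
    · obtain ⟨d', hxd'⟩ := mem_iUnion.1 hx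
      exact d'.2 (P.eq_of_mem_small hxd' hxd)
    · obtain ⟨d', hxd'⟩ := mem_iUnion.1 (hTP hxT)
      by_contra hxd
      exact hx (mem_iUnion.2 ⟨⟨d', fun h => hxd (h ▸ hxd')⟩, hxd'⟩)
  rw [heq]
  exact (hT.sdiff (isOpen_iUnion fun d' : {d' // d' ≠ d} => P.isOpen_small d')).isCompact

/-- The large pieces are shrunk around chosen points of the small ones, and the small pieces are
then shrunk around the remaining overlaps of the large ones. -/
lemma exists_pieceSystem [CompactSpace M] [RegularSpace M] [LocallyConnectedSpace M]
    [Finite 𝒟] [Finite 𝒞] :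
    ∃ S : PieceSystem M 𝒟 𝒞, ∀ d c, S.small d ⊆ S.large c ↔ P.small d ⊆ P.large c := by
  choose p hp using P.nonempty_small
  choose V hV hVconn hpV hVP using fun c => exists_isOpen_isPreconnected_subset_closure_subset
    (P.isOpen_large c) (P.isPreconnected_large c)
    (K := p '' {d | P.small d ⊆ P.large c}) (toFinite _).isCompact
    (image_subset_iff.2 fun d hd => hd (hp d))
  let T : Set M := ⋃ e : {e : 𝒞 × 𝒞 // e.1 ≠ e.2}, closure (V e.1.1) ∩ closure (V e.1.2)
  have hT : IsClosed T :=
    isClosed_iUnion_of_finite fun _ => isClosed_closure.inter isClosed_closure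
  have hTP : T ⊆ ⋃ d, P.small d := iUnion_subset fun e _ hx =>
    mem_iUnion.2 (P.exists_mem_small e.2 (hVP _ hx.1) (hVP _ hx.2))
  choose U hU hUconn hKU hUP using fun d => exists_isOpen_isPreconnected_subset_closure_subset
    (P.isOpen_small d) (P.isPreconnected_small d)
    ((P.isCompact_small_inter hT hTP d).insert (p d)) (insert_subset (hp d) inter_subset_left)
  have hpU (d : 𝒟) : p d ∈ U d := hKU d (mem_insert _ _)
  refine P.exists_pieceSystem_of_closure_subset hU hUconn (fun d => ⟨p d, hpU d⟩) hUP hV hVconn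
    (fun c => subset_closure.trans (hVP c))
    (fun {d c} h => ⟨p d, hpV c (mem_image_of_mem _ h), hpU d⟩) fun {c c' x} hne hc hc' => ?_
  have hxT : x ∈ T := mem_iUnion.2 ⟨⟨(c, c'), hne⟩, subset_closure hc, subset_closure hc'⟩
  obtain ⟨d, hxd⟩ := mem_iUnion.1 (hTP hxT)
  exact ⟨d, hKU d (mem_insert_of_mem _ ⟨hxd, hxT⟩)⟩

end PieceFamily
end Shrinking

section Components
variable {α M : Type*} [TopologicalSpace M]

lemma connectedComponentIn_eq_of_joinedIn {S : Set M} {x y : M} (h : JoinedIn S x y) :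
    connectedComponentIn S x = connectedComponentIn S y := by
  obtain ⟨γ, hγ⟩ := h
  exact connectedComponentIn_eq <| (isPreconnected_range γ.continuous).subset_connectedComponentIn
    ⟨0, γ.source⟩ (range_subset_iff.2 hγ) ⟨1, γ.target⟩

/-- A connected component of an intersection `⋂ i ∈ σ, A i` with `σ ∈ 𝒮`, together with `σ`. -/
structure IndexedComponent (A : α → Set M) (𝒮 : Finset (Finset α)) where
  index : Finset α
  index_mem : index ∈ 𝒮
  carrier : Set M
  exists_carrier_eq : ∃ x ∈ ⋂ i ∈ index, A i, carrier = connectedComponentIn (⋂ i ∈ index, A i) x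

namespace IndexedComponent
variable {A : α → Set M} {𝒮 : Finset (Finset α)} (C : IndexedComponent A 𝒮)

lemma carrier_subset : C.carrier ⊆ ⋂ i ∈ C.index, A i := by
  obtain ⟨x, -, hx⟩ := C.exists_carrier_eq
  exact hx.trans_subset (connectedComponentIn_subset _ _)

lemma carrier_eq {x : M} (hx : x ∈ C.carrier) :
    C.carrier = connectedComponentIn (⋂ i ∈ C.index, A i) x := by
  obtain ⟨y, -, hy⟩ := C.exists_carrier_eq
  exact hy.trans (connectedComponentIn_eq (hy ▸ hx))

lemma isPreconnected_carrier : IsPreconnected C.carrier := by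
  obtain ⟨x, -, hx⟩ := C.exists_carrier_eq
  exact hx ▸ isPreconnected_connectedComponentIn

lemma nonempty_carrier : C.carrier.Nonempty := by
  obtain ⟨x, hx, hC⟩ := C.exists_carrier_eq
  exact ⟨x, hC ▸ mem_connectedComponentIn hx⟩

lemma isOpen_carrier [LocallyConnectedSpace M] (h : IsOpen (⋂ i ∈ C.index, A i)) :
    IsOpen C.carrier := by
  obtain ⟨x, -, hx⟩ := C.exists_carrier_eq
  exact hx ▸ h.connectedComponentIn

variable {C}

lemma eq_of_index_eq_of_carrier_eq {C' : IndexedComponent A 𝒮} (hindex : C.index = C'.index)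
    (hcarrier : C.carrier = C'.carrier) : C = C' := by
  cases C
  cases C'
  congr

lemma eq_of_index_eq_of_mem {C' : IndexedComponent A 𝒮} {x : M} (h : C.index = C'.index)
    (hx : x ∈ C.carrier) (hx' : x ∈ C'.carrier) : C = C' :=
  eq_of_index_eq_of_carrier_eq h (by rw [C.carrier_eq hx, C'.carrier_eq hx', h])

lemma exists_index_eq_mem_carrier {σ : Finset α} {x : M} (hσ : σ ∈ 𝒮) (hx : x ∈ ⋂ i ∈ σ, A i) :
    ∃ C : IndexedComponent A 𝒮, C.index = σ ∧ x ∈ C.carrier :=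
  ⟨⟨σ, hσ, _, x, hx, rfl⟩, rfl, mem_connectedComponentIn hx⟩

variable {b : ℕ}

lemma exists_label (h : ∀ σ ∈ 𝒮, AtMostComponents b (⋂ i ∈ σ, A i)) :
    ∃ j : IndexedComponent A 𝒮 → Fin b, ∀ C C', C.index = C'.index → j C = j C' → C = C' := by
  choose g hg using h
  have hcomponent (C : IndexedComponent A 𝒮) :
      ∃ j, C.carrier = connectedComponentIn (⋂ i ∈ C.index, A i) (g C.index C.index_mem j) := by
    obtain ⟨x, hx⟩ := C.nonempty_carrier
    obtain ⟨j, hj⟩ := hg C.index C.index_mem x (C.carrier_subset hx)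
    exact ⟨j, (C.carrier_eq hx).trans (connectedComponentIn_eq_of_joinedIn hj)⟩
  choose j hj using hcomponent
  refine ⟨j, fun C C' hindex hjC => eq_of_index_eq_of_carrier_eq hindex ?_⟩
  simp only [hj, hindex, hjC]

lemma finite_and_card_le (h : ∀ σ ∈ 𝒮, AtMostComponents b (⋂ i ∈ σ, A i)) :
    Finite (IndexedComponent A 𝒮) ∧ Nat.card (IndexedComponent A 𝒮) ≤ b * 𝒮.card := by
  obtain ⟨j, hj⟩ := exists_label h
  have hinj : Function.Injective
      fun C : IndexedComponent A 𝒮 => (j C, (⟨C.index, C.index_mem⟩ : 𝒮)) := fun C C' hCC' =>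
    hj C C' (congrArg (fun p => (p.2 : Finset α)) hCC') (congrArg Prod.fst hCC')
  refine ⟨Finite.of_injective _ hinj, (Nat.card_le_card_of_injective _ hinj).trans_eq ?_⟩
  rw [Nat.card_prod, Nat.card_fin, Nat.card_eq_finsetCard]

lemma card_index_eq_le (h : ∀ σ ∈ 𝒮, AtMostComponents b (⋂ i ∈ σ, A i)) (σ : Finset α) :
    Nat.card {C : IndexedComponent A 𝒮 // C.index = σ} ≤ b := by
  obtain ⟨j, hj⟩ := exists_label h
  have hinj : Function.Injective fun C : {C : IndexedComponent A 𝒮 // C.index = σ} => j C :=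
    fun C C' hCC' => Subtype.ext (hj C C' (C.2.trans C'.2.symm) hCC')
  exact (Nat.card_le_card_of_injective _ hinj).trans_eq (Nat.card_fin b)

end IndexedComponent

/-- At most `k + 1` of the sets `A i` have a common point, `F` consists of the `k + 1`-element index
sets with nonempty intersection, and `T` is a family of `k`-element index sets that contains all
those below `F`. The intersections over the members of `F` and `T` are open. -/
structure IsTopSkeleton (A : α → Set M) (k : ℕ) (F T : Finset (Finset α)) : Prop where
  mem_faces : ∀ {σ}, σ ∈ F ↔ σ.card = k + 1 ∧ (⋂ i ∈ σ, A i).Nonempty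
  card_ridge : ∀ τ ∈ T, τ.card = k
  powersetCard_subset : ∀ σ ∈ F, σ.powersetCard k ⊆ T
  card_le : ∀ {σ : Finset α} {x}, x ∈ ⋂ i ∈ σ, A i → σ.card ≤ k + 1
  isOpen_face : ∀ σ ∈ F, IsOpen (⋂ i ∈ σ, A i)
  isOpen_ridge : ∀ τ ∈ T, IsOpen (⋂ i ∈ τ, A i)

omit [TopologicalSpace M] in
lemma mem_biInter_union [DecidableEq α] {A : α → Set M} {σ τ : Finset α} {x : M}
    (hσ : x ∈ ⋂ i ∈ σ, A i) (hτ : x ∈ ⋂ i ∈ τ, A i) : x ∈ ⋂ i ∈ σ ∪ τ, A i :=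
  by
  rw [Finset.set_biInter_inter]
  exact ⟨hσ, hτ⟩

namespace IsTopSkeleton
variable {A : α → Set M} {k : ℕ} {F T : Finset (Finset α)} (h : IsTopSkeleton A k F T)
include h

lemma card_face {σ : Finset α} (hσ : σ ∈ F) : σ.card = k + 1 := (h.mem_faces.1 hσ).1

lemma subset_of_mem {σ τ : Finset α} {x : M} (hσF : σ ∈ F) (hσ : x ∈ ⋂ i ∈ σ, A i)
    (hτ : x ∈ ⋂ i ∈ τ, A i) : τ ⊆ σ := by
  classical
  refine Finset.union_eq_left.1 (Finset.eq_of_subset_of_card_le Finset.subset_union_left ?_).symm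
  exact (h.card_le (mem_biInter_union hσ hτ)).trans_eq (h.card_face hσF).symm

lemma carrier_subset_carrier {d : IndexedComponent A F} {c : IndexedComponent A T} {x : M}
    (hd : x ∈ d.carrier) (hc : x ∈ c.carrier) : d.carrier ⊆ c.carrier := by
  rw [c.carrier_eq hc]
  refine d.isPreconnected_carrier.subset_connectedComponentIn hd (d.carrier_subset.trans ?_)
  exact biInter_mono (h.subset_of_mem d.index_mem (d.carrier_subset hd) (c.carrier_subset hc))
    fun _ _ => Subset.rfl

lemma eq_of_mem_carrier {d d' : IndexedComponent A F} {x : M} (hd : x ∈ d.carrier)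
    (hd' : x ∈ d'.carrier) : d = d' :=
  IndexedComponent.eq_of_index_eq_of_mem
    ((h.subset_of_mem d'.index_mem (d'.carrier_subset hd') (d.carrier_subset hd)).antisymm
      (h.subset_of_mem d.index_mem (d.carrier_subset hd) (d'.carrier_subset hd'))) hd hd'

lemma exists_mem_carrier {c c' : IndexedComponent A T} {x : M} (hne : c ≠ c')
    (hc : x ∈ c.carrier) (hc' : x ∈ c'.carrier) : ∃ d : IndexedComponent A F, x ∈ d.carrier := by
  classical
  have hindex : c.index ≠ c'.index := fun heq =>
    hne (IndexedComponent.eq_of_index_eq_of_mem heq hc hc')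
  have hcard : k + 1 ≤ (c.index ∪ c'.index).card := by
    by_contra! hlt
    have hle (τ : IndexedComponent A T) : (c.index ∪ c'.index).card ≤ τ.index.card :=
      (Nat.le_of_lt_succ hlt).trans_eq (h.card_ridge _ τ.index_mem).symm
    exact hindex ((Finset.eq_of_subset_of_card_le Finset.subset_union_left (hle c)).trans
      (Finset.eq_of_subset_of_card_le Finset.subset_union_right (hle c')).symm)
  obtain ⟨σ, hσ, hσcard⟩ := Finset.exists_subset_card_eq hcard
  have hxσ : x ∈ ⋂ i ∈ σ, A i := biInter_mono hσ (fun _ _ => Subset.rfl)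
    (mem_biInter_union (c.carrier_subset hc) (c'.carrier_subset hc'))
  obtain ⟨d, -, hd⟩ :=
    IndexedComponent.exists_index_eq_mem_carrier (h.mem_faces.2 ⟨hσcard, x, hxσ⟩) hxσ
  exact ⟨d, hd⟩

/-- The components of the intersections over `F` and `T` as a piece family. -/
def pieceFamily [LocallyConnectedSpace M] :
    PieceFamily M (IndexedComponent A F) (IndexedComponent A T) where
  small := IndexedComponent.carrier
  large := IndexedComponent.carrier
  isOpen_small d := d.isOpen_carrier (h.isOpen_face _ d.index_mem)
  isPreconnected_small d := d.isPreconnected_carrier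
  nonempty_small d := d.nonempty_carrier
  isOpen_large c := c.isOpen_carrier (h.isOpen_ridge _ c.index_mem)
  isPreconnected_large c := c.isPreconnected_carrier
  small_subset := h.carrier_subset_carrier
  eq_of_mem_small := h.eq_of_mem_carrier
  exists_mem_small := h.exists_mem_carrier

lemma exists_carrier_subset {τ : Finset α} {d : IndexedComponent A F} (hτ : τ.card = k)
    (hτd : τ ⊆ d.index) : ∃ c : IndexedComponent A T, c.index = τ ∧ d.carrier ⊆ c.carrier := by
  obtain ⟨x, hx⟩ := d.nonempty_carrier
  obtain ⟨c, hc, hxc⟩ := IndexedComponent.exists_index_eq_mem_carrier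
    (h.powersetCard_subset _ d.index_mem (Finset.mem_powersetCard.2 ⟨hτd, hτ⟩))
    (biInter_mono hτd (fun _ _ => Subset.rfl) (d.carrier_subset hx))
  exact ⟨c, hc, h.carrier_subset_carrier hx hxc⟩

theorem mul_card_le [T2Space M] [CompactSpace M] [ChartedSpace ℂ M] {b w : ℕ}
    (hw : HomologyRankLE M w) (hF : ∀ σ ∈ F, AtMostComponents b (⋂ i ∈ σ, A i))
    (hT : ∀ τ ∈ T, AtMostComponents b (⋂ i ∈ τ, A i)) :
    k * F.card ≤ 2 * b * F.card + b * T.card + 3 * w := by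
  have : LocallyConnectedSpace M := ChartedSpace.locallyConnectedSpace ℂ M
  obtain ⟨_, hcardF⟩ := IndexedComponent.finite_and_card_le hF
  obtain ⟨_, -⟩ := IndexedComponent.finite_and_card_le hT
  obtain ⟨S, hS⟩ := h.pieceFamily.exists_pieceSystem
  obtain ⟨E, hE, hcrossing⟩ := S.exists_ncard_le_forall_exists_crossing hw
  simp only [hS] at hcrossing
  let 𝓕 : FaceSystem α (IndexedComponent A F) (IndexedComponent A T) k :=
    { face := IndexedComponent.index
      ridge := IndexedComponent.index
      Inc := fun d c => d.carrier ⊆ c.carrier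
      edges := E
      card_face := fun d => h.card_face d.index_mem
      exists_inc := h.exists_carrier_subset
      ridge_subset := fun {d c} hdc =>
        let ⟨_, hx⟩ := d.nonempty_carrier
        h.subset_of_mem d.index_mem (d.carrier_subset hx) (c.carrier_subset (hdc hx))
      exists_crossing := hcrossing }
  refine 𝓕.mul_card_faces_le (fun σ hσ => ?_) h.card_ridge
    (fun d => h.powersetCard_subset _ d.index_mem)
    (fun τ _ => IndexedComponent.card_index_eq_le hT τ) hcardF hE
  obtain ⟨-, x, hx⟩ := h.mem_faces.1 hσ
  obtain ⟨d, hd, -⟩ := IndexedComponent.exists_index_eq_mem_carrier hσ hx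
  exact ⟨d, hd⟩

end IsTopSkeleton
end Components

section Counting
/-- The `k + 1`-element index sets with nonempty intersection, which `fNum A k` counts. -/
noncomputable def faces {X : Type*} {n : ℕ} (A : Fin n → Set X) (k : ℕ) :
    Finset (Finset (Fin n)) :=
  (toFinite {σ | σ.card = k + 1 ∧ (⋂ i ∈ σ, A i).Nonempty}).toFinset

/-- The members of `faces A k` properly contained in a member of `faces A (k + 1)`, which
`fInd A k` counts. -/
noncomputable def ridges {X : Type*} {n : ℕ} (A : Fin n → Set X) (k : ℕ) :
    Finset (Finset (Fin n)) :=
  (toFinite {τ | τ ∈ faces A k ∧ ∃ σ ∈ faces A (k + 1), τ ⊂ σ}).toFinset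

variable {X : Type*} {n : ℕ} {A : Fin n → Set X} {k : ℕ}

lemma mem_faces {σ : Finset (Fin n)} :
    σ ∈ faces A k ↔ σ.card = k + 1 ∧ (⋂ i ∈ σ, A i).Nonempty :=
  Finite.mem_toFinset _

lemma mem_ridges {τ : Finset (Fin n)} :
    τ ∈ ridges A k ↔ τ ∈ faces A k ∧ ∃ σ ∈ faces A (k + 1), τ ⊂ σ :=
  Finite.mem_toFinset _

lemma fNum_eq_card_faces : fNum A k = (faces A k).card :=
  Nat.subtype_card _ fun _ => mem_faces

lemma fInd_eq_card_ridges : fInd A k = (ridges A k).card :=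
  Nat.subtype_card _ fun τ => by
    simp only [mem_ridges, mem_faces, and_left_comm, and_comm]

lemma card_le_of_fNum_eq_zero {σ : Finset (Fin n)} {x : X} (h : fNum A (k + 1) = 0)
    (hx : x ∈ ⋂ i ∈ σ, A i) : σ.card ≤ k + 1 := by
  by_contra! hlt
  obtain ⟨σ', hσ', hcard⟩ := Finset.exists_subset_card_eq (Nat.succ_le_of_lt hlt)
  exact (Finite.card_eq_zero_iff.1 h).false
    ⟨σ', hcard, x, biInter_mono hσ' (fun _ _ => Subset.rfl) hx⟩

lemma isTopSkeleton_of_fNum_eq_zero [TopologicalSpace X] (h : fNum A (k + 2) = 0)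
    (hopen : ∀ σ : Finset (Fin n), σ.card = k + 1 ∨ σ.card = k + 2 → IsOpen (⋂ i ∈ σ, A i)) :
    IsTopSkeleton A (k + 1) (faces A (k + 1)) (ridges A k) where
  mem_faces := mem_faces
  card_ridge _ hτ := (mem_faces.1 (mem_ridges.1 hτ).1).1
  powersetCard_subset σ hσ τ hτ := by
    obtain ⟨hτσ, hcard⟩ := Finset.mem_powersetCard.1 hτ
    obtain ⟨hσcard, hσne⟩ := mem_faces.1 hσ
    have hne : τ ≠ σ := by
      rintro rfl
      lia
    exact mem_ridges.2 ⟨mem_faces.2 ⟨hcard, hσne.mono (biInter_mono hτσ fun _ _ => Subset.rfl)⟩,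
      σ, hσ, hτσ.ssubset_of_ne hne⟩
  card_le := card_le_of_fNum_eq_zero h
  isOpen_face σ hσ := hopen σ (Or.inr (mem_faces.1 hσ).1)
  isOpen_ridge τ hτ := hopen τ (Or.inl (mem_faces.1 (mem_ridges.1 hτ).1).1)

end Counting

end SurfaceArrangement

open SurfaceArrangement in
theorem surface_upper_bound_b_components_general (M : Type*) [TopologicalSpace M] [T2Space M]
    [CompactSpace M] [ChartedSpace (EuclideanSpace ℝ (Fin 2)) M] :
    ∃ w : ℕ, ∀ (b k n : ℕ) (A : Fin n → Set M),
      fNum A (k + 1) = 0 →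
      (∀ σ : Finset (Fin n), σ.card = k ∨ σ.card = k + 1 →
        IsOpen (⋂ i ∈ σ, A i) ∧ AtMostComponents b (⋂ i ∈ σ, A i)) →
      k * fNum A k ≤ 2 * b * fNum A k + b * fInd A (k - 1) + 3 * w := by
  classical
  let toComplex : EuclideanSpace ℝ (Fin 2) ≃ₜ ℂ :=
    Complex.orthonormalBasisOneI.repr.toHomeomorph.symm
  let _ := toComplex.toOpenPartialHomeomorph.singletonChartedSpace rfl
  let _ : ChartedSpace ℂ M := ChartedSpace.comp ℂ (EuclideanSpace ℝ (Fin 2)) M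
  obtain ⟨w, hw⟩ := exists_homologyRankLE M
  refine ⟨w, fun b k n A hzero hA => ?_⟩
  rcases k with _ | k
  · rw [zero_mul]
    exact Nat.zero_le _
  have h := isTopSkeleton_of_fNum_eq_zero hzero fun σ hσ => (hA σ hσ).1
  rw [fNum_eq_card_faces, fInd_eq_card_ridges]
  exact h.mul_card_le hw (fun σ hσ => (hA σ (Or.inr (h.card_face hσ))).2)
    fun τ hτ => (hA τ (Or.inl (h.card_ridge τ hτ))).2

/-- **Theorem (surfaces, general b).** Let `M` be a surface (a compact two-dimensional
real manifold), `b ≥ 2` and `k > 2b`. There are constants `c₁ > 0, c₂ ≥ 0`, depending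
only on `k`, `b` and `M`, such that for every finite family `𝒜` of subsets of `M` with
(i) `f_{k+1}(𝒜) = 0` and (ii) each `k`-wise and `(k+1)`-wise intersection open (possibly
empty) with at most `b` path-connected components, one has
`f_k(𝒜) ≤ c₁·f_{k-1}^{ind}(𝒜) + c₂`. -/
theorem surface_upper_bound_b_components (M : Type*) [TopologicalSpace M] [T2Space M]
    [CompactSpace M] [ChartedSpace (EuclideanSpace ℝ (Fin 2)) M]
    (b k : ℕ) (hb : 2 ≤ b) (hk : 2 * b < k) :
    ∃ c₁ c₂ : ℝ, 0 < c₁ ∧ 0 ≤ c₂ ∧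
      ∀ (n : ℕ) (A : Fin n → Set M),
        fNum A (k + 1) = 0 →
        (∀ σ : Finset (Fin n), σ.card = k ∨ σ.card = k + 1 →
          IsOpen (⋂ i ∈ σ, A i) ∧ AtMostComponents b (⋂ i ∈ σ, A i)) →
        (fNum A k : ℝ) ≤ c₁ * fInd A (k - 1) + c₂ := by
  obtain ⟨w, hw⟩ := surface_upper_bound_b_components_general M
  refine ⟨b, 3 * w, by positivity, by positivity, fun n A hzero hA => ?_⟩
  have hbound : fNum A k ≤ b * fInd A (k - 1) + 3 * w := by
    nlinarith [hw b k n A hzero hA, Nat.mul_le_mul_right (fNum A k) hk]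
  exact_mod_cast hbound
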